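/- Let n ≥ 2, let Ω ⊂ ℝⁿ be a bounded domain, and let f : Ω × ℝⁿ → ℝ be a Carathéodory function, convex in the second variable for a.e. x, satisfying for some 1 ≤ L < ∞, μ ≥ 0 and a nonnegative function g ∈ L^{n/(n−1)}(Ω): |z|^n − g(x)^{n/(n−1)} ≤ f(x,z) ≤ L|z|^q + g(x)^{n/(n−1)} and f(x,2z) ≤ μ + L·f(x,z) for all z and a.e. x, where p = n < q < ∞ and min{1/q + 1/(n−1), 1} − 1/n ≥ 0. If g^{1/(n−1)} ∈ L^{n,1}(log L)^{(n−1)/n}(Ω), then every quasi-minimizer u ∈ W^{1,1}_loc(Ω) of F[u,A] = ∫_A f(x,∇u(x)) dx belongs to L^∞_loc(Ω). -/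

import Mathlib

open MeasureTheory Metric Set
open scoped ENNReal NNReal Topology

noncomputable section

/-- `du` is the weak gradient of `u` on the open set `Ω ⊆ ℝⁿ`, in the sense of
integration by parts against smooth compactly supported test functions. -/
def IsWeakGradOn (n : ℕ) (Ω : Set (EuclideanSpace ℝ (Fin n)))
    (u : EuclideanSpace ℝ (Fin n) → ℝ)
    (du : EuclideanSpace ℝ (Fin n) → EuclideanSpace ℝ (Fin n)) : Prop :=
  ∀ φ : EuclideanSpace ℝ (Fin n) → ℝ,
    ContDiff ℝ (⊤ : ℕ∞) φ → HasCompactSupport φ → tsupport φ ⊆ Ω →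
    ∀ i : Fin n,
      (∫ x in Ω, u x * (fderiv ℝ φ x (EuclideanSpace.single i (1 : ℝ))))
        = - ∫ x in Ω, du x i * φ x

/-- `u ∈ W^{1,1}_loc(Ω)` (with weak gradient `du`) is a `Q`-minimizer of the functional
`F[v,A] = ∫_A f(x, ∇v(x)) dx`: for every `φ ∈ W^{1,1}(Ω)` (with weak gradient `dφ`)
whose support is compactly contained in `Ω`, `F[u, supp φ] < ∞` (encoded as
integrability of `x ↦ f x (du x)` on `supp φ`) and
`F[u, supp φ] ≤ Q · F[u + φ, supp φ]`. -/
def IsQMinimizer (n : ℕ) (Ω : Set (EuclideanSpace ℝ (Fin n)))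
    (f : EuclideanSpace ℝ (Fin n) → EuclideanSpace ℝ (Fin n) → ℝ) (Q : ℝ)
    (u : EuclideanSpace ℝ (Fin n) → ℝ)
    (du : EuclideanSpace ℝ (Fin n) → EuclideanSpace ℝ (Fin n)) : Prop :=
  IsWeakGradOn n Ω u du ∧ LocallyIntegrableOn u Ω ∧ LocallyIntegrableOn du Ω ∧
  ∀ (φ : EuclideanSpace ℝ (Fin n) → ℝ)
    (dφ : EuclideanSpace ℝ (Fin n) → EuclideanSpace ℝ (Fin n)),
    IsWeakGradOn n Ω φ dφ → IntegrableOn φ Ω → IntegrableOn dφ Ω →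
    IsCompact (tsupport φ) → tsupport φ ⊆ Ω →
    IntegrableOn (fun x => f x (du x)) (tsupport φ) ∧
    (IntegrableOn (fun x => f x (du x + dφ x)) (tsupport φ) →
      (∫ x in tsupport φ, f x (du x)) ≤ Q * ∫ x in tsupport φ, f x (du x + dφ x))

/-- The nonincreasing rearrangement `h*(t) = inf {σ > 0 : |{|h| > σ}| ≤ t}` of a
function `h : ℝⁿ → ℝ`. -/
def rearr (n : ℕ) (h : EuclideanSpace ℝ (Fin n) → ℝ) (t : ℝ) : ℝ :=
  sInf {σ : ℝ | 0 < σ ∧ volume {x | σ < |h x|} ≤ ENNReal.ofReal t}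

/-- The Lorentz `L^{n,1}(Ω)` norm `∫_0^{|Ω|} t^{1/n} (h·χ_Ω)*(t) dt/t`. -/
def lorentzN1 (n : ℕ) (Ω : Set (EuclideanSpace ℝ (Fin n)))
    (h : EuclideanSpace ℝ (Fin n) → ℝ) : ℝ≥0∞ :=
  ∫⁻ t in Ioo (0 : ℝ) (volume Ω).toReal,
    ENNReal.ofReal (t ^ (1 / (n : ℝ)) * rearr n (Ω.indicator h) t / t)

/-- The Lorentz–Zygmund `L^{n,1}(log L)^α(Ω)` norm
`∫_0^{|Ω|} t^{1/n} (1 + |log t|)^α (h·χ_Ω)*(t) dt/t`. -/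
def lorentzZygmund (n : ℕ) (α : ℝ) (Ω : Set (EuclideanSpace ℝ (Fin n)))
    (h : EuclideanSpace ℝ (Fin n) → ℝ) : ℝ≥0∞ :=
  ∫⁻ t in Ioo (0 : ℝ) (volume Ω).toReal,
    ENNReal.ofReal (t ^ (1 / (n : ℝ)) * (1 + |Real.log t|) ^ α * rearr n (Ω.indicator h) t / t)


/-!
Let `G = |g|^{n/(n-1)}`. By quasi-minimality against `min u t` on a ball `B`, whose gradient
vanishes on `A t = B ∩ {u > t}`, only `f (x, 0) ≤ G` enters the comparison, and `∫_{A t} |∇u|^n` is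
bounded by a multiple of `∫_{A t} G`. The truncation of `u - t` to `B` is weakly differentiable
once `B` is chosen so that `u` is bounded on `∂B`, which almost every radius allows because
`W^{1,n}` embeds into bounded functions on spheres of dimension `n - 1`. Quasi-minimality compares
energies on the closed support of the truncation, which may be larger than `A t`. So one first
removes from `B` disjoint small balls that cover almost all of `B ∩ {u < t}`, meet `A t` in a set
of small measure and have `u < t` on their boundaries, whence the truncation to the remainder is
weakly differentiable.

The Sobolev inequality applied to the slice between the levels `s < t` bounds
`(t - s) |A t|^{1-1/n}` by the `n`-th root of the energy of the slice times `|A s|^{1-1/n}`. The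
energies of `N` consecutive slices add up to at most the energy of the first superlevel set, so by
AM–GM `N` slices of equal height halve the measure `N` times. Starting from `|A t| ≤ 2^{-N}` and
doubling `N` at each stage, the total height spent is finite exactly when
`∑ 2^k (E(2^k) / 2^k)^{1/n}` converges, `E(N)` being the energy bound on sets of measure `2^{-N}`;
this is what the `L^{n,1}(log L)^{(n-1)/n}` condition on `g^{1/(n-1)}` provides. Hence `|A t| = 0`
at a finite level `t`. The same applies to `-u`.
-/

open Filter
open ContinuousLinearMap (lsmul)
open scoped Convolution

/-! ### Mollification -/

lemma exists_seq_contDiffBump_rOut_tendsto_zero {E : Type*} [NormedAddCommGroup E]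
    {r : ℝ} (hr : 0 < r) :
    ∃ φ : ℕ → ContDiffBump (0 : E),
      Tendsto (fun k => (φ k).rOut) atTop (𝓝 0) ∧ ∀ k, (φ k).rOut ≤ r := by
  have hpos : ∀ k : ℕ, 0 < r / (k + 1) := fun k => by positivity
  refine ⟨fun k => ⟨r / (k + 1) / 2, r / (k + 1), half_pos (hpos k), half_lt_self (hpos k)⟩,
    ?_, fun k => div_le_self hr.le (le_add_of_nonneg_left k.cast_nonneg)⟩
  simpa [div_eq_mul_inv] using tendsto_one_div_add_atTop_nhds_zero_nat.const_mul r

section Mollification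

variable {E V : Type*} [NormedAddCommGroup E] [NormedSpace ℝ E] [FiniteDimensional ℝ E]
  [MeasurableSpace E] [BorelSpace E] {μ : Measure E}
  [NormedAddCommGroup V] [NormedSpace ℝ V] {p : ℝ≥0∞}

lemma enorm_convolution_normed_le (φ : ContDiffBump (0 : E)) (h : E → V) (x : E) :
    ‖(φ.normed μ ⋆[lsmul ℝ ℝ, μ] h) x‖ₑ
      ≤ ∫⁻ t, ‖h (x - t)‖ₑ ∂μ.withDensity fun t => ENNReal.ofReal (φ.normed μ t) := by
  rw [lintegral_withDensity_eq_lintegral_mul_non_measurable _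
    φ.continuous_normed.measurable.ennreal_ofReal
    (Eventually.of_forall fun x => ENNReal.ofReal_lt_top)]
  refine (enorm_integral_le_lintegral_enorm _).trans_eq (lintegral_congr fun t => ?_)
  simp only [ContinuousLinearMap.lsmul_apply, enorm_smul, Pi.mul_apply,
    Real.enorm_of_nonneg (φ.nonneg_normed t)]

variable [μ.IsAddHaarMeasure]

lemma isProbabilityMeasure_withDensity_normed (φ : ContDiffBump (0 : E)) :
    IsProbabilityMeasure (μ.withDensity fun t => ENNReal.ofReal (φ.normed μ t)) := by
  constructor
  rw [withDensity_apply _ MeasurableSet.univ, Measure.restrict_univ,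
    ← ofReal_integral_eq_lintegral_ofReal φ.integrable_normed
      (Eventually.of_forall φ.nonneg_normed), φ.integral_normed, ENNReal.ofReal_one]

lemma eLpNorm_convolution_normed_le (φ : ContDiffBump (0 : E)) {h : E → V}
    (hh : AEStronglyMeasurable h μ) (hp : 1 ≤ p) (hp_top : p ≠ ⊤) :
    eLpNorm (φ.normed μ ⋆[lsmul ℝ ℝ, μ] h) p μ ≤ eLpNorm h p μ := by
  have hp0 : p ≠ 0 := (zero_lt_one.trans_le hp).ne'
  have hq : 1 ≤ p.toReal := by simpa using ENNReal.toReal_mono hp_top hp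
  set ν : Measure E := μ.withDensity fun t => ENNReal.ofReal (φ.normed μ t)
  have : IsProbabilityMeasure ν := isProbabilityMeasure_withDensity_normed φ
  have hprod : AEStronglyMeasurable (fun z : E × E => h (z.1 - z.2)) (μ.prod ν) :=
    (hh.comp_quasiMeasurePreserving (quasiMeasurePreserving_sub μ μ)).mono_ac
      (Measure.AbsolutelyContinuous.rfl.prod (withDensity_absolutelyContinuous _ _))
  have jensen : ∀ᵐ x ∂μ, ‖(φ.normed μ ⋆[lsmul ℝ ℝ, μ] h) x‖ₑ ^ p.toReal
      ≤ ∫⁻ t, ‖h (x - t)‖ₑ ^ p.toReal ∂ν := by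
    filter_upwards [hprod.prodMk_left] with x hx
    rw [← ENNReal.le_rpow_inv_iff (by positivity), ← one_div]
    refine (enorm_convolution_normed_le φ h x).trans ?_
    simpa [eLpNorm'] using eLpNorm'_le_eLpNorm'_of_exponent_le one_pos hq ν hx
  rw [eLpNorm_eq_lintegral_rpow_enorm_toReal hp0 hp_top,
    eLpNorm_eq_lintegral_rpow_enorm_toReal hp0 hp_top]
  refine ENNReal.rpow_le_rpow ?_ (by positivity)
  calc ∫⁻ x, ‖(φ.normed μ ⋆[lsmul ℝ ℝ, μ] h) x‖ₑ ^ p.toReal ∂μ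
      ≤ ∫⁻ x, ∫⁻ t, ‖h (x - t)‖ₑ ^ p.toReal ∂ν ∂μ := lintegral_mono_ae jensen
    _ = ∫⁻ t, ∫⁻ x, ‖h (x - t)‖ₑ ^ p.toReal ∂μ ∂ν :=
        lintegral_lintegral_swap (hprod.enorm.pow_const _)
    _ = ∫⁻ _, ∫⁻ x, ‖h x‖ₑ ^ p.toReal ∂μ ∂ν :=
        lintegral_congr fun t => lintegral_sub_right_eq_self (fun x => ‖h x‖ₑ ^ p.toReal) t
    _ = ∫⁻ x, ‖h x‖ₑ ^ p.toReal ∂μ := by simp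

lemma support_convolution_normed_subset (φ : ContDiffBump (0 : E)) (c : E → V) :
    Function.support (φ.normed μ ⋆[lsmul ℝ ℝ, μ] c) ⊆ cthickening φ.rOut (tsupport c) := by
  refine (support_convolution_subset (lsmul ℝ ℝ)).trans ?_
  rintro _ ⟨y, hy, z, hz, rfl⟩
  rw [φ.support_normed_eq, mem_ball_zero_iff] at hy
  exact mem_cthickening_of_dist_le _ z _ _ (subset_tsupport c hz) (by simpa using hy.le)

variable [CompleteSpace V] {φ : ℕ → ContDiffBump (0 : E)}

lemma tendsto_eLpNorm_convolution_sub_of_continuous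
    (hφ : Tendsto (fun k => (φ k).rOut) atTop (𝓝 0)) {c : E → V} (hc : Continuous c)
    (hcs : HasCompactSupport c) (hp_top : p ≠ ⊤) :
    Tendsto (fun k => eLpNorm ((φ k).normed μ ⋆[lsmul ℝ ℝ, μ] c - c) p μ) atTop (𝓝 0) := by
  set S := cthickening 1 (tsupport c)
  have hS : IsCompact S := hcs.isCompact.cthickening
  set m := μ S ^ (1 / p.toReal)
  have hm : m ≠ ⊤ := (ENNReal.rpow_lt_top_of_nonneg (by positivity) hS.measure_lt_top.ne).ne
  have eventually_le : ∀ ε : ℝ, 0 < ε → ∀ᶠ k in atTop,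
      eLpNorm ((φ k).normed μ ⋆[lsmul ℝ ℝ, μ] c - c) p μ ≤ ENNReal.ofReal ε * m := by
    intro ε hε
    obtain ⟨δ, hδ, hδε⟩ :=
      Metric.uniformContinuous_iff.1 (hcs.uniformContinuous_of_continuous hc) ε hε
    filter_upwards [hφ.eventually (gt_mem_nhds (lt_min hδ one_pos))] with k hk
    refine eLpNorm_sub_le_of_dist_bdd μ hp_top hS.measurableSet hε.le (fun x => ?_)
      ((support_convolution_normed_subset _ c).trans
        (cthickening_mono (hk.le.trans (min_le_right _ _)) _))
      ((subset_tsupport c).trans (self_subset_cthickening _))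
    exact ContDiffBump.dist_normed_convolution_le hc.aestronglyMeasurable fun y hy =>
      (hδε ((mem_ball.1 hy).trans (hk.trans_le (min_le_left _ _)))).le
  have hlim : Tendsto (fun ε : ℝ => ENNReal.ofReal ε * m) (𝓝[>] 0) (𝓝 0) := by
    have h0 : Tendsto ENNReal.ofReal (𝓝[>] 0) (𝓝 0) := by
      simpa using (ENNReal.continuous_ofReal.tendsto 0).mono_left nhdsWithin_le_nhds
    simpa using ENNReal.Tendsto.mul_const h0 (Or.inr hm)
  refine ENNReal.tendsto_nhds_zero.2 fun η hη => ?_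
  obtain ⟨ε, hεη, hε⟩ := ((hlim.eventually (gt_mem_nhds hη)).and self_mem_nhdsWithin).exists
  exact (eventually_le ε hε).mono fun k hk => hk.trans hεη.le

lemma tendsto_eLpNorm_convolution_sub (hφ : Tendsto (fun k => (φ k).rOut) atTop (𝓝 0))
    {F : E → V} (hp : 1 ≤ p) (hp_top : p ≠ ⊤) (hF : MemLp F p μ) :
    Tendsto (fun k => eLpNorm ((φ k).normed μ ⋆[lsmul ℝ ℝ, μ] F - F) p μ) atTop (𝓝 0) := by
  refine ENNReal.tendsto_nhds_zero.2 fun ε hε => ?_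
  have hε3 : ε / 3 ≠ 0 := (ENNReal.div_pos hε.ne' (by norm_num)).ne'
  obtain ⟨c, hcs, hFc, hc, hcm⟩ := hF.exists_hasCompactSupport_eLpNorm_sub_le hp_top hε3
  filter_upwards [ENNReal.tendsto_nhds_zero.1
    (tendsto_eLpNorm_convolution_sub_of_continuous (μ := μ) hφ hc hcs hp_top) (ε / 3)
    (pos_iff_ne_zero.2 hε3)] with k hk
  have hsub : LocallyIntegrable (F - c) μ := (hF.sub hcm).locallyIntegrable hp
  have hexists : ∀ G : E → V, LocallyIntegrable G μ →
      ConvolutionExists ((φ k).normed μ) G (lsmul ℝ ℝ) μ := fun G hG =>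
    (φ k).hasCompactSupport_normed.convolutionExists_left _ (φ k).continuous_normed hG
  have hmeas : ∀ G : E → V, LocallyIntegrable G μ →
      AEStronglyMeasurable ((φ k).normed μ ⋆[lsmul ℝ ℝ, μ] G) μ := fun G hG =>
    ((φ k).hasCompactSupport_normed.continuous_convolution_left _ (φ k).continuous_normed
      hG).aestronglyMeasurable
  have hsplit : (φ k).normed μ ⋆[lsmul ℝ ℝ, μ] F - F = (φ k).normed μ ⋆[lsmul ℝ ℝ, μ] (F - c)
      + ((φ k).normed μ ⋆[lsmul ℝ ℝ, μ] c - c) + (c - F) := by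
    nth_rw 1 [← sub_add_cancel F c]
    rw [ConvolutionExists.distrib_add (hexists _ hsub) (hexists _ (hcm.locallyIntegrable hp))]
    abel
  have hcsub := (hmeas c (hcm.locallyIntegrable hp)).sub hcm.1
  rw [hsplit, ← ENNReal.add_thirds ε]
  refine (eLpNorm_add_le ((hmeas _ hsub).add hcsub) (hcm.1.sub hF.1) hp).trans ?_
  refine add_le_add ((eLpNorm_add_le (hmeas _ hsub) hcsub hp).trans (add_le_add ?_ hk)) ?_
  · exact (eLpNorm_convolution_normed_le (φ k) (hF.1.sub hcm.1) hp hp_top).trans hFc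
  · rwa [eLpNorm_sub_comm]

end Mollification

/-! ### Weak gradients and smooth approximation -/

section WeakGradient

variable {n : ℕ} {Ω S : Set (EuclideanSpace ℝ (Fin n))} {u : EuclideanSpace ℝ (Fin n) → ℝ}
  {du : EuclideanSpace ℝ (Fin n) → EuclideanSpace ℝ (Fin n)}

namespace IsWeakGradOn

lemma integral_indicator_mul_fderiv_eq (hw : IsWeakGradOn n Ω u du) (hSΩ : S ⊆ Ω)
    {η : EuclideanSpace ℝ (Fin n) → ℝ} (hη : ContDiff ℝ (⊤ : ℕ∞) η)
    (hηc : HasCompactSupport η) (hηS : tsupport η ⊆ S) (i : Fin n) :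
    ∫ x, S.indicator u x * fderiv ℝ η x (EuclideanSpace.single i 1)
      = -∫ x, S.indicator du x i * η x := by
  have hη0 : ∀ x ∉ S, η x = 0 := fun x hx =>
    image_eq_zero_of_notMem_tsupport fun h => hx (hηS h)
  have hdη0 : ∀ x ∉ S, fderiv ℝ η x = 0 := fun x hx =>
    fderiv_of_notMem_tsupport ℝ fun h => hx (hηS h)
  calc ∫ x, S.indicator u x * fderiv ℝ η x (EuclideanSpace.single i 1)
      = ∫ x in Ω, u x * fderiv ℝ η x (EuclideanSpace.single i 1) := by
        rw [setIntegral_eq_integral_of_forall_compl_eq_zero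
          fun x hx => by simp [hdη0 x fun h => hx (hSΩ h)]]
        refine integral_congr_ae (Eventually.of_forall fun x => ?_)
        by_cases hx : x ∈ S <;> simp [hx, hdη0]
    _ = -∫ x in Ω, du x i * η x := hw η hη hηc (hηS.trans hSΩ) i
    _ = -∫ x, S.indicator du x i * η x := by
        rw [setIntegral_eq_integral_of_forall_compl_eq_zero
          fun x hx => by simp [hη0 x fun h => hx (hSΩ h)]]
        congr 1
        refine integral_congr_ae (Eventually.of_forall fun x => ?_)
        by_cases hx : x ∈ S <;> simp [hx, hη0]

lemma hasFDerivAt_convolution (hw : IsWeakGradOn n Ω u du) (hS : MeasurableSet S) (hSΩ : S ⊆ Ω)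
    (hu : IntegrableOn u S) (hdu : IntegrableOn du S)
    (φ : ContDiffBump (0 : EuclideanSpace ℝ (Fin n))) {x : EuclideanSpace ℝ (Fin n)}
    (hx : closedBall x φ.rOut ⊆ S) :
    HasFDerivAt (φ.normed volume ⋆[lsmul ℝ ℝ, volume] S.indicator u)
      (innerSL ℝ ((φ.normed volume ⋆[lsmul ℝ ℝ, volume] S.indicator du) x)) x := by
  set ψ := φ.normed (volume : Measure (EuclideanSpace ℝ (Fin n)))
  have hψ : ContDiff ℝ (⊤ : ℕ∞) ψ := φ.contDiff_normed
  have hψc : HasCompactSupport ψ := φ.hasCompactSupport_normed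
  have hui := ((integrable_indicator_iff hS).2 hu).locallyIntegrable
  have hdui := ((integrable_indicator_iff hS).2 hdu).locallyIntegrable
  refine (hψc.hasFDerivAt_convolution_left (lsmul ℝ ℝ) (hψ.of_le (by exact_mod_cast le_top)) hui
    x).congr_fderiv (ContinuousLinearMap.coe_injective
      ((EuclideanSpace.basisFun (Fin n) ℝ).toBasis.ext fun i => ?_))
  set η : EuclideanSpace ℝ (Fin n) → ℝ := fun y => ψ (x - y)
  have hηsupp : tsupport η ⊆ closedBall x φ.rOut := by
    refine closure_minimal (fun y hy => ?_) isClosed_closedBall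
    have : x - y ∈ tsupport ψ := subset_tsupport _ hy
    rwa [φ.tsupport_normed_eq, mem_closedBall_zero_iff, ← dist_eq_norm, dist_comm] at this
  have hηc : HasCompactSupport η := (isCompact_closedBall x φ.rOut).of_isClosed_subset
    (isClosed_tsupport η) hηsupp
  have hfderiv : ∀ y, fderiv ℝ ψ (x - y) = -fderiv ℝ η y := fun y => by
    have := ((hψ.differentiable (by simp) (x - y)).hasFDerivAt.comp y
      ((hasFDerivAt_id y).const_sub x)).fderiv
    rw [show fderiv ℝ η y = _ from this]
    ext v; simp
  have hexu := (hψc.fderiv ℝ).convolutionExists_left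
    (ContinuousLinearMap.precompL _ (lsmul ℝ ℝ)) (hψ.continuous_fderiv (by simp)) hui x
  have hexdu : Integrable fun y => lsmul ℝ ℝ (ψ (x - y)) (S.indicator du (x - (x - y))) :=
    (hψc.convolutionExists_left (lsmul ℝ ℝ) hψ.continuous hdui x).comp_sub_left x
  have lhs : (fderiv ℝ ψ ⋆[ContinuousLinearMap.precompL _ (lsmul ℝ ℝ), volume] S.indicator u) x
      (EuclideanSpace.single i 1)
      = -∫ y, S.indicator u y * fderiv ℝ η y (EuclideanSpace.single i 1) := by
    rw [convolution_def, ContinuousLinearMap.integral_apply hexu,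
      ← integral_sub_left_eq_self _ volume x, ← integral_neg]
    simp [ContinuousLinearMap.precompL_apply, hfderiv, mul_comm]
  have rhs : innerSL ℝ ((ψ ⋆[lsmul ℝ ℝ, volume] S.indicator du) x) (EuclideanSpace.single i 1)
      = ∫ y, S.indicator du y i * η y := by
    rw [convolution_def, ← integral_sub_left_eq_self _ volume x, innerSL_apply_apply,
      real_inner_comm, ← integral_inner hexdu]
    simp [EuclideanSpace.inner_single_left, η, mul_comm]
  have hη : ContDiff ℝ (⊤ : ℕ∞) η := hψ.comp (contDiff_const.sub contDiff_id)
  have parts := hw.integral_indicator_mul_fderiv_eq hSΩ hη hηc (hηsupp.trans hx) i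
  simpa using (lhs.trans (by rw [parts, neg_neg])).trans rhs.symm

lemma exists_contDiff_approx {K U : Set (EuclideanSpace ℝ (Fin n))} (hw : IsWeakGradOn n Ω u du)
    (hK : MeasurableSet K) (hKΩ : K ⊆ Ω) (hu : IntegrableOn u K) (hdu : IntegrableOn du K)
    {p : ℝ≥0∞} (hp : 1 ≤ p) (hp_top : p ≠ ⊤) (hdup : MemLp du p (volume.restrict K))
    (hU : MeasurableSet U) {r : ℝ} (hr : 0 < r) (hUK : ∀ x ∈ U, closedBall x r ⊆ K)
    {ε : ℝ≥0∞} (hε : ε ≠ 0) :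
    ∃ w : EuclideanSpace ℝ (Fin n) → ℝ, ContDiff ℝ 1 w ∧
      (HasCompactSupport u → HasCompactSupport w) ∧
      eLpNorm (w - u) 1 (volume.restrict U) ≤ ε ∧
      eLpNorm (fun x => fderiv ℝ w x - innerSL ℝ (du x)) p (volume.restrict U) ≤ ε := by
  obtain ⟨φ, hφ, hφr⟩ :=
    exists_seq_contDiffBump_rOut_tendsto_zero (E := EuclideanSpace ℝ (Fin n)) hr
  have hui : Integrable (K.indicator u) := (integrable_indicator_iff hK).2 hu
  have hUsub : U ⊆ K := fun x hx => hUK x hx (mem_closedBall_self hr.le)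
  have hlim := tendsto_eLpNorm_convolution_sub hφ le_rfl ENNReal.one_ne_top
    (memLp_one_iff_integrable.2 hui)
  have hdui : MemLp (K.indicator du) p := (memLp_indicator_iff_restrict hK).2 hdup
  have hlim' := tendsto_eLpNorm_convolution_sub hφ hp hp_top hdui
  obtain ⟨j, hj, hj'⟩ := ((ENNReal.tendsto_nhds_zero.1 hlim ε hε.pos).and
    (ENNReal.tendsto_nhds_zero.1 hlim' ε hε.pos)).exists
  refine ⟨(φ j).normed volume ⋆[lsmul ℝ ℝ, volume] K.indicator u,
    (φ j).hasCompactSupport_normed.contDiff_convolution_left (n := 1) _ (φ j).contDiff_normed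
      hui.locallyIntegrable, fun hcs => (φ j).hasCompactSupport_normed.convolution _
        (hcs.mono fun x hx h => hx (by simp [indicator, h])), ?_, ?_⟩
  · refine Eq.trans_le (eLpNorm_congr_ae ?_) ((eLpNorm_restrict_le _ _ _ U).trans hj)
    filter_upwards [ae_restrict_mem hU] with x hx
    simp [indicator_of_mem (hUsub hx)]
  · refine Eq.trans_le (eLpNorm_congr_norm_ae ?_) ((eLpNorm_restrict_le _ _ _ U).trans hj')
    filter_upwards [ae_restrict_mem hU] with x hx
    rw [(hw.hasFDerivAt_convolution hK hKΩ hu hdu (φ j)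
      ((closedBall_subset_closedBall (hφr j)).trans (hUK x hx))).fderiv, ← map_sub, Pi.sub_apply,
      indicator_of_mem (hUsub hx), innerSL_apply_norm]

end IsWeakGradOn

end WeakGradient

lemma eLpNorm_natCast_pow {α F : Type*} [MeasurableSpace α] {μ : Measure α} [NormedAddCommGroup F]
    {f : α → F} {m : ℕ} (hm : m ≠ 0) : eLpNorm f m μ ^ m = ∫⁻ x, ‖f x‖ₑ ^ m ∂μ := by
  simpa using eLpNorm_nnreal_pow_eq_lintegral (p := m) (μ := μ) (f := f) (Nat.cast_ne_zero.2 hm)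

/-! ### Pointwise values of `C¹` functions and the radii of bad spheres -/

section Capacity

open Module (finrank)

lemma enorm_le_enorm_add_lintegral_fderiv {E F : Type*} [NormedAddCommGroup E] [NormedSpace ℝ E]
    [NormedAddCommGroup F] [NormedSpace ℝ F] [CompleteSpace F] {v : E → F} (hv : ContDiff ℝ 1 v)
    (y z : E) :
    ‖v y‖ₑ ≤ ‖v (y + z)‖ₑ + ‖z‖ₑ * ∫⁻ t in Ioc (0 : ℝ) 1, ‖fderiv ℝ v (y + t • z)‖ₑ := by
  have hc : Continuous fun t : ℝ => fderiv ℝ v (y + t • z) :=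
    (hv.continuous_fderiv (by simp)).comp (by fun_prop)
  have hd : ∀ t : ℝ, HasDerivAt (fun t : ℝ => v (y + t • z)) (fderiv ℝ v (y + t • z) z) t :=
    fun t => ((hv.differentiable (by simp)) _).hasFDerivAt.comp_hasDerivAt t
      (by simpa using ((hasDerivAt_id t).smul_const z).const_add y)
  have hF := intervalIntegral.integral_eq_sub_of_hasDerivAt (fun t _ => hd t)
    ((hc.clm_apply continuous_const).intervalIntegrable 0 1)
  rw [intervalIntegral.integral_of_le zero_le_one] at hF
  simp only [one_smul, zero_smul, add_zero] at hF
  calc ‖v y‖ₑ = ‖v (y + z) - ∫ t in Ioc (0 : ℝ) 1, fderiv ℝ v (y + t • z) z‖ₑ := by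
        rw [hF, sub_sub_cancel]
    _ ≤ ‖v (y + z)‖ₑ + ∫⁻ t in Ioc (0 : ℝ) 1, ‖fderiv ℝ v (y + t • z) z‖ₑ :=
        enorm_sub_le.trans (add_le_add_right (enorm_integral_le_lintegral_enorm _) _)
    _ ≤ ‖v (y + z)‖ₑ + ‖z‖ₑ * ∫⁻ t in Ioc (0 : ℝ) 1, ‖fderiv ℝ v (y + t • z)‖ₑ := by
        rw [← lintegral_const_mul _ hc.enorm.measurable]
        gcongr with t
        rw [mul_comm]
        exact ContinuousLinearMap.le_opENorm _ _

lemma lintegral_Ioc_ofReal_rpow_sub_one {s : ℝ} (hs : 0 < s) :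
    ∫⁻ t in Ioc (0 : ℝ) 1, ENNReal.ofReal (t ^ (s - 1)) = ENNReal.ofReal (1 / s) := by
  have hi : IntegrableOn (fun t : ℝ => t ^ (s - 1)) (Ioc 0 1) :=
    (intervalIntegral.intervalIntegrable_rpow' (by linarith)).1
  rw [← ofReal_integral_eq_lintegral_ofReal hi, ← intervalIntegral.integral_of_le zero_le_one,
    integral_rpow (Or.inl (by linarith))]
  · simp [hs.ne']
  · filter_upwards [ae_restrict_mem measurableSet_Ioc] with t ht
    exact Real.rpow_nonneg ht.1.le _

lemma volume_image_dist_mul_le {E : Type*} [NormedAddCommGroup E] [NormedSpace ℝ E]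
    [FiniteDimensional ℝ E] [MeasurableSpace E] [BorelSpace E] (ν : Measure E) (x₀ : E)
    {T U : Set E} {s : E → ℝ} {R : ℝ} {c : ℝ≥0∞} (hs : ∀ y ∈ T, s y ∈ Ioc 0 R)
    (hU : ∀ y ∈ T, closedBall y (s y) ⊆ U)
    (hν : ∀ y ∈ T, c * ENNReal.ofReal (s y) ≤ ν (closedBall y (s y))) :
    volume ((dist · x₀) '' T) * c ≤ 10 * ν U := by
  obtain ⟨S, hST, hdisj, hcov⟩ := Vitali.exists_disjoint_subfamily_covering_enlargement_closedBall
    T id s R (fun y hy => (hs y hy).2) 5 (by norm_num)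
  simp only [id] at hdisj hcov
  have hcount : S.Countable := hdisj.countable_of_nonempty_interior fun y hy => by
    simpa [interior_closedBall _ (hs y (hST hy)).1.ne'] using (hs y (hST hy)).1
  have hradii : (dist · x₀) '' T ⊆ ⋃ b ∈ S, Icc (dist b x₀ - 5 * s b) (dist b x₀ + 5 * s b) := by
    rintro _ ⟨y, hy, rfl⟩
    obtain ⟨b, hb, hyb⟩ := hcov y hy
    have hyb' : dist y b ≤ 5 * s b := hyb (mem_closedBall_self (hs y hy).1.le)
    exact mem_biUnion hb ⟨by linarith [dist_triangle b y x₀, dist_comm b y],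
      by linarith [dist_triangle y b x₀]⟩
  calc volume ((dist · x₀) '' T) * c
      ≤ (∑' b : S, volume (Icc (dist b.1 x₀ - 5 * s b) (dist b.1 x₀ + 5 * s b))) * c :=
        mul_le_mul_left ((measure_mono hradii).trans (measure_biUnion_le volume hcount _)) _
    _ = 10 * ∑' b : S, c * ENNReal.ofReal (s b) := by
        rw [← ENNReal.tsum_mul_right, ← ENNReal.tsum_mul_left]
        refine tsum_congr fun b => ?_
        rw [Real.volume_Icc, add_sub_sub_cancel, ← add_mul, show (5 : ℝ) + 5 = 10 by norm_num,
          ENNReal.ofReal_mul (by norm_num), ENNReal.ofReal_ofNat]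
        ring
    _ ≤ 10 * ∑' b : S, ν (closedBall b.1 (s b)) := by
        gcongr with b
        exact hν b (hST b.2)
    _ = 10 * ν (⋃ b ∈ S, closedBall b (s b)) := by
        rw [measure_biUnion hcount hdisj fun _ _ => measurableSet_closedBall]
    _ ≤ 10 * ν U := by
        gcongr
        exact iUnion₂_subset fun b hb => hU b (hST hb)

variable {E F : Type*} [NormedAddCommGroup E] [NormedSpace ℝ E] [FiniteDimensional ℝ E]
  [MeasurableSpace E] [BorelSpace E] (μ : Measure E) [μ.IsAddHaarMeasure]
  [NormedAddCommGroup F]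

lemma setLIntegral_closedBall_comp_add_smul {h : E → ℝ≥0∞} (hh : Measurable h) (y : E) (a : ℝ)
    {t : ℝ} (ht : 0 < t) :
    ∫⁻ z in closedBall 0 a, h (y + t • z) ∂μ
      = ENNReal.ofReal ((t ^ finrank ℝ E)⁻¹) * ∫⁻ x in closedBall y (t * a), h x ∂μ := by
  have hmap : Measure.map (fun z : E => y + t • z) μ
      = ENNReal.ofReal ((t ^ finrank ℝ E)⁻¹) • μ := by
    rw [show (fun z : E => y + t • z) = (fun z => y + z) ∘ (fun z => t • z) from rfl,
      ← Measure.map_map (by fun_prop) (by fun_prop), Measure.map_addHaar_smul μ ht.ne',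
      Measure.map_smul, (measurePreserving_add_left μ y).map_eq]
    simp [abs_of_pos ht]
  have hpre : (fun z : E => y + t • z) ⁻¹' closedBall y (t * a) = closedBall 0 a := by
    ext z
    simp [norm_smul, abs_of_pos ht, ht]
  rw [← smul_eq_mul, ← lintegral_smul_measure, ← Measure.restrict_smul, ← hmap,
    setLIntegral_map measurableSet_closedBall hh (by fun_prop), hpre]

lemma setLIntegral_closedBall_enorm_le_of_setLIntegral_pow_le [Nontrivial E] {f : E → F} {y : E}
    {s κ : ℝ} (hf : AEStronglyMeasurable f (μ.restrict (closedBall y s))) (hs : 0 ≤ s)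
    (hκ : 0 ≤ κ)
    (h : ∫⁻ x in closedBall y s, ‖f x‖ₑ ^ finrank ℝ E ∂μ
      ≤ ENNReal.ofReal κ * μ (closedBall 0 1)) :
    ∫⁻ x in closedBall y s, ‖f x‖ₑ ∂μ
      ≤ ENNReal.ofReal (κ ^ (1 / (finrank ℝ E : ℝ)) * s ^ (finrank ℝ E - 1))
        * μ (closedBall 0 1) := by
  set d := finrank ℝ E
  have hd : 1 ≤ d := Module.finrank_pos
  have hd' : (1 : ℝ) ≤ d := by exact_mod_cast hd
  have hexp : 0 ≤ 1 - 1 / (d : ℝ) := by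
    rw [sub_nonneg, div_le_one (by positivity)]; exact hd'
  have holder := eLpNorm_le_eLpNorm_mul_rpow_measure_univ (p := 1) (q := d)
    (by exact_mod_cast hd) hf
  rw [eLpNorm_one_eq_lintegral_enorm, eLpNorm_eq_lintegral_rpow_enorm_toReal
    (by exact_mod_cast (by omega : d ≠ 0)) (by simp), Measure.restrict_apply_univ,
    Measure.addHaar_closedBall' μ y hs] at holder
  simp only [ENNReal.toReal_natCast, ENNReal.rpow_natCast, ENNReal.toReal_one, div_one] at holder
  have hpow : ENNReal.ofReal (s ^ d) ^ (1 - 1 / (d : ℝ)) = ENNReal.ofReal (s ^ (d - 1)) := by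
    rw [ENNReal.ofReal_rpow_of_nonneg (by positivity) hexp, ← Real.rpow_natCast,
      ← Real.rpow_mul hs, ← Real.rpow_natCast _ (d - 1), Nat.cast_sub hd]
    congr 2
    field_simp
    simp
  calc ∫⁻ x in closedBall y s, ‖f x‖ₑ ∂μ
      ≤ (ENNReal.ofReal κ * μ (closedBall 0 1)) ^ (1 / (d : ℝ))
          * (ENNReal.ofReal (s ^ d) * μ (closedBall 0 1)) ^ (1 - 1 / (d : ℝ)) := by
        refine holder.trans ?_
        gcongr
    _ = ENNReal.ofReal (κ ^ (1 / (d : ℝ))) * ENNReal.ofReal (s ^ (d - 1))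
          * (μ (closedBall 0 1) ^ (1 / (d : ℝ)) * μ (closedBall 0 1) ^ (1 - 1 / (d : ℝ))) := by
        rw [ENNReal.mul_rpow_of_nonneg _ _ (by positivity), ENNReal.mul_rpow_of_nonneg _ _ hexp,
          hpow, ENNReal.ofReal_rpow_of_nonneg hκ (by positivity)]
        ring
    _ = _ := by
        rw [← ENNReal.ofReal_mul (by positivity), ← ENNReal.rpow_add_of_nonneg _ _ (by positivity)
          hexp, add_sub_cancel, ENNReal.rpow_one]

variable [NormedSpace ℝ F] [CompleteSpace F] {v : E → F}

lemma measure_closedBall_mul_enorm_le (hv : ContDiff ℝ 1 v) (y : E) (a : ℝ) :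
    μ (closedBall y a) * ‖v y‖ₑ ≤ (∫⁻ x in closedBall y a, ‖v x‖ₑ ∂μ)
      + ENNReal.ofReal a * ∫⁻ t in Ioc (0 : ℝ) 1, ENNReal.ofReal ((t ^ finrank ℝ E)⁻¹)
        * ∫⁻ x in closedBall y (t * a), ‖fderiv ℝ v x‖ₑ ∂μ := by
  have hcf : Continuous fun x => ‖fderiv ℝ v x‖ₑ := (hv.continuous_fderiv (by simp)).enorm
  have hcv : Continuous fun x => ‖v x‖ₑ := hv.continuous.enorm
  have hm : Measurable fun p : E × ℝ => ‖fderiv ℝ v (y + p.2 • p.1)‖ₑ :=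
    (hcf.comp (by fun_prop : Continuous fun p : E × ℝ => y + p.2 • p.1)).measurable
  calc μ (closedBall y a) * ‖v y‖ₑ
      = ∫⁻ _ in closedBall (0 : E) a, ‖v y‖ₑ ∂μ := by
        rw [setLIntegral_const, Measure.addHaar_closedBall_center, mul_comm]
    _ ≤ ∫⁻ z in closedBall (0 : E) a, (‖v (y + (1 : ℝ) • z)‖ₑ
          + ENNReal.ofReal a * ∫⁻ t in Ioc (0 : ℝ) 1, ‖fderiv ℝ v (y + t • z)‖ₑ) ∂μ := by
        refine setLIntegral_mono' measurableSet_closedBall fun z hz => ?_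
        rw [one_smul]
        refine (enorm_le_enorm_add_lintegral_fderiv hv y z).trans ?_
        gcongr
        rw [← ofReal_norm]
        exact ENNReal.ofReal_le_ofReal (by simpa using hz)
    _ = (∫⁻ x in closedBall y a, ‖v x‖ₑ ∂μ) + ENNReal.ofReal a * ∫⁻ t in Ioc (0 : ℝ) 1,
          ∫⁻ z in closedBall (0 : E) a, ‖fderiv ℝ v (y + t • z)‖ₑ ∂μ := by
        rw [lintegral_add_left (f := fun z => ‖v (y + (1 : ℝ) • z)‖ₑ) (hcv.comp
            (by fun_prop : Continuous fun z => y + (1 : ℝ) • z)).measurable,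
          lintegral_const_mul _ hm.lintegral_prod_right', lintegral_lintegral_swap hm.aemeasurable,
          setLIntegral_closedBall_comp_add_smul μ hcv.measurable y a one_pos]
        simp
    _ = _ := by
        congr 2
        exact setLIntegral_congr_fun measurableSet_Ioc fun t ht =>
          setLIntegral_closedBall_comp_add_smul μ hcf.measurable y a ht.1

variable [Nontrivial E]

lemma measure_closedBall_mul_enorm_le_of_energy_le (hv : ContDiff ℝ 1 v) (y : E) {a ρ : ℝ}
    (ha : 0 < a) (hρ : 0 ≤ ρ)
    (h : ∀ t ∈ Ioc (0 : ℝ) 1, ∫⁻ x in closedBall y (t * a), ‖fderiv ℝ v x‖ₑ ^ finrank ℝ E ∂μ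
      ≤ ENNReal.ofReal (ρ ^ finrank ℝ E * t) * μ (closedBall 0 1)) :
    μ (closedBall y a) * ‖v y‖ₑ ≤ (∫⁻ x in closedBall y a, ‖v x‖ₑ ∂μ)
      + μ (closedBall y a) * ENNReal.ofReal (finrank ℝ E * ρ) := by
  set d := finrank ℝ E
  have hd : d ≠ 0 := Module.finrank_pos.ne'
  refine (measure_closedBall_mul_enorm_le μ hv y a).trans (add_le_add_right ?_ _)
  have hscale : ∀ t ∈ Ioc (0 : ℝ) 1, ENNReal.ofReal ((t ^ d)⁻¹)
      * ∫⁻ x in closedBall y (t * a), ‖fderiv ℝ v x‖ₑ ∂μ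
        ≤ ENNReal.ofReal (ρ * a ^ (d - 1)) * μ (closedBall 0 1)
          * ENNReal.ofReal (t ^ (1 / (d : ℝ) - 1)) := fun t ht => by
    have ht0 : 0 < t := ht.1
    refine (mul_le_mul_right (setLIntegral_closedBall_enorm_le_of_setLIntegral_pow_le μ
      (hv.continuous_fderiv (by simp)).aestronglyMeasurable (by positivity) (by positivity)
      (h t ht)) _).trans_eq ?_
    rw [mul_right_comm, ← mul_assoc, ← ENNReal.ofReal_mul (by positivity),
      ← ENNReal.ofReal_mul (by positivity)]
    congr 2
    rw [show finrank ℝ E = d from rfl, Real.mul_rpow (by positivity) ht0.le, one_div,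
      Real.pow_rpow_inv_natCast hρ hd, mul_pow, Real.rpow_sub ht0, Real.rpow_one,
      ← mul_pow_sub_one hd t]
    field_simp
  calc ENNReal.ofReal a * ∫⁻ t in Ioc (0 : ℝ) 1, ENNReal.ofReal ((t ^ d)⁻¹)
        * ∫⁻ x in closedBall y (t * a), ‖fderiv ℝ v x‖ₑ ∂μ
      ≤ ENNReal.ofReal a * ∫⁻ t in Ioc (0 : ℝ) 1, ENNReal.ofReal (ρ * a ^ (d - 1))
          * μ (closedBall 0 1) * ENNReal.ofReal (t ^ (1 / (d : ℝ) - 1)) :=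
        mul_le_mul_right (setLIntegral_mono' measurableSet_Ioc hscale) _
    _ = μ (closedBall y a) * ENNReal.ofReal (d * ρ) := by
        rw [lintegral_const_mul _ (by fun_prop), lintegral_Ioc_ofReal_rpow_sub_one (by positivity),
          Measure.addHaar_closedBall' μ y ha.le, mul_right_comm _ (μ _), mul_right_comm _ (μ _),
          ← mul_assoc, ← mul_assoc, ← ENNReal.ofReal_mul (by positivity),
          ← ENNReal.ofReal_mul (by positivity), ← ENNReal.ofReal_mul (by positivity),
          one_div_one_div, ← mul_pow_sub_one hd a]
        congr 2
        ring

/-- The radii in `(a, 2a)` of the spheres centred at `x₀` on which `‖v‖` exceeds `ρ` somewhere. -/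
def largeRadii {E F : Type*} [PseudoMetricSpace E] [Norm F] (v : E → F) (x₀ : E) (a ρ : ℝ) :
    Set ℝ :=
  {r ∈ Ioo a (2 * a) | ∃ y ∈ sphere x₀ r, ρ < ‖v y‖}

lemma exists_energy_lt_of_lt_norm (hv : ContDiff ℝ 1 v) (y : E) {a ρ : ℝ} (ha : 0 < a)
    (hρ : 0 ≤ ρ)
    (hI : ∫⁻ x in closedBall y a, ‖v x‖ₑ ∂μ
      ≤ μ (closedBall 0 a) * ENNReal.ofReal (finrank ℝ E * ρ))
    (hy : 2 * (finrank ℝ E * ρ) < ‖v y‖) :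
    ∃ t ∈ Ioc (0 : ℝ) 1, ENNReal.ofReal (ρ ^ finrank ℝ E * t) * μ (closedBall 0 1)
      < ∫⁻ x in closedBall y (t * a), ‖fderiv ℝ v x‖ₑ ^ finrank ℝ E ∂μ := by
  by_contra! hcon
  have hle := (measure_closedBall_mul_enorm_le_of_energy_le μ hv y ha hρ hcon).trans
    (add_le_add_left hI _)
  rw [← Measure.addHaar_closedBall_center μ y a, ← mul_add,
    ← ENNReal.ofReal_add (by positivity) (by positivity), ← two_mul,
    ENNReal.mul_le_mul_iff_right (measure_closedBall_pos μ _ ha).ne' measure_closedBall_lt_top.ne,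
    ← ofReal_norm, ENNReal.ofReal_le_ofReal_iff (by positivity)] at hle
  exact hy.not_ge hle

lemma volume_largeRadii_mul_le (hv : ContDiff ℝ 1 v) (x₀ : E) {a ρ : ℝ} (ha : 0 < a)
    (hρ : 0 ≤ ρ)
    (hI : ∫⁻ x in closedBall x₀ (3 * a), ‖v x‖ₑ ∂μ
      ≤ μ (closedBall 0 a) * ENNReal.ofReal (finrank ℝ E * ρ)) :
    volume (largeRadii v x₀ a (2 * (finrank ℝ E * ρ)))
        * (ENNReal.ofReal (ρ ^ finrank ℝ E / a) * μ (closedBall 0 1))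
      ≤ 10 * ∫⁻ x in closedBall x₀ (3 * a), ‖fderiv ℝ v x‖ₑ ^ finrank ℝ E ∂μ := by
  set d := finrank ℝ E
  set ν := μ.withDensity fun x => ‖fderiv ℝ v x‖ₑ ^ d
  have hν : ∀ y r, ν (closedBall y r) = ∫⁻ x in closedBall y r, ‖fderiv ℝ v x‖ₑ ^ d ∂μ :=
    fun y r => withDensity_apply _ measurableSet_closedBall
  set T : Set E := {y | dist y x₀ ∈ Ioo a (2 * a) ∧ 2 * (d * ρ) < ‖v y‖}
  have hsub : ∀ y ∈ T, ∀ t ≤ (1 : ℝ), closedBall y (t * a) ⊆ closedBall x₀ (3 * a) :=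
    fun y hy t ht => closedBall_subset_closedBall' (by nlinarith [hy.1.2])
  have henergy : ∀ y ∈ T, ∃ t ∈ Ioc (0 : ℝ) 1,
      ENNReal.ofReal (ρ ^ d * t) * μ (closedBall 0 1) < ν (closedBall y (t * a)) := fun y hy => by
    simp only [hν]
    exact exists_energy_lt_of_lt_norm μ hv y ha hρ ((lintegral_mono_set
      (by simpa using hsub y hy 1 le_rfl)).trans hI) hy.2
  choose! t ht hte using henergy
  have hradii : largeRadii v x₀ a (2 * (d * ρ)) = (dist · x₀) '' T := by
    ext r
    constructor
    · rintro ⟨hr, y, rfl, hy⟩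
      exact ⟨y, ⟨hr, hy⟩, rfl⟩
    · rintro ⟨y, ⟨hr, hy⟩, rfl⟩
      exact ⟨hr, y, rfl, hy⟩
  rw [hradii, ← hν]
  refine volume_image_dist_mul_le ν x₀ (s := fun y => t y * a) (R := a)
    (fun y hy => ⟨mul_pos (ht y hy).1 ha, mul_le_of_le_one_left ha.le (ht y hy).2⟩)
    (fun y hy => hsub y hy _ (ht y hy).2) fun y hy => Eq.trans_le ?_ (hte y hy).le
  rw [mul_right_comm, ← ENNReal.ofReal_mul (by positivity)]
  congr 2
  field_simp

lemma exists_forall_volume_largeRadii_le {ρ η : ℝ} (hρ : 0 < ρ) (hη : 0 < η) :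
    ∃ δ : ℝ≥0∞, δ ≠ 0 ∧ ∀ (v : E → F) (x₀ : E) (a : ℝ), ContDiff ℝ 1 v → 0 < a →
      eLpNorm v 1 (μ.restrict (closedBall x₀ (3 * a))) ≤ μ (closedBall 0 a) * δ →
      eLpNorm (fderiv ℝ v) (finrank ℝ E) (μ.restrict (closedBall x₀ (3 * a))) ≤ δ →
      volume (largeRadii v x₀ a ρ) ≤ ENNReal.ofReal (η * a) := by
  set d := finrank ℝ E
  have hd0 : d ≠ 0 := (Module.finrank_pos (R := ℝ) (M := E)).ne'
  have hd : (0 : ℝ) < d := by positivity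
  set σ := ρ / (2 * d)
  have hσ : 0 < σ := by positivity
  have hρσ : 2 * (d * σ) = ρ := by simp only [σ]; field_simp
  have hball : μ (closedBall 0 1) ≠ 0 := (measure_closedBall_pos μ _ one_pos).ne'
  set δ := ENNReal.ofReal (η * σ ^ d / 10) * μ (closedBall 0 1)
  have hδ : 0 < δ :=
    ENNReal.mul_pos (ENNReal.ofReal_pos.2 (by positivity : 0 < η * σ ^ d / 10)).ne' hball
  refine ⟨min (ENNReal.ofReal (d * σ)) (δ ^ (d : ℝ)⁻¹),
    (lt_min (ENNReal.ofReal_pos.2 (mul_pos hd hσ)) (ENNReal.rpow_pos hδ (ENNReal.mul_ne_top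
      ENNReal.ofReal_ne_top measure_closedBall_lt_top.ne))).ne', fun v x₀ a hv ha hI hD => ?_⟩
  · rw [eLpNorm_one_eq_lintegral_enorm] at hI
    have hle := volume_largeRadii_mul_le μ hv x₀ ha hσ.le
      (hI.trans (mul_le_mul_right (min_le_left _ _) _))
    rw [hρσ] at hle
    have hσa : 0 < σ ^ d / a := by positivity
    refine (ENNReal.mul_le_mul_iff_left (mul_ne_zero (ENNReal.ofReal_pos.2 hσa).ne' hball)
      (ENNReal.mul_ne_top ENNReal.ofReal_ne_top measure_closedBall_lt_top.ne)).1 (hle.trans ?_)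
    calc 10 * ∫⁻ x in closedBall x₀ (3 * a), ‖fderiv ℝ v x‖ₑ ^ d ∂μ
        ≤ 10 * (ENNReal.ofReal (η * σ ^ d / 10) * μ (closedBall 0 1)) := by
          gcongr
          rw [← eLpNorm_natCast_pow hd0]
          exact (pow_le_pow_left' (hD.trans (min_le_right _ _)) d).trans_eq
            (ENNReal.rpow_inv_natCast_pow hd0 δ)
      _ = ENNReal.ofReal (η * a) * (ENNReal.ofReal (σ ^ d / a) * μ (closedBall 0 1)) := by
          rw [← mul_assoc, ← mul_assoc, ← ENNReal.ofReal_mul (by positivity),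
            ← ENNReal.ofReal_ofNat 10, ← ENNReal.ofReal_mul (by positivity)]
          congr 2
          field_simp

end Capacity

/-! ### Truncations as limits of `C¹` functions -/

section LOneLimits

variable {α E : Type*} [MeasurableSpace α] {μ : Measure α} [NormedAddCommGroup E]

lemma tendsto_eLpNorm_one_sub_of_dominated {F : ℕ → α → E} {f : α → E} {bound : α → ℝ}
    (hF : ∀ k, AEStronglyMeasurable (F k) μ) (hbound : Integrable bound μ)
    (h_le : ∀ k x, ‖F k x‖ ≤ bound x)
    (h_lim : ∀ᵐ x ∂μ, Tendsto (fun k => F k x) atTop (𝓝 (f x))) :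
    Tendsto (fun k => eLpNorm (F k - f) 1 μ) atTop (𝓝 0) := by
  simpa only [eLpNorm_one_eq_lintegral_enorm, ← ofReal_norm, Pi.sub_apply] using
    tendsto_lintegral_norm_of_dominated_convergence hF hbound.2
      (fun k => Eventually.of_forall (h_le k)) h_lim

variable [NormedSpace ℝ E]

lemma tendsto_eLpNorm_one_smul_sub_smul {c : ℕ → α → ℝ} {b : α → ℝ} {g : ℕ → α → E} {h : α → E}
    {C : ℝ} (hc : ∀ k, AEStronglyMeasurable (c k) μ) (hcC : ∀ k x, ‖c k x‖ ≤ C)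
    (hcb : ∀ᵐ x ∂μ, Tendsto (fun k => c k x) atTop (𝓝 (b x)))
    (hg : ∀ k, AEStronglyMeasurable (g k) μ) (hh : Integrable h μ)
    (hgh : Tendsto (fun k => eLpNorm (g k - h) 1 μ) atTop (𝓝 0)) :
    Tendsto (fun k => eLpNorm (c k • g k - b • h) 1 μ) atTop (𝓝 0) := by
  have coeff : Tendsto (fun k => eLpNorm (c k • h - b • h) 1 μ) atTop (𝓝 0) := by
    refine tendsto_eLpNorm_one_sub_of_dominated (fun k => (hc k).smul hh.1)
      (hh.norm.const_mul C) (fun k x => ?_) ?_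
    · rw [Pi.smul_apply', norm_smul]
      exact mul_le_mul_of_nonneg_right (hcC k x) (norm_nonneg _)
    · filter_upwards [hcb] with x hx using hx.smul_const (h x)
  have factor : Tendsto (fun k => eLpNorm (c k • (g k - h)) 1 μ) atTop (𝓝 0) := by
    have lim := ENNReal.Tendsto.const_mul (a := ENNReal.ofReal C) hgh (.inr ENNReal.ofReal_ne_top)
    rw [mul_zero] at lim
    refine tendsto_of_tendsto_of_tendsto_of_le_of_le tendsto_const_nhds lim (fun _ => zero_le)
      fun k => eLpNorm_le_mul_eLpNorm_of_ae_le_mul (Eventually.of_forall fun x => ?_) 1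
    rw [Pi.smul_apply', norm_smul]
    exact mul_le_mul_of_nonneg_right (hcC k x) (norm_nonneg _)
  have sum := factor.add coeff
  rw [add_zero] at sum
  refine tendsto_of_tendsto_of_tendsto_of_le_of_le tendsto_const_nhds sum (fun _ => zero_le)
    fun k => ?_
  rw [show c k • g k - b • h = c k • (g k - h) + (c k • h - b • h) by rw [smul_sub]; abel]
  exact eLpNorm_add_le ((hc k).smul ((hg k).sub hh.1))
    (((hc k).smul hh.1).sub ((aestronglyMeasurable_of_tendsto_ae atTop hc hcb).smul hh.1)) le_rfl

end LOneLimits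

lemma tendsto_integral_mul_of_tendsto_eLpNorm_one {α : Type*} [MeasurableSpace α]
    [TopologicalSpace α] [OpensMeasurableSpace α] {μ : Measure α} {a : ℕ → α → ℝ} {b ψ : α → ℝ}
    (ha : ∀ k, Integrable (a k) μ) (hb : Integrable b μ) (hψ : Continuous ψ)
    (hψc : HasCompactSupport ψ) (hab : Tendsto (fun k => eLpNorm (a k - b) 1 μ) atTop (𝓝 0)) :
    Tendsto (fun k => ∫ x, a k x * ψ x ∂μ) atTop (𝓝 (∫ x, b x * ψ x ∂μ)) := by
  obtain ⟨C, hC⟩ := hψ.bounded_above_of_compact_support hψc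
  have lim := tendsto_eLpNorm_one_smul_sub_smul (c := fun _ => ψ) (b := ψ)
    (fun _ => hψ.aestronglyMeasurable) (fun _ => hC) (Eventually.of_forall fun _ =>
      tendsto_const_nhds) (fun k => (ha k).1) hb hab
  simp_rw [mul_comm _ (ψ _)]
  exact tendsto_integral_of_L1' _ (hb.bdd_mul hψ.aestronglyMeasurable (Eventually.of_forall hC)).1
    (Eventually.of_forall fun k =>
      (ha k).bdd_mul hψ.aestronglyMeasurable (Eventually.of_forall hC)) lim

section WeakGradientLimits

variable {n : ℕ}

lemma IsWeakGradOn.of_tendsto {Ω : Set (EuclideanSpace ℝ (Fin n))}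
    {v : ℕ → EuclideanSpace ℝ (Fin n) → ℝ}
    {dv : ℕ → EuclideanSpace ℝ (Fin n) → EuclideanSpace ℝ (Fin n)}
    {u : EuclideanSpace ℝ (Fin n) → ℝ} {du : EuclideanSpace ℝ (Fin n) → EuclideanSpace ℝ (Fin n)}
    (hv : ∀ k, IsWeakGradOn n Ω (v k) (dv k)) (hvi : ∀ k, IntegrableOn (v k) Ω)
    (hdvi : ∀ k, IntegrableOn (dv k) Ω) (hu : IntegrableOn u Ω) (hdu : IntegrableOn du Ω)
    (h1 : Tendsto (fun k => eLpNorm (v k - u) 1 (volume.restrict Ω)) atTop (𝓝 0))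
    (h2 : Tendsto (fun k => eLpNorm (dv k - du) 1 (volume.restrict Ω)) atTop (𝓝 0)) :
    IsWeakGradOn n Ω u du := by
  intro φ hφ hφc hφΩ i
  have integrable_coord {f : EuclideanSpace ℝ (Fin n) → EuclideanSpace ℝ (Fin n)}
      (hf : Integrable f (volume.restrict Ω)) : IntegrableOn (fun x => f x i) Ω :=
    (EuclideanSpace.proj (𝕜 := ℝ) i).integrable_comp hf
  have lhs := tendsto_integral_mul_of_tendsto_eLpNorm_one hvi hu
    ((hφ.continuous_fderiv (by simp)).clm_apply continuous_const)
    (hφc.fderiv_apply ℝ (EuclideanSpace.single i (1 : ℝ))) h1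
  have rhs := tendsto_integral_mul_of_tendsto_eLpNorm_one (fun k => integrable_coord (hdvi k))
    (integrable_coord hdu) hφ.continuous hφc
    (tendsto_of_tendsto_of_tendsto_of_le_of_le tendsto_const_nhds h2 (fun _ => zero_le)
      fun k => eLpNorm_mono fun x => PiLp.norm_apply_le ((dv k - du) x) i)
  exact tendsto_nhds_unique lhs (rhs.neg.congr fun k => (hv k φ hφ hφc hφΩ i).symm)

lemma IsWeakGradOn.indicator_of_tendsto {B : Set (EuclideanSpace ℝ (Fin n))}
    {v : ℕ → EuclideanSpace ℝ (Fin n) → ℝ}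
    {dv : ℕ → EuclideanSpace ℝ (Fin n) → EuclideanSpace ℝ (Fin n)}
    {u : EuclideanSpace ℝ (Fin n) → ℝ} {du : EuclideanSpace ℝ (Fin n) → EuclideanSpace ℝ (Fin n)}
    (hB : MeasurableSet B) (hv : ∀ k, IsWeakGradOn n univ (B.indicator (v k)) (B.indicator (dv k)))
    (hvi : ∀ k, IntegrableOn (v k) B) (hdvi : ∀ k, IntegrableOn (dv k) B)
    (hu : IntegrableOn u B) (hdu : IntegrableOn du B)
    (h1 : Tendsto (fun k => eLpNorm (v k - u) 1 (volume.restrict B)) atTop (𝓝 0))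
    (h2 : Tendsto (fun k => eLpNorm (dv k - du) 1 (volume.restrict B)) atTop (𝓝 0)) :
    IsWeakGradOn n univ (B.indicator u) (B.indicator du) := by
  refine .of_tendsto hv (fun k => ((hvi k).integrable_indicator hB).integrableOn)
    (fun k => ((hdvi k).integrable_indicator hB).integrableOn)
    (hu.integrable_indicator hB).integrableOn (hdu.integrable_indicator hB).integrableOn ?_ ?_
  · simpa only [Measure.restrict_univ, ← indicator_sub',
      eLpNorm_indicator_eq_eLpNorm_restrict hB] using h1
  · simpa only [Measure.restrict_univ, ← indicator_sub',
      eLpNorm_indicator_eq_eLpNorm_restrict hB] using h2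

lemma isWeakGradOn_univ_of_differentiable {ψ : EuclideanSpace ℝ (Fin n) → ℝ}
    {dψ : EuclideanSpace ℝ (Fin n) → EuclideanSpace ℝ (Fin n)} (hψ : Differentiable ℝ ψ)
    (hψi : Integrable ψ) (hdψi : Integrable dψ)
    (hd : ∀ x, fderiv ℝ ψ x = innerSL ℝ (dψ x)) : IsWeakGradOn n univ ψ dψ := by
  intro φ hφ hφc _ i
  have fderiv_single x : fderiv ℝ ψ x (EuclideanSpace.single i 1) = dψ x i := by
    rw [hd, innerSL_apply_apply, real_inner_comm, EuclideanSpace.inner_single_left]; simp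
  have hφ' : Continuous fun x => fderiv ℝ φ x (EuclideanSpace.single i (1 : ℝ)) :=
    (hφ.continuous_fderiv (by simp)).clm_apply continuous_const
  obtain ⟨C, hC⟩ := hφ.continuous.bounded_above_of_compact_support hφc
  obtain ⟨C', hC'⟩ := hφ'.bounded_above_of_compact_support (hφc.fderiv_apply ℝ _)
  have parts := integral_mul_fderiv_eq_neg_fderiv_mul_of_integrable (μ := volume) (𝕜 := ℝ)
    (f := ψ) (g := φ) (v := EuclideanSpace.single i 1) ?_
    (hψi.mul_bdd hφ'.aestronglyMeasurable (Eventually.of_forall hC'))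
    (hψi.mul_bdd hφ.continuous.aestronglyMeasurable (Eventually.of_forall hC))
    (fun x _ => hψ x) (fun x _ => hφ.differentiable (by simp) x)
  · simpa only [fderiv_single, Measure.restrict_univ] using parts
  · simp_rw [fderiv_single]
    exact ((EuclideanSpace.proj (𝕜 := ℝ) i).integrable_comp hdψi).mul_bdd
      hφ.continuous.aestronglyMeasurable (Eventually.of_forall hC)

lemma innerSL_gradient {F : Type*} [NormedAddCommGroup F] [InnerProductSpace ℝ F] [CompleteSpace F]
    (w : F → ℝ) (x : F) : innerSL ℝ (gradient w x) = fderiv ℝ w x :=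
  (InnerProductSpace.toDual ℝ F).apply_symm_apply (fderiv ℝ w x)

lemma continuous_gradient_of_contDiff {F : Type*} [NormedAddCommGroup F] [InnerProductSpace ℝ F]
    [CompleteSpace F] {w : F → ℝ} (hw : ContDiff ℝ 1 w) : Continuous (gradient w) :=
  (InnerProductSpace.toDual ℝ F).symm.continuous.comp (hw.continuous_fderiv one_ne_zero)

lemma hasFDerivAt_indicator {𝕜 E F : Type*} [NontriviallyNormedField 𝕜] [NormedAddCommGroup E]
    [NormedSpace 𝕜 E] [NormedAddCommGroup F] [NormedSpace 𝕜 F] {f : E → F} {s : Set E}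
    (hf : ∀ x ∈ interior s, DifferentiableAt 𝕜 f x) (hfs : ∀ x ∈ frontier s, f =ᶠ[𝓝 x] 0) (x : E) :
    HasFDerivAt (s.indicator f) (s.indicator (fderiv 𝕜 f) x) x := by
  have hasFDerivAt_zero {g : E → F} (hg : g =ᶠ[𝓝 x] 0) : HasFDerivAt g (0 : E →L[𝕜] F) x :=
    (hasFDerivAt_const 0 x).congr_of_eventuallyEq hg
  by_cases hxf : x ∈ frontier s
  · have h0 : s.indicator (fderiv 𝕜 f) x = 0 :=
      indicator_apply_eq_zero.2 fun _ => (hasFDerivAt_zero (hfs x hxf)).fderiv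
    rw [h0]
    refine hasFDerivAt_zero ?_
    filter_upwards [hfs x hxf] with y hy using indicator_apply_eq_zero.2 fun _ => hy
  by_cases hxs : x ∈ s
  · have hxi : x ∈ interior s := by_contra fun h => hxf ⟨subset_closure hxs, h⟩
    rw [indicator_of_mem hxs]
    refine (hf x hxi).hasFDerivAt.congr_of_eventuallyEq ?_
    filter_upwards [mem_interior_iff_mem_nhds.1 hxi] with y hy using indicator_of_mem hy f
  · have hxc : x ∉ closure s := fun h => hxf ⟨h, fun hi => hxs (interior_subset hi)⟩
    rw [indicator_of_notMem hxs]
    refine hasFDerivAt_zero ?_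
    filter_upwards [isClosed_closure.isOpen_compl.mem_nhds hxc] with y hy
    exact indicator_of_notMem (fun h => hy (subset_closure h)) f

lemma isWeakGradOn_univ_indicator_gradient {f : EuclideanSpace ℝ (Fin n) → ℝ}
    {K : Set (EuclideanSpace ℝ (Fin n))} (hf : ContDiff ℝ 1 f) (hK : IsCompact K)
    (hfK : ∀ x ∈ frontier K, f =ᶠ[𝓝 x] 0) :
    IsWeakGradOn n univ (K.indicator f) (K.indicator (gradient f)) := by
  have hd := hasFDerivAt_indicator (fun x _ => hf.differentiable one_ne_zero x) hfK
  refine isWeakGradOn_univ_of_differentiable (fun x => (hd x).differentiableAt)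
    ((hf.continuous.continuousOn.integrableOn_compact hK).integrable_indicator hK.measurableSet)
    (((continuous_gradient_of_contDiff hf).continuousOn.integrableOn_compact
      hK).integrable_indicator hK.measurableSet) fun x => ?_
  rw [(hd x).fderiv]
  by_cases hx : x ∈ K
  · rw [indicator_of_mem hx, indicator_of_mem hx, innerSL_gradient]
  · rw [indicator_of_notMem hx, indicator_of_notMem hx, map_zero]

lemma isWeakGradOn_univ_indicator_comp {w : EuclideanSpace ℝ (Fin n) → ℝ} {H : ℝ → ℝ}
    {x₀ : EuclideanSpace ℝ (Fin n)} {r M : ℝ} (hw : ContDiff ℝ 1 w) (hH : ContDiff ℝ 1 H)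
    (hH0 : ∀ t ≤ 0, H t = 0) (hwM : ∀ y ∈ sphere x₀ r, w y < M) :
    IsWeakGradOn n univ ((closedBall x₀ r).indicator fun x => H (w x - M))
      ((closedBall x₀ r).indicator fun x => deriv H (w x - M) • gradient w x) := by
  have hgrad : (gradient fun x => H (w x - M)) = fun x => deriv H (w x - M) • gradient w x := by
    ext1 x
    apply (InnerProductSpace.toDual ℝ (EuclideanSpace ℝ (Fin n))).injective
    change innerSL ℝ _ = innerSL ℝ _
    rw [innerSL_gradient, map_smul, innerSL_gradient]
    exact ((hH.differentiable one_ne_zero _).hasDerivAt.comp_hasFDerivAt x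
      ((hw.differentiable one_ne_zero x).hasFDerivAt.sub_const M)).fderiv
  rw [← hgrad]
  refine isWeakGradOn_univ_indicator_gradient (hH.comp (hw.sub contDiff_const))
    (isCompact_closedBall x₀ r) fun x hx => ?_
  filter_upwards [(isOpen_lt hw.continuous continuous_const).mem_nhds
    (hwM x (frontier_closedBall_subset_sphere hx))] with y hy
  exact hH0 _ (sub_nonpos.2 (le_of_lt hy))

variable {u : EuclideanSpace ℝ (Fin n) → ℝ}
  {du : EuclideanSpace ℝ (Fin n) → EuclideanSpace ℝ (Fin n)}
  {w : ℕ → EuclideanSpace ℝ (Fin n) → ℝ} {x₀ : EuclideanSpace ℝ (Fin n)} {r M : ℝ}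

lemma tendsto_eLpNorm_one_gradient_sub {B : Set (EuclideanSpace ℝ (Fin n))}
    (h : Tendsto (fun k => eLpNorm (fun x => fderiv ℝ (w k) x - innerSL ℝ (du x)) 1
      (volume.restrict B)) atTop (𝓝 0)) :
    Tendsto (fun k => eLpNorm (gradient (w k) - du) 1 (volume.restrict B)) atTop (𝓝 0) := by
  refine h.congr fun k => eLpNorm_congr_norm_ae (Eventually.of_forall fun x => ?_)
  rw [← innerSL_gradient, ← map_sub, innerSL_apply_norm, Pi.sub_apply]

lemma isWeakGradOn_univ_indicator_comp_of_tendsto {H : ℝ → ℝ} {C : ℝ≥0} (hH : ContDiff ℝ 1 H)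
    (hH0 : ∀ t ≤ 0, H t = 0) (hHC : ∀ t, ‖deriv H t‖₊ ≤ C)
    (hu : IntegrableOn u (closedBall x₀ r)) (hdu : IntegrableOn du (closedBall x₀ r))
    (hw : ∀ k, ContDiff ℝ 1 (w k))
    (h1 : Tendsto (fun k => eLpNorm (w k - u) 1 (volume.restrict (closedBall x₀ r))) atTop (𝓝 0))
    (h2 : Tendsto (fun k => eLpNorm (fun x => fderiv ℝ (w k) x - innerSL ℝ (du x)) 1
      (volume.restrict (closedBall x₀ r))) atTop (𝓝 0))
    (hwM : ∀ k, ∀ y ∈ sphere x₀ r, w k y < M) :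
    IsWeakGradOn n univ ((closedBall x₀ r).indicator fun x => H (u x - M))
      ((closedBall x₀ r).indicator fun x => deriv H (u x - M) • du x) := by
  obtain ⟨ns, hns, hae⟩ := (tendstoInMeasure_of_tendsto_eLpNorm one_ne_zero
    (fun k => (hw k).continuous.aestronglyMeasurable) hu.1 h1).exists_seq_tendsto_ae
  have hK := isCompact_closedBall x₀ r
  have hH' : Continuous (deriv H) := hH.continuous_deriv_one
  have hHC' t : ‖deriv H t‖ ≤ C := hHC t
  have hLip : LipschitzWith C H :=
    lipschitzWith_of_nnnorm_deriv_le (hH.differentiable one_ne_zero) hHC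
  have huM : IntegrableOn (fun x => u x - M) (closedBall x₀ r) :=
    hu.sub (integrableOn_const measure_closedBall_lt_top.ne)
  have hwc k : Continuous fun x => w k x - M := (hw k).continuous.sub continuous_const
  have hgc k := continuous_gradient_of_contDiff (hw k)
  refine .indicator_of_tendsto hK.measurableSet
    (fun k => isWeakGradOn_univ_indicator_comp (hw (ns k)) hH hH0 (hwM (ns k)))
    (fun k => (hH.continuous.comp (hwc _)).continuousOn.integrableOn_compact hK)
    (fun k => ((hH'.comp (hwc _)).smul (hgc _)).continuousOn.integrableOn_compact hK) ?_ ?_ ?_ ?_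
  · refine (huM.norm.const_mul C).mono' (hH.continuous.comp_aestronglyMeasurable huM.1)
      (Eventually.of_forall fun x => ?_)
    simpa [hH0 0 le_rfl] using hLip.norm_sub_le (u x - M) 0
  · exact hdu.bdd_smul C (hH'.comp_aestronglyMeasurable huM.1)
      (Eventually.of_forall fun x => hHC' _)
  · have lim := ENNReal.Tendsto.const_mul (a := ENNReal.ofReal C) (h1.comp hns.tendsto_atTop)
      (.inr ENNReal.ofReal_ne_top)
    rw [mul_zero] at lim
    refine tendsto_of_tendsto_of_tendsto_of_le_of_le tendsto_const_nhds lim (fun _ => zero_le)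
      fun k => eLpNorm_le_mul_eLpNorm_of_ae_le_mul (Eventually.of_forall fun x => ?_) 1
    simpa using hLip.norm_sub_le (w (ns k) x - M) (u x - M)
  · refine tendsto_eLpNorm_one_smul_sub_smul (fun k => (hH'.comp (hwc _)).aestronglyMeasurable)
      (fun k x => hHC' _) ?_ (fun k => (hgc _).aestronglyMeasurable) hdu
      ((tendsto_eLpNorm_one_gradient_sub h2).comp hns.tendsto_atTop)
    filter_upwards [hae] with x hx using (hH'.tendsto _).comp (hx.sub_const M)

/-- A `C¹` approximation of the positive part `t ↦ max t 0`, obtained by integrating a ramp of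
slope `m`. -/
def posPartApprox (m : ℕ) (t : ℝ) : ℝ := ∫ s in (0 : ℝ)..t, min 1 (max 0 (m * s))

namespace posPartApprox

lemma norm_ramp_le_one (m : ℕ) (t : ℝ) : ‖min 1 (max 0 (m * t))‖ ≤ 1 := by
  rw [Real.norm_of_nonneg (le_min zero_le_one (le_max_left _ _))]
  exact min_le_left _ _

lemma ramp_of_nonpos (m : ℕ) {t : ℝ} (ht : t ≤ 0) : min 1 (max 0 (m * t)) = 0 := by
  simp [mul_nonpos_of_nonneg_of_nonpos (Nat.cast_nonneg m) ht]

lemma tendsto_ramp (t : ℝ) :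
    Tendsto (fun m : ℕ => min 1 (max 0 (m * t))) atTop (𝓝 (if 0 < t then 1 else 0)) := by
  split_ifs with ht
  · have : Tendsto (fun m : ℕ => (m : ℝ) * t) atTop atTop :=
      tendsto_natCast_atTop_atTop.atTop_mul_const ht
    refine tendsto_const_nhds.congr' ?_
    filter_upwards [this.eventually_ge_atTop 1] with m hm
    exact (min_eq_left (hm.trans (le_max_right _ _))).symm
  · simp_rw [ramp_of_nonpos _ (not_lt.1 ht)]
    exact tendsto_const_nhds

protected lemma hasDerivAt (m : ℕ) (t : ℝ) :
    HasDerivAt (posPartApprox m) (min 1 (max 0 (m * t))) t :=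
  have hc : Continuous fun s : ℝ => min 1 (max 0 (m * s)) := by fun_prop
  intervalIntegral.integral_hasDerivAt_right (hc.intervalIntegrable _ _)
    (hc.stronglyMeasurableAtFilter _ _) hc.continuousAt

protected lemma deriv (m : ℕ) : deriv (posPartApprox m) = fun t : ℝ => min 1 (max 0 (m * t)) :=
  funext fun t => (posPartApprox.hasDerivAt m t).deriv

protected lemma contDiff (m : ℕ) : ContDiff ℝ 1 (posPartApprox m) := by
  rw [contDiff_one_iff_deriv, posPartApprox.deriv]
  exact ⟨fun t => (posPartApprox.hasDerivAt m t).differentiableAt, by fun_prop⟩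

lemma of_nonpos (m : ℕ) {t : ℝ} (ht : t ≤ 0) : posPartApprox m t = 0 := by
  rw [posPartApprox, intervalIntegral.integral_symm, intervalIntegral.integral_of_le ht,
    setIntegral_eq_zero_of_forall_eq_zero fun s hs => ramp_of_nonpos m hs.2, neg_zero]

lemma nnnorm_deriv_le_one (m : ℕ) (t : ℝ) : ‖deriv (posPartApprox m) t‖₊ ≤ 1 := by
  rw [posPartApprox.deriv]
  exact norm_ramp_le_one m t

lemma norm_le (m : ℕ) (t : ℝ) : ‖posPartApprox m t‖ ≤ ‖t‖ := by
  simpa [of_nonpos m le_rfl] using (lipschitzWith_of_nnnorm_deriv_le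
    ((posPartApprox.contDiff m).differentiable one_ne_zero) (nnnorm_deriv_le_one m)).norm_sub_le t 0

lemma tendsto_posPart (t : ℝ) : Tendsto (fun m => posPartApprox m t) atTop (𝓝 (max t 0)) := by
  rcases le_or_gt t 0 with ht | ht
  · simp_rw [of_nonpos _ ht, max_eq_right ht]
    exact tendsto_const_nhds
  · have lim := intervalIntegral.tendsto_integral_filter_of_dominated_convergence (μ := volume)
      (a := 0) (b := t) (F := fun (m : ℕ) s => min 1 (max 0 (m * s))) (l := atTop) (fun _ => 1)
      (Eventually.of_forall fun m => (Continuous.aestronglyMeasurable (by fun_prop)))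
      (Eventually.of_forall fun m => Eventually.of_forall fun s _ => norm_ramp_le_one m s)
      intervalIntegrable_const (Eventually.of_forall fun s _ => tendsto_ramp s)
    rw [max_eq_left ht.le]
    rwa [intervalIntegral.integral_of_le ht.le, setIntegral_congr_fun (g := fun _ => (1 : ℝ))
      measurableSet_Ioc fun s hs => if_pos hs.1, ← intervalIntegral.integral_of_le ht.le,
      intervalIntegral.integral_const, smul_eq_mul, mul_one, sub_zero] at lim

end posPartApprox

/-- The truncation `(u - M)₊`, cut off outside `B`, has weak gradient `∇u · 1_{B ∩ {u > M}}` on the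
whole space. -/
def HasWeakGradPosPart (n : ℕ) (B : Set (EuclideanSpace ℝ (Fin n)))
    (u : EuclideanSpace ℝ (Fin n) → ℝ)
    (du : EuclideanSpace ℝ (Fin n) → EuclideanSpace ℝ (Fin n)) (M : ℝ) : Prop :=
  IsWeakGradOn n univ (B.indicator fun x => max (u x - M) 0) ((B ∩ {x | M < u x}).indicator du)

/-- The truncation level must not be reached on the bounding sphere, where the cut-off would
otherwise produce a jump. -/
lemma hasWeakGradPosPart_closedBall_of_tendsto
    (hu : IntegrableOn u (closedBall x₀ r)) (hdu : IntegrableOn du (closedBall x₀ r))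
    (hw : ∀ k, ContDiff ℝ 1 (w k))
    (h1 : Tendsto (fun k => eLpNorm (w k - u) 1 (volume.restrict (closedBall x₀ r))) atTop (𝓝 0))
    (h2 : Tendsto (fun k => eLpNorm (fun x => fderiv ℝ (w k) x - innerSL ℝ (du x)) 1
      (volume.restrict (closedBall x₀ r))) atTop (𝓝 0))
    (hwM : ∀ k, ∀ y ∈ sphere x₀ r, w k y < M) :
    HasWeakGradPosPart n (closedBall x₀ r) u du M := by
  have hB : MeasurableSet (closedBall x₀ r) := measurableSet_closedBall
  have huM : IntegrableOn (fun x => u x - M) (closedBall x₀ r) :=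
    hu.sub (integrableOn_const measure_closedBall_lt_top.ne)
  have hm m : AEStronglyMeasurable (fun x => posPartApprox m (u x - M))
      (volume.restrict (closedBall x₀ r)) :=
    (posPartApprox.contDiff m).continuous.comp_aestronglyMeasurable huM.1
  have hdm m : AEStronglyMeasurable (fun x => deriv (posPartApprox m) (u x - M))
      (volume.restrict (closedBall x₀ r)) :=
    (posPartApprox.contDiff m).continuous_deriv_one.comp_aestronglyMeasurable huM.1
  have hd1 m t : ‖deriv (posPartApprox m) t‖ ≤ 1 := posPartApprox.nnnorm_deriv_le_one m t
  have hlim x : Tendsto (fun m => deriv (posPartApprox m) (u x - M)) atTop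
      (𝓝 (if 0 < u x - M then 1 else 0)) := by
    simpa only [posPartApprox.deriv] using posPartApprox.tendsto_ramp (u x - M)
  have hind : (closedBall x₀ r ∩ {x | M < u x}).indicator du =
      (closedBall x₀ r).indicator fun x => (if 0 < u x - M then (1 : ℝ) else 0) • du x := by
    ext1 x
    by_cases hx : x ∈ closedBall x₀ r <;> by_cases hxM : M < u x <;> simp [hx, hxM, indicator]
  rw [HasWeakGradPosPart, hind]
  refine .indicator_of_tendsto hB
    (fun m => isWeakGradOn_univ_indicator_comp_of_tendsto (posPartApprox.contDiff m)
      (fun t => posPartApprox.of_nonpos m) (posPartApprox.nnnorm_deriv_le_one m) hu hdu hw h1 h2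
      hwM)
    (fun m => Integrable.mono huM (hm m) (Eventually.of_forall fun x => posPartApprox.norm_le m _))
    (fun m => hdu.bdd_smul 1 (hdm m) (Eventually.of_forall fun x => hd1 m _)) huM.pos_part ?_ ?_ ?_
  · refine hdu.bdd_smul 1 (aestronglyMeasurable_of_tendsto_ae atTop hdm
      (Eventually.of_forall hlim)) (Eventually.of_forall fun x => ?_)
    split_ifs <;> simp
  · exact tendsto_eLpNorm_one_sub_of_dominated hm huM.norm
      (fun m x => posPartApprox.norm_le m _)
      (Eventually.of_forall fun x => posPartApprox.tendsto_posPart _)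
  · exact tendsto_eLpNorm_one_smul_sub_smul hdm (fun m x => hd1 m _) (Eventually.of_forall hlim)
      (fun _ => hdu.1) hdu (by simp)

end WeakGradientLimits

/-! ### Truncations cut off at good spheres -/

lemma exists_add_succ_le_and_tendsto_zero {A : ℕ → ℝ≥0∞} (hA : ∀ k, A k ≠ 0) :
    ∃ ε : ℕ → ℝ≥0∞, (∀ k, ε k ≠ 0) ∧ (∀ k, ε k + ε (k + 1) ≤ A k) ∧ Tendsto ε atTop (𝓝 0) := by
  set m : ℕ → ℝ≥0∞ := fun k => (Finset.range (k + 1)).inf fun j => min (A j) (2⁻¹ ^ j)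
  have hmk k : m k ≤ min (A k) (2⁻¹ ^ k) := Finset.inf_le (by simp)
  have hm0 k : 0 < m k := by
    rw [Finset.lt_inf_iff ENNReal.zero_lt_top]
    exact fun j _ => lt_min (pos_iff_ne_zero.2 (hA j)) (ENNReal.pow_pos (by simp) j)
  have hm_succ k : m (k + 1) ≤ m k := Finset.inf_mono (by gcongr; omega)
  refine ⟨fun k => m k / 2, fun k => (ENNReal.half_pos (hm0 k).ne').ne', fun k => ?_, ?_⟩
  · calc m k / 2 + m (k + 1) / 2 ≤ m k / 2 + m k / 2 := by gcongr; exact hm_succ k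
      _ = m k := ENNReal.add_halves _
      _ ≤ A k := (hmk k).trans (min_le_left _ _)
  · exact tendsto_of_tendsto_of_tendsto_of_le_of_le tendsto_const_nhds
      (ENNReal.tendsto_pow_atTop_nhds_zero_of_lt_one (r := 2⁻¹) (by simp)) (fun _ => zero_le)
      fun k => ENNReal.half_le_self.trans ((hmk k).trans (min_le_right _ _))

lemma tendsto_const_mul_nhdsGT_zero {K : ℝ} (hK : 0 < K) :
    Tendsto (fun a => K * a) (𝓝[>] 0) (𝓝[>] 0) :=
  tendsto_nhdsWithin_iff.2 ⟨Tendsto.mono_left (Continuous.tendsto' (by fun_prop) _ _ (mul_zero K))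
    nhdsWithin_le_nhds, by filter_upwards [self_mem_nhdsWithin] with a ha using mul_pos hK ha⟩

section GoodSpheres

open Module (finrank)

variable {E F : Type*} [NormedAddCommGroup E] [NormedSpace ℝ E] [FiniteDimensional ℝ E]
  [MeasurableSpace E] [BorelSpace E] (μ : Measure E) [μ.IsAddHaarMeasure]
  [NormedAddCommGroup F]

lemma ae_eventually_setLIntegral_enorm_sub_le {f : E → F} (hf : LocallyIntegrable f μ) {K : ℝ}
    (hK : 0 < K) :
    ∀ᵐ x ∂μ, ∀ δ : ℝ≥0∞, δ ≠ 0 → ∀ᶠ a in 𝓝[>] (0 : ℝ),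
      ∫⁻ y in closedBall x (K * a), ‖f y - f x‖ₑ ∂μ ≤ μ (closedBall 0 a) * δ := by
  filter_upwards [(Besicovitch.vitaliFamily μ).ae_tendsto_lintegral_enorm_sub_div hf] with x hx δ hδ
  have hc : 0 < δ / ENNReal.ofReal (K ^ finrank ℝ E) :=
    ENNReal.div_pos hδ ENNReal.ofReal_ne_top
  filter_upwards [(tendsto_const_mul_nhdsGT_zero hK).eventually
    ((hx.comp (Besicovitch.tendsto_filterAt μ x)).eventually_le_const
    hc), self_mem_nhdsWithin] with a hle (ha : 0 < a)
  have hKa : 0 < K * a := by positivity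
  rw [Function.comp_apply, ENNReal.div_le_iff (measure_closedBall_pos _ _ hKa).ne'
    measure_closedBall_lt_top.ne] at hle
  refine hle.trans_eq ?_
  rw [Measure.addHaar_closedBall μ x hKa.le, Measure.addHaar_closedBall μ 0 ha.le, mul_pow,
    ENNReal.ofReal_mul (by positivity), ← mul_assoc, ← mul_assoc, ENNReal.div_mul_cancel
      (ENNReal.ofReal_pos.2 (by positivity)).ne' ENNReal.ofReal_ne_top, mul_comm δ, mul_right_comm]

lemma tendsto_eLpNorm_restrict_closedBall [Nontrivial E] {f : E → F} {p : ℝ≥0∞} (hp : 1 ≤ p)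
    (hp_top : p ≠ ⊤) (hf : MemLp f p μ) (x : E) :
    Tendsto (fun a => eLpNorm f p (μ.restrict (closedBall x a))) (𝓝[>] 0) (𝓝 0) := by
  have hball : Tendsto (fun a => μ (closedBall x a)) (𝓝[>] 0) (𝓝 0) := by
    have hc : Continuous fun a : ℝ => ENNReal.ofReal (a ^ finrank ℝ E) * μ (ball 0 1) :=
      (ENNReal.continuous_mul_const measure_ball_lt_top.ne).comp
        (ENNReal.continuous_ofReal.comp (by fun_prop))
    refine ((hc.tendsto' 0 0 ?_).mono_left nhdsWithin_le_nhds).congr' ?_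
    · simp [Module.finrank_pos (R := ℝ) (M := E) |>.ne']
    · filter_upwards [self_mem_nhdsWithin] with a ha
      exact (Measure.addHaar_closedBall μ x (le_of_lt ha)).symm
  refine ENNReal.tendsto_nhds_zero.2 fun ε hε => ?_
  rcases eq_or_ne ε ⊤ with rfl | hε_top
  · exact Eventually.of_forall fun _ => le_top
  obtain ⟨δ, hδ, hfδ⟩ := hf.eLpNorm_indicator_le hp hp_top (ENNReal.toReal_pos hε.ne' hε_top)
  filter_upwards [hball.eventually_le_const (ENNReal.ofReal_pos.2 hδ)] with a ha
  simpa only [eLpNorm_indicator_eq_eLpNorm_restrict measurableSet_closedBall,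
    ENNReal.ofReal_toReal hε_top] using hfδ _ measurableSet_closedBall ha

variable [Nontrivial E] [NormedSpace ℝ F] [CompleteSpace F]

lemma exists_forall_exists_norm_sub_le_on_spheres (x₀ : E) {a κ η : ℝ} (ha : 0 < a) (hκ : 0 < κ)
    (hη : 0 < η) :
    ∃ δ : ℕ → ℝ≥0∞, (∀ k, δ k ≠ 0) ∧ ∀ w : ℕ → E → F, (∀ k, ContDiff ℝ 1 (w k)) →
      (∀ k, eLpNorm (w (k + 1) - w k) 1 (μ.restrict (closedBall x₀ (3 * a))) ≤ δ k) →
      (∀ k, eLpNorm (fderiv ℝ (w (k + 1)) - fderiv ℝ (w k)) (finrank ℝ E)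
        (μ.restrict (closedBall x₀ (3 * a))) ≤ δ k) →
      ∃ N : Set ℝ, volume N ≤ ENNReal.ofReal η ∧
        ∀ r ∈ Ioo a (2 * a) \ N, ∀ k, ∀ y ∈ sphere x₀ r, ‖w k y - w 0 y‖ ≤ κ := by
  have hV : μ (closedBall 0 a) ≠ 0 := (measure_closedBall_pos μ _ ha).ne'
  choose δ hδ hδN using fun k : ℕ => exists_forall_volume_largeRadii_le (F := F) μ
    (by positivity : 0 < κ / 2 / 2 ^ k) (by positivity : 0 < η / a / 2 / 2 ^ k)
  refine ⟨fun k => min (μ (closedBall 0 a) * δ k) (δ k),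
    fun k => (lt_min (ENNReal.mul_pos hV (hδ k)) (pos_iff_ne_zero.2 (hδ k))).ne',
    fun w hw hw1 hwd => ⟨⋃ k, largeRadii (w (k + 1) - w k) x₀ a (κ / 2 / 2 ^ k), ?_, ?_⟩⟩
  · have hN k : volume (largeRadii (w (k + 1) - w k) x₀ a (κ / 2 / 2 ^ k)) ≤
        ENNReal.ofReal (η / 2 / 2 ^ k) := by
      have hfd : fderiv ℝ (w (k + 1) - w k) = fderiv ℝ (w (k + 1)) - fderiv ℝ (w k) :=
        funext fun x => fderiv_sub ((hw _).differentiable one_ne_zero x)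
          ((hw _).differentiable one_ne_zero x)
      refine (hδN k (w (k + 1) - w k) x₀ a ((hw _).sub (hw _)) ha
        ((hw1 k).trans (min_le_left _ _)) ?_).trans_eq ?_
      · rw [hfd]
        exact (hwd k).trans (min_le_right _ _)
      · congr 1
        field_simp
    refine (measure_iUnion_le _).trans ((ENNReal.tsum_le_tsum hN).trans_eq ?_)
    rw [← ENNReal.ofReal_tsum_of_nonneg (fun k => by positivity) (summable_geometric_two' η),
      tsum_geometric_two']
  · rintro r ⟨hr, hrN⟩ k y hy
    have hstep j : dist (w j y) (w (j + 1) y) ≤ κ / 2 / 2 ^ j := by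
      rw [dist_comm, dist_eq_norm]
      exact not_lt.1 fun h => hrN (mem_iUnion.2 ⟨j, hr, y, hy, h⟩)
    calc ‖w k y - w 0 y‖ = dist (w 0 y) (w k y) := by rw [dist_comm, dist_eq_norm]
      _ ≤ ∑ j ∈ Finset.range k, κ / 2 / 2 ^ j :=
        dist_le_range_sum_of_dist_le (f := fun j => w j y) k fun _ => hstep _
      _ ≤ ∑' j : ℕ, κ / 2 / 2 ^ j :=
        (summable_geometric_two' κ).sum_le_tsum _ fun j _ => by positivity
      _ = κ := tsum_geometric_two' κ

end GoodSpheres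

lemma eLpNorm_fderiv_sub_const_le {E : Type*} [NormedAddCommGroup E] [InnerProductSpace ℝ E]
    [MeasurableSpace E] [OpensMeasurableSpace E] [SecondCountableTopologyEither E (E →L[ℝ] ℝ)]
    {μ : Measure E} {p : ℝ≥0∞} {w : E → ℝ} {v : E → E} (hw : ContDiff ℝ 1 w)
    (hv : AEStronglyMeasurable v μ) (hp : 1 ≤ p) (c : ℝ) :
    eLpNorm (fderiv ℝ fun x => w x - c) p μ ≤
      eLpNorm (fun x => fderiv ℝ w x - innerSL ℝ (v x)) p μ + eLpNorm v p μ := by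
  have hinner : AEStronglyMeasurable (fun x => innerSL ℝ (v x)) μ :=
    (innerSL ℝ).continuous.comp_aestronglyMeasurable hv
  rw [show (fderiv ℝ fun x => w x - c) =
    (fun x => fderiv ℝ w x - innerSL ℝ (v x)) + fun x => innerSL ℝ (v x) by
      ext1 x; rw [fderiv_sub_const]; simp]
  refine (eLpNorm_add_le (((hw.continuous_fderiv one_ne_zero).aestronglyMeasurable).sub hinner)
    hinner hp).trans (add_le_add le_rfl (le_of_eq ?_))
  exact eLpNorm_congr_norm_ae (Eventually.of_forall fun x => innerSL_apply_norm ℝ (v x))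

section GoodBalls

variable {n : ℕ} {Ω : Set (EuclideanSpace ℝ (Fin n))} {u : EuclideanSpace ℝ (Fin n) → ℝ}
  {du : EuclideanSpace ℝ (Fin n) → EuclideanSpace ℝ (Fin n)} {x₀ : EuclideanSpace ℝ (Fin n)}
  {a : ℝ}

namespace IsWeakGradOn

lemma exists_seq_contDiff_forall_norm_sub_le_on_spheres (hn : 1 ≤ n) (hw : IsWeakGradOn n Ω u du)
    (ha : 0 < a) (hΩ : closedBall x₀ (4 * a) ⊆ Ω) (hu : IntegrableOn u (closedBall x₀ (4 * a)))
    (hdu : IntegrableOn du (closedBall x₀ (4 * a)))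
    (hdup : MemLp du n (volume.restrict (closedBall x₀ (4 * a)))) {κ η : ℝ} (hκ : 0 < κ)
    (hη : 0 < η) {ε₀ : ℝ≥0∞} (hε₀ : ε₀ ≠ 0) :
    ∃ w : ℕ → EuclideanSpace ℝ (Fin n) → ℝ, ∃ ε : ℕ → ℝ≥0∞, ∃ N : Set ℝ,
      (∀ k, ContDiff ℝ 1 (w k)) ∧
      (∀ k, eLpNorm (w k - u) 1 (volume.restrict (closedBall x₀ (3 * a))) ≤ ε k) ∧
      (∀ k, eLpNorm (fun x => fderiv ℝ (w k) x - innerSL ℝ (du x)) n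
        (volume.restrict (closedBall x₀ (3 * a))) ≤ ε k) ∧
      ε 0 ≤ ε₀ ∧ Tendsto ε atTop (𝓝 0) ∧ volume N ≤ ENNReal.ofReal η ∧
      ∀ r ∈ Ioo a (2 * a) \ N, ∀ k, ∀ y ∈ sphere x₀ r, ‖w k y - w 0 y‖ ≤ κ := by
  have : Nonempty (Fin n) := ⟨⟨0, hn⟩⟩
  obtain ⟨δ, hδ, hδN⟩ := exists_forall_exists_norm_sub_le_on_spheres (F := ℝ) volume x₀ ha hκ hη
  obtain ⟨ε, hε, hε_add, hε_lim⟩ := exists_add_succ_le_and_tendsto_zero (A := fun k => min (δ k) ε₀)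
    fun k => (lt_min (pos_iff_ne_zero.2 (hδ k)) (pos_iff_ne_zero.2 hε₀)).ne'
  have hn1 : (1 : ℝ≥0∞) ≤ n := by exact_mod_cast hn
  choose w hw1 _ hwu hwd using fun k => hw.exists_contDiff_approx measurableSet_closedBall hΩ hu hdu
    hn1 (ENNReal.natCast_ne_top n) hdup (U := closedBall x₀ (3 * a)) measurableSet_closedBall ha
    (fun x hx => closedBall_subset_closedBall' (by linarith [mem_closedBall.1 hx])) (hε k)
  have hsub : closedBall x₀ (3 * a) ⊆ closedBall x₀ (4 * a) :=
    closedBall_subset_closedBall (by linarith)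
  have hum := (hu.mono_set hsub).1
  have hdum : AEStronglyMeasurable (fun x => innerSL ℝ (du x))
      (volume.restrict (closedBall x₀ (3 * a))) :=
    (innerSL ℝ).continuous.comp_aestronglyMeasurable (hdu.mono_set hsub).1
  have hwm k : AEStronglyMeasurable (w k) (volume.restrict (closedBall x₀ (3 * a))) :=
    (hw1 k).continuous.aestronglyMeasurable
  have hdwm k : AEStronglyMeasurable (fderiv ℝ (w k)) (volume.restrict (closedBall x₀ (3 * a))) :=
    ((hw1 k).continuous_fderiv one_ne_zero).aestronglyMeasurable
  have hε_le k : ε (k + 1) + ε k ≤ δ k :=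
    (add_comm _ _).trans_le ((hε_add k).trans (min_le_left _ _))
  obtain ⟨N, hN, hrN⟩ := hδN w hw1
    (fun k => by
      rw [← sub_sub_sub_cancel_right _ _ u]
      exact (eLpNorm_sub_le ((hwm _).sub hum) ((hwm _).sub hum) le_rfl).trans
        ((add_le_add (hwu _) (hwu k)).trans (hε_le k)))
    (fun k => by
      rw [finrank_euclideanSpace_fin, ← sub_sub_sub_cancel_right _ _ fun x => innerSL ℝ (du x)]
      exact (eLpNorm_sub_le ((hdwm _).sub hdum) ((hdwm _).sub hdum) hn1).trans
        ((add_le_add (hwd _) (hwd k)).trans (hε_le k)))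
  exact ⟨w, ε, N, hw1, hwu, hwd, le_self_add.trans ((hε_add 0).trans (min_le_right _ _)), hε_lim,
    hN, hrN⟩

lemma exists_contDiff_forall_hasWeakGradPosPart (hn : 1 ≤ n) (hw : IsWeakGradOn n Ω u du)
    (ha : 0 < a) (hΩ : closedBall x₀ (4 * a) ⊆ Ω) (hu : IntegrableOn u (closedBall x₀ (4 * a)))
    (hdu : IntegrableOn du (closedBall x₀ (4 * a)))
    (hdup : MemLp du n (volume.restrict (closedBall x₀ (4 * a)))) {κ η : ℝ} (hκ : 0 < κ)
    (hη : 0 < η) {ε₀ : ℝ≥0∞} (hε₀ : ε₀ ≠ 0) :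
    ∃ w : EuclideanSpace ℝ (Fin n) → ℝ, ∃ N : Set ℝ, ContDiff ℝ 1 w ∧
      eLpNorm (w - u) 1 (volume.restrict (closedBall x₀ (3 * a))) ≤ ε₀ ∧
      eLpNorm (fun x => fderiv ℝ w x - innerSL ℝ (du x)) n
        (volume.restrict (closedBall x₀ (3 * a))) ≤ ε₀ ∧
      volume N ≤ ENNReal.ofReal η ∧
      ∀ r ∈ Ioo a (2 * a) \ N, ∀ M, (∀ y ∈ sphere x₀ r, w y + κ < M) →
        HasWeakGradPosPart n (closedBall x₀ r) u du M := by
  obtain ⟨w, ε, N, hw1, hwu, hwd, hε₀, hε, hN, hrN⟩ :=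
    hw.exists_seq_contDiff_forall_norm_sub_le_on_spheres hn ha hΩ hu hdu hdup hκ hη hε₀
  refine ⟨w 0, N, hw1 0, (hwu 0).trans hε₀, (hwd 0).trans hε₀, hN, fun r hr M hM => ?_⟩
  have hr3 : closedBall x₀ r ⊆ closedBall x₀ (3 * a) :=
    closedBall_subset_closedBall (by linarith [hr.1.2])
  have hr4 : closedBall x₀ r ⊆ closedBall x₀ (4 * a) :=
    closedBall_subset_closedBall (by linarith [hr.1.2])
  have hdum : AEStronglyMeasurable (fun x => innerSL ℝ (du x))
      (volume.restrict (closedBall x₀ r)) :=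
    (innerSL ℝ).continuous.comp_aestronglyMeasurable (hdu.mono_set hr4).1
  refine hasWeakGradPosPart_closedBall_of_tendsto (hu.mono_set hr4) (hdu.mono_set hr4) hw1
    ?_ ?_ fun k y hy => ?_
  · exact tendsto_of_tendsto_of_tendsto_of_le_of_le tendsto_const_nhds hε (fun _ => zero_le)
      fun k => (eLpNorm_mono_measure _ (Measure.restrict_mono_set _ hr3)).trans (hwu k)
  · set V := (volume.restrict (closedBall x₀ r)) univ ^ (1 / (1 : ℝ≥0∞).toReal -
      1 / (n : ℝ≥0∞).toReal)
    have hV : V ≠ ⊤ := by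
      refine ENNReal.rpow_ne_top_of_nonneg ?_ (by
        rw [Measure.restrict_apply_univ]
        exact measure_closedBall_lt_top.ne)
      simpa using inv_le_one_of_one_le₀ (by exact_mod_cast hn : (1 : ℝ) ≤ n)
    have lim := ENNReal.Tendsto.mul_const hε (.inr hV)
    rw [zero_mul] at lim
    refine tendsto_of_tendsto_of_tendsto_of_le_of_le tendsto_const_nhds lim (fun _ => zero_le)
      fun k => (eLpNorm_le_eLpNorm_mul_rpow_measure_univ (q := n) (by exact_mod_cast hn)
        (((hw1 k).continuous_fderiv one_ne_zero).aestronglyMeasurable.sub hdum)).trans ?_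
    gcongr
    exact (eLpNorm_mono_measure _ (Measure.restrict_mono_set _ hr3)).trans (hwd k)
  · have := (abs_le.1 (hrN r hr k y hy)).2
    linarith [hM y hy]

lemma exists_closedBall_forall_hasWeakGradPosPart (hn : 1 ≤ n) (hw : IsWeakGradOn n Ω u du)
    (ha : 0 < a) (hΩ : closedBall x₀ (4 * a) ⊆ Ω) (hu : IntegrableOn u (closedBall x₀ (4 * a)))
    (hdu : IntegrableOn du (closedBall x₀ (4 * a)))
    (hdup : MemLp du n (volume.restrict (closedBall x₀ (4 * a)))) :
    ∃ r ∈ Ioo a (2 * a), ∃ M₀, ∀ M, M₀ < M → HasWeakGradPosPart n (closedBall x₀ r) u du M := by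
  obtain ⟨w, N, hwc, -, -, hN, hw⟩ := hw.exists_contDiff_forall_hasWeakGradPosPart hn ha hΩ hu hdu
    hdup one_pos (half_pos ha) one_ne_zero
  obtain ⟨r, hr⟩ : ∃ r ∈ Ioo a (2 * a), r ∉ N := by
    refine not_subset.1 fun h => ?_
    have hle := (measure_mono h).trans hN
    rw [Real.volume_Ioo, ENNReal.ofReal_le_ofReal_iff (by positivity)] at hle
    linarith
  obtain ⟨m, hm⟩ := (isCompact_sphere x₀ r).bddAbove_image hwc.continuous.continuousOn
  exact ⟨r, hr.1, m + 1, fun M hM => hw r ⟨hr.1, hr.2⟩ M fun y hy => by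
    linarith [hm (mem_image_of_mem w hy)]⟩

lemma exists_forall_exists_closedBall_hasWeakGradPosPart (hn : 1 ≤ n)
    (hw : IsWeakGradOn n Ω u du) {ρ : ℝ} (hρ : 0 < ρ) :
    ∃ δ : ℝ≥0∞, δ ≠ 0 ∧ ∀ (x₀ : EuclideanSpace ℝ (Fin n)) (a c : ℝ), 0 < a →
      closedBall x₀ (4 * a) ⊆ Ω → IntegrableOn u (closedBall x₀ (4 * a)) →
      IntegrableOn du (closedBall x₀ (4 * a)) →
      MemLp du n (volume.restrict (closedBall x₀ (4 * a))) →
      ∫⁻ x in closedBall x₀ (3 * a), ‖u x - c‖ₑ ≤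
        volume (closedBall (0 : EuclideanSpace ℝ (Fin n)) a) * δ →
      eLpNorm du n (volume.restrict (closedBall x₀ (3 * a))) ≤ δ →
      ∃ r ∈ Ioo a (2 * a), HasWeakGradPosPart n (closedBall x₀ r) u du (c + ρ) := by
  have : Nonempty (Fin n) := ⟨⟨0, hn⟩⟩
  obtain ⟨δ, hδ, hδN⟩ := exists_forall_volume_largeRadii_le
    (volume : Measure (EuclideanSpace ℝ (Fin n))) (F := ℝ) (by positivity : 0 < ρ / 3)
    (by norm_num : (0 : ℝ) < 1 / 4)
  have hδ2 : δ / 2 ≠ 0 := (ENNReal.half_pos hδ).ne'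
  refine ⟨δ / 2, hδ2, fun x₀ a c ha hΩ hu hdu hdup huc hdun => ?_⟩
  have hsub : closedBall x₀ (3 * a) ⊆ closedBall x₀ (4 * a) :=
    closedBall_subset_closedBall (by linarith)
  set V := volume (closedBall (0 : EuclideanSpace ℝ (Fin n)) a)
  have hV : V ≠ 0 := (measure_closedBall_pos _ _ ha).ne'
  obtain ⟨w, N, hw1, hwu, hwd, hN, hw⟩ := hw.exists_contDiff_forall_hasWeakGradPosPart hn ha hΩ hu
    hdu hdup (by positivity : 0 < ρ / 3) (by positivity : 0 < 1 / 4 * a)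
    (lt_min (ENNReal.mul_pos hV hδ2) (pos_iff_ne_zero.2 hδ2)).ne'
  have hL1 : eLpNorm (fun x => w x - c) 1 (volume.restrict (closedBall x₀ (3 * a))) ≤ V * δ := by
    rw [show (fun x => w x - c) = (w - u) + fun x => u x - c by ext; simp]
    refine (eLpNorm_add_le (hw1.continuous.aestronglyMeasurable.sub (hu.mono_set hsub).1)
      ((hu.mono_set hsub).1.sub aestronglyMeasurable_const) le_rfl).trans ?_
    rw [← ENNReal.add_halves δ, mul_add]
    exact add_le_add (hwu.trans (min_le_left _ _)) (by rwa [eLpNorm_one_eq_lintegral_enorm])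
  have hLn : eLpNorm (fderiv ℝ fun x => w x - c) n (volume.restrict (closedBall x₀ (3 * a))) ≤
      δ := by
    refine (eLpNorm_fderiv_sub_const_le hw1 (hdu.mono_set hsub).1
      (by exact_mod_cast hn) c).trans ?_
    rw [← ENNReal.add_halves δ]
    exact add_le_add (hwd.trans (min_le_right _ _)) hdun
  have hlarge := hδN _ x₀ a (hw1.sub contDiff_const) ha hL1
    (by rwa [finrank_euclideanSpace_fin])
  obtain ⟨r, hr, hrN⟩ : ∃ r ∈ Ioo a (2 * a),
      r ∉ N ∪ largeRadii (fun x => w x - c) x₀ a (ρ / 3) := by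
    refine not_subset.1 fun h => ?_
    have hle := (measure_mono h).trans ((measure_union_le _ _).trans (add_le_add hN hlarge))
    rw [Real.volume_Ioo, ← ENNReal.ofReal_add (by positivity) (by positivity),
      ENNReal.ofReal_le_ofReal_iff (by positivity)] at hle
    linarith
  refine ⟨r, hr, hw r ⟨hr, fun h => hrN (.inl h)⟩ _ fun y hy => ?_⟩
  have hle : ‖w y - c‖ ≤ ρ / 3 := not_lt.1 fun h => hrN (.inr ⟨hr, y, hy, h⟩)
  linarith [(abs_le.1 hle).2]

lemma ae_exists_closedBall_hasWeakGradPosPart (hn : 1 ≤ n) (hw : IsWeakGradOn n Ω u du)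
    {U : Set (EuclideanSpace ℝ (Fin n))} (hU : IsOpen U) (hUΩ : U ⊆ Ω)
    (hu : IntegrableOn u U) (hdu : IntegrableOn du U) (hdup : MemLp du n (volume.restrict U)) :
    ∀ᵐ x, x ∈ U → ∀ M, u x < M → ∀ η > 0, ∃ r ∈ Ioo 0 η,
      closedBall x r ⊆ U ∧ HasWeakGradPosPart n (closedBall x r) u du M := by
  have : Nonempty (Fin n) := ⟨⟨0, hn⟩⟩
  have hdup' : MemLp (U.indicator du) n := (memLp_indicator_iff_restrict hU.measurableSet).2 hdup
  filter_upwards [ae_eventually_setLIntegral_enorm_sub_le volume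
    (hu.integrable_indicator hU.measurableSet).locallyIntegrable (by norm_num : (0 : ℝ) < 3)]
    with x hx hxU M hM η hη
  obtain ⟨δ, hδ, hballs⟩ :=
    hw.exists_forall_exists_closedBall_hasWeakGradPosPart hn (sub_pos.2 hM)
  obtain ⟨s, hs, hsU⟩ := nhds_basis_closedBall.mem_iff.1 (hU.mem_nhds hxU)
  have hgrad := ((tendsto_eLpNorm_restrict_closedBall volume (by exact_mod_cast hn)
    (ENNReal.natCast_ne_top n) hdup' x).comp
    (tendsto_const_mul_nhdsGT_zero three_pos)).eventually_le_const (pos_iff_ne_zero.2 hδ)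
  obtain ⟨a, ⟨hua, hdua⟩, ha, has⟩ := (((hx δ hδ).and hgrad).and (Ioo_mem_nhdsGT
    (lt_min (by positivity : 0 < s / 4) (by positivity : 0 < η / 2)))).exists
  have haU : closedBall x (4 * a) ⊆ U :=
    (closedBall_subset_closedBall (by linarith [has.trans_le (min_le_left _ _)])).trans hsU
  have haU3 : closedBall x (3 * a) ⊆ U :=
    (closedBall_subset_closedBall (by linarith)).trans haU
  rw [Function.comp_apply, eLpNorm_indicator_eq_eLpNorm_restrict hU.measurableSet,
    Measure.restrict_restrict hU.measurableSet, inter_eq_self_of_subset_right haU3] at hdua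
  rw [indicator_of_mem hxU, setLIntegral_congr_fun measurableSet_closedBall fun y hy => by
    rw [indicator_of_mem (haU3 hy)]] at hua
  obtain ⟨r, hr, hball⟩ := hballs x a (u x) ha (haU.trans hUΩ) (hu.mono_set haU)
    (hdu.mono_set haU) (hdup.mono_measure (Measure.restrict_mono_set _ haU)) hua hdua
  exact ⟨r, ⟨ha.trans hr.1, by linarith [hr.2, has.trans_le (min_le_right _ _)]⟩,
    (closedBall_subset_closedBall (by linarith [hr.2])).trans haU, by simpa using hball⟩

end IsWeakGradOn

end GoodBalls

/-! ### Calculus of weak gradients -/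

section Calculus

variable {n : ℕ} {Ω : Set (EuclideanSpace ℝ (Fin n))} {φ u v : EuclideanSpace ℝ (Fin n) → ℝ}
  {du dv : EuclideanSpace ℝ (Fin n) → EuclideanSpace ℝ (Fin n)}

lemma integrableOn_mul_fderiv_single (hu : IntegrableOn u Ω) (hφ : ContDiff ℝ 1 φ)
    (hφc : HasCompactSupport φ) (i : Fin n) :
    IntegrableOn (fun x => u x * fderiv ℝ φ x (EuclideanSpace.single i (1 : ℝ))) Ω := by
  have hc : Continuous fun x => fderiv ℝ φ x (EuclideanSpace.single i (1 : ℝ)) :=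
    (hφ.continuous_fderiv one_ne_zero).clm_apply continuous_const
  obtain ⟨C, hC⟩ := hc.bounded_above_of_compact_support (hφc.fderiv_apply ℝ _)
  exact Integrable.mul_bdd hu hc.aestronglyMeasurable (Eventually.of_forall hC)

lemma integrableOn_apply_mul (hdu : IntegrableOn du Ω) (hφ : Continuous φ)
    (hφc : HasCompactSupport φ) (i : Fin n) : IntegrableOn (fun x => du x i * φ x) Ω := by
  obtain ⟨C, hC⟩ := hφ.bounded_above_of_compact_support hφc
  exact ((EuclideanSpace.proj (𝕜 := ℝ) i).integrable_comp hdu).mul_bdd hφ.aestronglyMeasurable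
    (Eventually.of_forall hC)

namespace IsWeakGradOn

lemma neg (h : IsWeakGradOn n Ω u du) : IsWeakGradOn n Ω (fun x => -u x) fun x => -du x := by
  intro φ hφ hφc hφΩ i
  simp only [neg_mul, PiLp.neg_apply, integral_neg, h φ hφ hφc hφΩ i]

lemma sub (hu : IsWeakGradOn n Ω u du) (hv : IsWeakGradOn n Ω v dv) (hui : IntegrableOn u Ω)
    (hvi : IntegrableOn v Ω) (hdui : IntegrableOn du Ω) (hdvi : IntegrableOn dv Ω) :
    IsWeakGradOn n Ω (fun x => u x - v x) fun x => du x - dv x := by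
  intro φ hφ hφc hφΩ i
  have hφ1 : ContDiff ℝ 1 φ := hφ.of_le (by simp)
  simp only [sub_mul, PiLp.sub_apply]
  rw [integral_sub (integrableOn_mul_fderiv_single hui hφ1 hφc i)
      (integrableOn_mul_fderiv_single hvi hφ1 hφc i),
    integral_sub (integrableOn_apply_mul hdui hφ.continuous hφc i)
      (integrableOn_apply_mul hdvi hφ.continuous hφc i),
    hu φ hφ hφc hφΩ i, hv φ hφ hφc hφΩ i, neg_sub_neg, neg_sub]

lemma of_univ (h : IsWeakGradOn n univ u du) (hu : ∀ x ∉ Ω, u x = 0) (hdu : ∀ x ∉ Ω, du x = 0) :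
    IsWeakGradOn n Ω u du := by
  intro φ hφ hφc _ i
  rw [setIntegral_eq_integral_of_forall_compl_eq_zero fun x hx => by simp [hu x hx],
    setIntegral_eq_integral_of_forall_compl_eq_zero fun x hx => by simp [hdu x hx]]
  simpa only [Measure.restrict_univ] using h φ hφ hφc (subset_univ _) i

lemma iUnion_indicator {ι : Type*} [Countable ι] {D : ι → Set (EuclideanSpace ℝ (Fin n))}
    (hD : ∀ j, MeasurableSet (D j)) (hdisj : Pairwise (Function.onFun Disjoint D))
    (hv : IntegrableOn v (⋃ j, D j)) (hdv : IntegrableOn dv (⋃ j, D j))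
    (h : ∀ j, IsWeakGradOn n univ ((D j).indicator v) ((D j).indicator dv)) :
    IsWeakGradOn n univ ((⋃ j, D j).indicator v) ((⋃ j, D j).indicator dv) := by
  have integral_fun {S} (hS : MeasurableSet S) (c : EuclideanSpace ℝ (Fin n) → ℝ) :
      ∫ x in univ, S.indicator v x * c x = ∫ x in S, v x * c x := by
    simp_rw [setIntegral_univ, ← indicator_mul_left S v c, integral_indicator hS]
  have integral_grad {S} (hS : MeasurableSet S) (c : EuclideanSpace ℝ (Fin n) → ℝ) (i : Fin n) :
      ∫ x in univ, S.indicator dv x i * c x = ∫ x in S, dv x i * c x := by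
    rw [setIntegral_univ, ← integral_indicator hS]
    congr with x
    by_cases hx : x ∈ S <;> simp [hx]
  intro φ hφ hφc _ i
  rw [integral_fun (.iUnion hD), integral_grad (.iUnion hD),
    integral_iUnion hD hdisj (integrableOn_mul_fderiv_single hv (hφ.of_le (by simp)) hφc i),
    integral_iUnion hD hdisj (integrableOn_apply_mul hdv hφ.continuous hφc i), ← tsum_neg]
  refine tsum_congr fun j => ?_
  rw [← integral_fun (hD j), ← integral_grad (hD j)]
  exact h j φ hφ hφc (subset_univ _) i

end IsWeakGradOn

lemma lintegral_enorm_pow_ne_top_of_memLp {α F : Type*} [MeasurableSpace α] {μ : Measure α}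
    [NormedAddCommGroup F] {f : α → F} (hn : n ≠ 0) (hf : MemLp f n μ) :
    ∫⁻ x, ‖f x‖ₑ ^ n ∂μ ≠ ⊤ := by
  rw [← eLpNorm_natCast_pow hn]
  exact ENNReal.pow_ne_top hf.eLpNorm_ne_top

section Superlevel

variable {B D : Set (EuclideanSpace ℝ (Fin n))} {M : ℝ}

lemma integrable_indicator_posPart (hB : MeasurableSet B) (hfin : volume B ≠ ⊤)
    (hu : IntegrableOn u B) (M : ℝ) : Integrable (B.indicator fun x => max (u x - M) 0) :=
  (integrable_indicator_iff hB).2 (Integrable.pos_part (hu.sub (integrableOn_const hfin)))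

lemma integrable_indicator_superlevel (hB : MeasurableSet B) (hum : Measurable u)
    (hdu : IntegrableOn du B) (M : ℝ) : Integrable ((B ∩ {x | M < u x}).indicator du) :=
  (integrable_indicator_iff (hB.inter (measurableSet_lt measurable_const hum))).2
    (hdu.mono_set inter_subset_left)

namespace HasWeakGradPosPart

lemma iUnion {ι : Type*} [Countable ι] {D : ι → Set (EuclideanSpace ℝ (Fin n))}
    (hD : ∀ j, MeasurableSet (D j)) (hdisj : Pairwise (Function.onFun Disjoint D))
    (hfin : volume (⋃ j, D j) ≠ ⊤) (hum : Measurable u) (hu : IntegrableOn u (⋃ j, D j))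
    (hdu : IntegrableOn du (⋃ j, D j)) (h : ∀ j, HasWeakGradPosPart n (D j) u du M) :
    HasWeakGradPosPart n (⋃ j, D j) u du M := by
  simp only [HasWeakGradPosPart, ← indicator_indicator] at h ⊢
  exact .iUnion_indicator hD hdisj (Integrable.pos_part (hu.sub (integrableOn_const hfin)))
    (Integrable.indicator hdu (measurableSet_lt measurable_const hum)) h

lemma sdiff (hB : MeasurableSet B) (hD : MeasurableSet D) (hDB : D ⊆ B) (hfin : volume B ≠ ⊤)
    (hum : Measurable u) (hu : IntegrableOn u B) (hdu : IntegrableOn du B)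
    (h : HasWeakGradPosPart n B u du M) (h' : HasWeakGradPosPart n D u du M) :
    HasWeakGradPosPart n (B \ D) u du M := by
  rw [HasWeakGradPosPart, indicator_sdiff hDB, inter_sdiff_distrib_right,
    indicator_sdiff (inter_subset_inter_left _ hDB)]
  exact IsWeakGradOn.sub h h' (integrable_indicator_posPart hB hfin hu M).integrableOn
    (integrable_indicator_posPart hD (measure_ne_top_of_subset hDB hfin) (hu.mono_set hDB)
      M).integrableOn (integrable_indicator_superlevel hB hum hdu M).integrableOn
    (integrable_indicator_superlevel hD hum (hdu.mono_set hDB) M).integrableOn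

end HasWeakGradPosPart

end Superlevel

end Calculus

/-! ### Vitali coverings of sublevel sets -/

section Covering

variable {E : Type*} [NormedAddCommGroup E] [NormedSpace ℝ E] [FiniteDimensional ℝ E]
  [MeasurableSpace E] [BorelSpace E] (μ : Measure E) [μ.IsAddHaarMeasure]

lemma measure_iUnion_closedBall_sdiff_interior {ι : Type*} [Countable ι] (x : ι → E) {r : ι → ℝ}
    (hr : ∀ i, r i ≠ 0) :
    μ ((⋃ i, closedBall (x i) (r i)) \ interior (⋃ i, closedBall (x i) (r i))) = 0 := by
  refine measure_mono_null (t := ⋃ i, sphere (x i) (r i)) ?_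
    (measure_iUnion_null fun i => Measure.addHaar_sphere_of_ne_zero μ (x i) (hr i))
  rintro y ⟨hy, hy'⟩
  obtain ⟨i, hi⟩ := mem_iUnion.1 hy
  refine mem_iUnion.2 ⟨i, (mem_closedBall.1 hi).antisymm (not_lt.1 fun hlt => hy' ?_)⟩
  exact isOpen_ball.subset_interior_iff.2
    (ball_subset_closedBall.trans (subset_iUnion (fun i => closedBall (x i) (r i)) i)) hlt

lemma exists_disjoint_closedBall_covering_of_ae {S : Set E} {P : E → ℝ → Prop}
    (h : ∀ᵐ x ∂μ, x ∈ S → ∀ η > 0, ∃ r ∈ Ioo 0 η, P x r) :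
    ∃ (t : Set E) (r : E → ℝ), t.Countable ∧ (∀ x ∈ t, 0 < r x ∧ P x (r x)) ∧
      (t.PairwiseDisjoint fun x => closedBall x (r x)) ∧
      μ (S \ ⋃ x ∈ t, closedBall x (r x)) = 0 := by
  set S' := {x ∈ S | ∀ η > 0, ∃ r ∈ Ioo 0 η, P x r}
  obtain ⟨t, r, ht, -, hr, hcov, hdisj⟩ := Besicovitch.exists_disjoint_closedBall_covering_ae μ
    (fun x => {r | P x r}) S' (fun x hx η hη => (hx.2 η hη).imp fun r hr => ⟨hr.2, hr.1⟩)
    (fun _ => 1) fun _ _ => one_pos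
  refine ⟨t, r, ht, fun x hx => ⟨(hr x hx).2.1, (hr x hx).1⟩, hdisj,
    measure_mono_null (fun x hx => ?_) (measure_union_null hcov (ae_iff.1 h))⟩
  by_cases hxS : x ∈ S'
  · exact .inl ⟨hxS, hx.2⟩
  · exact .inr fun hx' => hxS ⟨hx.1, hx' hx.1⟩

lemma ae_eventually_measure_inter_closedBall_le {A : Set E} (hA : MeasurableSet A) :
    ∀ᵐ x ∂μ, x ∉ A → ∀ δ : ℝ≥0∞, δ ≠ 0 → ∀ᶠ r in 𝓝[>] (0 : ℝ),
      μ (A ∩ closedBall x r) ≤ δ * μ (closedBall x r) := by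
  filter_upwards [Besicovitch.ae_tendsto_measure_inter_div_of_measurableSet μ hA]
    with x hx hxA δ hδ
  rw [indicator_of_notMem hxA] at hx
  filter_upwards [hx.eventually_le_const (pos_iff_ne_zero.2 hδ), self_mem_nhdsWithin] with r hr hr0
  rwa [ENNReal.div_le_iff (measure_closedBall_pos μ x hr0).ne' measure_closedBall_lt_top.ne] at hr

end Covering

section Sublevel

variable {n : ℕ} {Ω U : Set (EuclideanSpace ℝ (Fin n))} {u : EuclideanSpace ℝ (Fin n) → ℝ}
  {du : EuclideanSpace ℝ (Fin n) → EuclideanSpace ℝ (Fin n)}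

namespace IsWeakGradOn

lemma exists_sublevel_cover (hn : 1 ≤ n) (hw : IsWeakGradOn n Ω u du) (hU : IsOpen U)
    (hUfin : volume U ≠ ⊤) (hUΩ : U ⊆ Ω) (hum : Measurable u) (hu : IntegrableOn u U)
    (hdu : IntegrableOn du U) (hdup : MemLp du n (volume.restrict U)) (M : ℝ) {δ : ℝ≥0∞}
    (hδ : δ ≠ 0) :
    ∃ D ⊆ U, MeasurableSet D ∧ volume (D \ interior D) = 0 ∧
      volume ((U ∩ {x | u x < M}) \ D) = 0 ∧ volume (D ∩ {x | M < u x}) < δ ∧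
      HasWeakGradPosPart n D u du M := by
  set A := {x | M < u x}
  have hA : MeasurableSet A := measurableSet_lt measurable_const hum
  obtain ⟨ε, hε, hεδ⟩ := ENNReal.exists_nnreal_pos_mul_lt hUfin hδ
  obtain ⟨t, r, ht, hr, hdisj, hcov⟩ := exists_disjoint_closedBall_covering_of_ae volume
    (S := U ∩ {x | u x < M}) (P := fun x r => closedBall x r ⊆ U ∧
      HasWeakGradPosPart n (closedBall x r) u du M ∧
      volume (A ∩ closedBall x r) ≤ ε * volume (closedBall x r)) (by
    filter_upwards [hw.ae_exists_closedBall_hasWeakGradPosPart hn hU hUΩ hu hdu hdup,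
      ae_eventually_measure_inter_closedBall_le volume hA] with x hball hsmall ⟨hxU, hxM⟩ η hη
    obtain ⟨s, hs, hsub⟩ := mem_nhdsGT_iff_exists_Ioo_subset.1
      (hsmall (notMem_ofPred_iff.2 (lt_asymm hxM)) ε (by positivity))
    obtain ⟨r, hr, hrU, hrM⟩ := hball hxU M hxM (min s η) (lt_min hs hη)
    exact ⟨r, ⟨hr.1, hr.2.trans_le (min_le_right _ _)⟩, hrU, hrM,
      hsub ⟨hr.1, hr.2.trans_le (min_le_left _ _)⟩⟩)
  have : Countable t := ht.to_subtype
  rw [biUnion_eq_iUnion] at hcov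
  have hDm (x : t) : MeasurableSet (closedBall x.1 (r x)) := measurableSet_closedBall
  have hDU : ⋃ x : t, closedBall x.1 (r x) ⊆ U := iUnion_subset fun x => (hr x x.2).2.1
  have hDdisj : Pairwise (Function.onFun Disjoint fun x : t => closedBall x.1 (r x)) :=
    fun x y hxy => hdisj x.2 y.2 (Subtype.coe_injective.ne hxy)
  refine ⟨_, hDU, .iUnion hDm,
    measure_iUnion_closedBall_sdiff_interior volume _ fun x => (hr x x.2).1.ne', hcov, ?_,
    .iUnion hDm hDdisj (measure_ne_top_of_subset hDU hUfin) hum (hu.mono_set hDU)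
      (hdu.mono_set hDU) fun x => (hr x x.2).2.2.1⟩
  calc volume ((⋃ x : t, closedBall x.1 (r x)) ∩ A)
      ≤ ∑' x : t, volume (closedBall x.1 (r x) ∩ A) := by
        rw [iUnion_inter]
        exact measure_iUnion_le _
    _ ≤ ∑' x : t, ε * volume (closedBall x.1 (r x)) := ENNReal.tsum_le_tsum fun x => by
        rw [inter_comm]
        exact (hr x x.2).2.2.2
    _ = ε * volume (⋃ x : t, closedBall x.1 (r x)) := by
        rw [ENNReal.tsum_mul_left, measure_iUnion hDdisj hDm]
    _ ≤ ε * volume U := by gcongr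
    _ < δ := hεδ

end IsWeakGradOn

end Sublevel

/-! ### Energy estimates for quasi-minimizers -/

/-- The growth conditions `‖z‖ ^ p - G x ≤ f x z` and `f x 0 ≤ G x` with an integrable `G`: all that
the regularity theory asks of the integrand, since the competitors used have gradient either equal
to that of the minimizer or zero. -/
structure HasPowerGrowth {α F : Type*} [MeasurableSpace α] [NormedAddCommGroup F] (p : ℕ)
    (μ : Measure α) (f : α → F → ℝ) (G : α → ℝ) : Prop where
  integrable : Integrable G μ
  aestronglyMeasurable_zero : AEStronglyMeasurable (fun x => f x 0) μ
  apply_zero_le : ∀ᵐ x ∂μ, f x 0 ≤ G x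
  le_apply : ∀ᵐ x ∂μ, ∀ z, ‖z‖ ^ p - G x ≤ f x z

namespace HasPowerGrowth

variable {α F : Type*} [MeasurableSpace α] [NormedAddCommGroup F] {p : ℕ} {μ ν : Measure α}
  {f : α → F → ℝ} {G : α → ℝ} {w : α → F} {Q : ℝ}

lemma mono_measure (hf : HasPowerGrowth p μ f G) (h : ν ≤ μ) : HasPowerGrowth p ν f G where
  integrable := hf.integrable.mono_measure h
  aestronglyMeasurable_zero := hf.aestronglyMeasurable_zero.mono_measure h
  apply_zero_le := ae_mono h hf.apply_zero_le
  le_apply := ae_mono h hf.le_apply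

lemma neg (hf : HasPowerGrowth p μ f G) : HasPowerGrowth p μ (fun x z => f x (-z)) G where
  integrable := hf.integrable
  aestronglyMeasurable_zero := by simpa only [neg_zero] using hf.aestronglyMeasurable_zero
  apply_zero_le := by simpa only [neg_zero] using hf.apply_zero_le
  le_apply := hf.le_apply.mono fun x hx z => by simpa only [norm_neg] using hx (-z)

lemma abs_apply_zero_le (hf : HasPowerGrowth p μ f G) (hp : p ≠ 0) : ∀ᵐ x ∂μ, |f x 0| ≤ G x := by
  filter_upwards [hf.apply_zero_le, hf.le_apply] with x hx hx'
  have := hx' 0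
  rw [norm_zero, zero_pow hp] at this
  exact abs_le.2 ⟨by linarith, hx⟩

lemma integrable_apply_zero (hf : HasPowerGrowth p μ f G) (hp : p ≠ 0) :
    Integrable (fun x => f x 0) μ :=
  hf.integrable.mono' hf.aestronglyMeasurable_zero (hf.abs_apply_zero_le hp)

lemma norm_pow_le (hf : HasPowerGrowth p μ f G) (w : α → F) :
    ∀ᵐ x ∂μ, ‖w x‖ ^ p ≤ f x (w x) + G x :=
  hf.le_apply.mono fun x hx => by linarith [hx (w x)]

lemma memLp (hf : HasPowerGrowth p μ f G) (hp : p ≠ 0) (hw : AEStronglyMeasurable w μ)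
    (hfw : Integrable (fun x => f x (w x)) μ) : MemLp w p μ := by
  refine (integrable_norm_rpow_iff hw (by simpa using hp) (by simp)).1 ?_
  simp only [ENNReal.toReal_natCast, Real.rpow_natCast]
  refine (hfw.add hf.integrable).mono' (hw.norm.pow p) ?_
  filter_upwards [hf.norm_pow_le w] with x hx
  rwa [norm_pow, norm_norm]

lemma lintegral_enorm_pow_le (hf : HasPowerGrowth p μ f G) (hp : p ≠ 0) (hQ : 0 ≤ Q)
    (hfw : Integrable (fun x => f x (w x)) μ)
    (hle : ∫ x, f x (w x) ∂μ ≤ Q * ∫ x, f x 0 ∂μ) :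
    ∫⁻ x, ‖w x‖ₑ ^ p ∂μ ≤ ENNReal.ofReal (Q + 1) * ∫⁻ x, ENNReal.ofReal (G x) ∂μ := by
  have hG : 0 ≤ᵐ[μ] G := (hf.abs_apply_zero_le hp).mono fun x hx => (abs_nonneg _).trans hx
  have hzero : ∫ x, f x 0 ∂μ ≤ ∫ x, G x ∂μ :=
    integral_mono_ae (hf.integrable_apply_zero hp) hf.integrable hf.apply_zero_le
  calc ∫⁻ x, ‖w x‖ₑ ^ p ∂μ ≤ ∫⁻ x, ENNReal.ofReal (f x (w x) + G x) ∂μ := by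
        refine lintegral_mono_ae ((hf.norm_pow_le w).mono fun x hx => ?_)
        rw [← ofReal_norm, ← ENNReal.ofReal_pow (norm_nonneg _)]
        exact ENNReal.ofReal_le_ofReal hx
    _ = ENNReal.ofReal (∫ x, (f x (w x) + G x) ∂μ) :=
        (ofReal_integral_eq_lintegral_ofReal (hfw.add hf.integrable)
          ((hf.norm_pow_le w).mono fun x hx => (pow_nonneg (norm_nonneg _) p).trans hx)).symm
    _ ≤ ENNReal.ofReal ((Q + 1) * ∫ x, G x ∂μ) := by
        refine ENNReal.ofReal_le_ofReal ?_
        rw [integral_add hfw hf.integrable, add_one_mul]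
        gcongr
        exact hle.trans (mul_le_mul_of_nonneg_left hzero hQ)
    _ = ENNReal.ofReal (Q + 1) * ∫⁻ x, ENNReal.ofReal (G x) ∂μ := by
        rw [ENNReal.ofReal_mul (by linarith), ofReal_integral_eq_lintegral_ofReal hf.integrable hG]

end HasPowerGrowth

section QMinimizer

variable {n : ℕ} {Ω : Set (EuclideanSpace ℝ (Fin n))}
  {f : EuclideanSpace ℝ (Fin n) → EuclideanSpace ℝ (Fin n) → ℝ} {Q M₀ M R : ℝ}
  {G φ u u' : EuclideanSpace ℝ (Fin n) → ℝ}
  {du : EuclideanSpace ℝ (Fin n) → EuclideanSpace ℝ (Fin n)} {x₀ : EuclideanSpace ℝ (Fin n)}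
  {D K P : Set (EuclideanSpace ℝ (Fin n))}

namespace IsQMinimizer

lemma isWeakGradOn (h : IsQMinimizer n Ω f Q u du) : IsWeakGradOn n Ω u du := h.1

lemma locallyIntegrableOn (h : IsQMinimizer n Ω f Q u du) : LocallyIntegrableOn u Ω := h.2.1

lemma locallyIntegrableOn_grad (h : IsQMinimizer n Ω f Q u du) : LocallyIntegrableOn du Ω := h.2.2.1

lemma congr_ae (h : IsQMinimizer n Ω f Q u du) (huu' : u =ᵐ[volume.restrict Ω] u') :
    IsQMinimizer n Ω f Q u' du := by
  refine ⟨fun φ hφ hφc hφΩ i => ?_, fun x hx => ?_, h.2.2⟩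
  · rw [← h.isWeakGradOn φ hφ hφc hφΩ i]
    exact integral_congr_ae (huu'.mono fun x hx => by simp only [hx])
  · obtain ⟨s, hs, hsu⟩ := h.locallyIntegrableOn x hx
    refine ⟨s ∩ Ω, inter_mem hs self_mem_nhdsWithin, ?_⟩
    exact (hsu.mono_set inter_subset_left).congr
      (ae_mono (Measure.restrict_mono inter_subset_right le_rfl) huu')

lemma neg (h : IsQMinimizer n Ω f Q u du) :
    IsQMinimizer n Ω (fun x z => f x (-z)) Q (fun x => -u x) fun x => -du x := by
  refine ⟨h.1.neg, h.2.1.neg, h.2.2.1.neg, fun φ dφ hw hφ hdφ hc hs => ?_⟩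
  have hsupp : tsupport (fun x => -φ x) = tsupport φ := by
    simp [tsupport, Function.support]
  have hneg := h.2.2.2 (fun x => -φ x) (fun x => -dφ x) hw.neg hφ.neg hdφ.neg
    (by rwa [hsupp]) (by rwa [hsupp])
  simpa only [hsupp, neg_neg, neg_add_rev, add_comm] using hneg

-- A cutoff function is an admissible test function, whence `f (·, du)` is integrable near `K`.
lemma memLp_of_isCompact (h : IsQMinimizer n Ω f Q u du)
    (hf : HasPowerGrowth n (volume.restrict Ω) f G) (hn : n ≠ 0) (hΩ : IsOpen Ω) (hK : IsCompact K)
    (hKΩ : K ⊆ Ω) : MemLp du n (volume.restrict K) := by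
  obtain ⟨s, hs, hKs, hsΩ, hsc⟩ := exists_open_between_and_isCompact_closure hK hΩ hKΩ
  obtain ⟨ψ, hψs, hψ, -⟩ := hs.exists_contDiff_support_eq (n := 1)
  have hψt : tsupport ψ = closure s := by rw [tsupport, hψs]
  have hψc : HasCompactSupport ψ := by rwa [HasCompactSupport, hψt]
  have hψi : Integrable ψ := hψ.continuous.integrable_of_hasCompactSupport hψc
  have hdψc : HasCompactSupport (gradient ψ) := (hψc.fderiv ℝ).comp_left (map_zero _)
  have hdψi : Integrable (gradient ψ) :=
    (continuous_gradient_of_contDiff hψ).integrable_of_hasCompactSupport hdψc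
  have hψΩ : IsWeakGradOn n Ω ψ (gradient ψ) := by
    refine (isWeakGradOn_univ_of_differentiable (hψ.differentiable one_ne_zero) hψi hdψi fun x =>
      (innerSL_gradient ψ x).symm).of_univ (fun x hx => ?_) fun x hx => ?_
    · exact image_eq_zero_of_notMem_tsupport fun h => hx (hsΩ (hψt ▸ h))
    · rw [gradient, fderiv_of_notMem_tsupport ℝ fun h => hx (hsΩ (hψt ▸ h)), map_zero]
  have hint := (h.2.2.2 ψ _ hψΩ hψi.integrableOn hdψi.integrableOn hψc (hψt ▸ hsΩ)).1
  exact (hf.mono_measure (Measure.restrict_mono hKΩ le_rfl)).memLp hn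
    (h.locallyIntegrableOn_grad.integrableOn_compact_subset hKΩ hK).aestronglyMeasurable
    (hint.mono_set (hKs.trans (hψt ▸ subset_closure)))

lemma lintegral_enorm_pow_le_of_tsupport_ae_eq (h : IsQMinimizer n Ω f Q u du)
    (hf : HasPowerGrowth n (volume.restrict Ω) f G) (hn : n ≠ 0) (hQ : 0 ≤ Q)
    (hφ : IsWeakGradOn n Ω φ fun x => -P.indicator du x) (hφi : IntegrableOn φ Ω)
    (hP : MeasurableSet P) (hdu : IntegrableOn du P) (hφc : IsCompact (tsupport φ))
    (hφΩ : tsupport φ ⊆ Ω) (hφP : tsupport φ =ᵐ[volume] P) :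
    ∫⁻ x in P, ‖du x‖ₑ ^ n ≤ ENNReal.ofReal (Q + 1) * ∫⁻ x in P, ENNReal.ofReal (G x) := by
  rw [← Measure.restrict_congr_set hφP]
  have hfT := hf.mono_measure (Measure.restrict_mono hφΩ le_rfl)
  have hzero : (fun x => f x (du x + -P.indicator du x)) =ᵐ[volume.restrict (tsupport φ)]
      fun x => f x 0 := by
    rw [Measure.restrict_congr_set hφP]
    filter_upwards [ae_restrict_mem hP] with x hx
    rw [indicator_of_mem hx, add_neg_cancel]
  obtain ⟨hint, hle⟩ := h.2.2.2 φ _ hφ hφi (hdu.integrable_indicator hP).neg.integrableOn hφc hφΩ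
  refine hfT.lintegral_enorm_pow_le hn hQ hint ?_
  rw [← integral_congr_ae hzero]
  exact hle ((hfT.integrable_apply_zero hn).congr hzero.symm)

lemma lintegral_le_of_sublevel_cover (h : IsQMinimizer n Ω f Q u du)
    (hf : HasPowerGrowth n (volume.restrict Ω) f G) (hn : n ≠ 0) (hQ : 0 ≤ Q) (hum : Measurable u)
    (hR : R ≠ 0) (hB : closedBall x₀ R ⊆ Ω) (hu : IntegrableOn u (closedBall x₀ R))
    (hdu : IntegrableOn du (closedBall x₀ R)) (hnull : volume {x | u x = M} = 0)
    (hBM : HasWeakGradPosPart n (closedBall x₀ R) u du M) (hD : MeasurableSet D)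
    (hDB : D ⊆ closedBall x₀ R) (hDi : volume (D \ interior D) = 0)
    (hcov : volume ((ball x₀ R ∩ {x | u x < M}) \ D) = 0) (hDM : HasWeakGradPosPart n D u du M) :
    ∫⁻ x in (closedBall x₀ R \ D) ∩ {x | M < u x}, ‖du x‖ₑ ^ n ≤
      ENNReal.ofReal (Q + 1) *
        ∫⁻ x in (closedBall x₀ R \ D) ∩ {x | M < u x}, ENNReal.ofReal (G x) := by
  have hBm : MeasurableSet (closedBall x₀ R) := measurableSet_closedBall
  have hBfin : volume (closedBall x₀ R) ≠ ⊤ := measure_closedBall_lt_top.ne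
  set φ := fun x => -(closedBall x₀ R \ D).indicator (fun x => max (u x - M) 0) x with hφ
  have hnotΩ x (hx : x ∉ Ω) : x ∉ closedBall x₀ R \ D := fun hxB => hx (hB hxB.1)
  have hφw := (hBM.sdiff hBm hD hDB hBfin hum hu hdu hDM).neg.of_univ (Ω := Ω)
    (fun x hx => neg_eq_zero.2 (indicator_of_notMem (hnotΩ x hx) _))
    fun x hx => neg_eq_zero.2 (indicator_of_notMem (fun hxP => hnotΩ x hx hxP.1) _)
  have hφi : Integrable φ := (integrable_indicator_posPart (hBm.diff hD)
    (measure_ne_top_of_subset sdiff_subset hBfin) (hu.mono_set sdiff_subset) M).neg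
  have hsupp : Function.support φ ⊆ closedBall x₀ R \ D := by
    rw [hφ, Function.support_fun_neg]
    exact support_indicator_subset
  have htsupp : tsupport φ ⊆ closedBall x₀ R \ interior D :=
    closure_minimal (hsupp.trans (sdiff_subset_sdiff_right interior_subset))
      (isClosed_closedBall.sdiff isOpen_interior)
  have hsuper : (closedBall x₀ R \ D) ∩ {x | M < u x} ⊆ tsupport φ := fun x hx => by
    refine subset_tsupport φ ?_
    rw [hφ, Function.support_fun_neg, Function.mem_support, indicator_of_mem hx.1]
    exact (lt_max_of_lt_left (sub_pos.2 hx.2)).ne'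
  have hnull' : volume (tsupport φ \ ((closedBall x₀ R \ D) ∩ {x | M < u x})) = 0 := by
    refine measure_mono_null (fun x hx => ?_) (measure_union_null (measure_union_null hDi
      (Measure.addHaar_sphere_of_ne_zero _ x₀ hR)) (measure_union_null hnull hcov))
    obtain ⟨hxB, hxD'⟩ := htsupp hx.1
    by_cases hxD : x ∈ D
    · exact .inl (.inl ⟨hxD, hxD'⟩)
    obtain hxR | hxR := (mem_closedBall.1 hxB).lt_or_eq
    · obtain hlt | heq | hgt := lt_trichotomy (u x) M
      · exact .inr (.inr ⟨⟨hxR, hlt⟩, hxD⟩)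
      · exact .inr (.inl heq)
      · exact absurd ⟨⟨hxB, hxD⟩, hgt⟩ hx.2
    · exact .inl (.inr hxR)
  exact h.lintegral_enorm_pow_le_of_tsupport_ae_eq hf hn hQ hφw hφi.integrableOn
    ((hBm.diff hD).inter (measurableSet_lt measurable_const hum))
    (hdu.mono_set (inter_subset_left.trans sdiff_subset))
    ((isCompact_closedBall x₀ R).of_isClosed_subset (isClosed_tsupport φ)
      (htsupp.trans sdiff_subset)) (htsupp.trans (sdiff_subset.trans hB))
    ((ae_le_set.2 hnull').antisymm (LE.le.eventuallyLE hsuper))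

lemma lintegral_superlevel_le_of_null (h : IsQMinimizer n Ω f Q u du)
    (hf : HasPowerGrowth n (volume.restrict Ω) f G) (hn : n ≠ 0) (hQ : 0 ≤ Q) (hum : Measurable u)
    (hR : R ≠ 0) (hB : closedBall x₀ R ⊆ Ω) (hu : IntegrableOn u (closedBall x₀ R))
    (hdu : IntegrableOn du (closedBall x₀ R))
    (hdup : MemLp du n (volume.restrict (closedBall x₀ R))) (hnull : volume {x | u x = M} = 0)
    (hBM : HasWeakGradPosPart n (closedBall x₀ R) u du M) :
    ∫⁻ x in closedBall x₀ R ∩ {x | M < u x}, ‖du x‖ₑ ^ n ≤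
      ENNReal.ofReal (Q + 1) *
        ∫⁻ x in closedBall x₀ R ∩ {x | M < u x}, ENNReal.ofReal (G x) := by
  set B := closedBall x₀ R
  have hUB : ball x₀ R ⊆ B := ball_subset_closedBall
  refine ENNReal.le_of_forall_pos_le_add fun ε hε _ => ?_
  obtain ⟨δ, hδ, hsmall⟩ := exists_pos_setLIntegral_lt_of_measure_lt
    (lintegral_enorm_pow_ne_top_of_memLp hn hdup) (ENNReal.coe_ne_zero.2 hε.ne')
  obtain ⟨D, hDU, hD, hDi, hcov, hDδ, hDM⟩ := h.isWeakGradOn.exists_sublevel_cover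
    (Nat.one_le_iff_ne_zero.2 hn) isOpen_ball measure_ball_lt_top.ne (hUB.trans hB) hum
    (hu.mono_set hUB) (hdu.mono_set hUB) (hdup.mono_measure (Measure.restrict_mono hUB le_rfl)) M
    hδ.ne'
  have hDB : D ∩ {x | M < u x} ⊆ B := inter_subset_left.trans (hDU.trans hUB)
  calc ∫⁻ x in B ∩ {x | M < u x}, ‖du x‖ₑ ^ n
      ≤ ∫⁻ x in ((B \ D) ∩ {x | M < u x}) ∪ (D ∩ {x | M < u x}), ‖du x‖ₑ ^ n := by
        rw [← union_inter_distrib_right]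
        exact lintegral_mono_set (inter_subset_inter_left _ (subset_sdiff_union B D))
    _ ≤ (∫⁻ x in (B \ D) ∩ {x | M < u x}, ‖du x‖ₑ ^ n) + ∫⁻ x in D ∩ {x | M < u x}, ‖du x‖ₑ ^ n :=
        lintegral_union_le _ _ _
    _ ≤ ENNReal.ofReal (Q + 1) * (∫⁻ x in B ∩ {x | M < u x}, ENNReal.ofReal (G x)) + ε := by
        refine add_le_add ((h.lintegral_le_of_sublevel_cover hf hn hQ hum hR hB hu hdu hnull hBM hD
          (hDU.trans hUB) hDi hcov hDM).trans ?_) ?_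
        · gcongr
          exact sdiff_subset
        · have := hsmall (D ∩ {x | M < u x}) ((Measure.restrict_apply_le _ _).trans_lt hDδ)
          rw [Measure.restrict_restrict (hD.inter (measurableSet_lt measurable_const hum)),
            inter_eq_self_of_subset_left hDB] at this
          exact this.le

lemma lintegral_superlevel_le (h : IsQMinimizer n Ω f Q u du)
    (hf : HasPowerGrowth n (volume.restrict Ω) f G) (hn : n ≠ 0) (hQ : 0 ≤ Q) (hum : Measurable u)
    (hR : R ≠ 0) (hB : closedBall x₀ R ⊆ Ω) (hu : IntegrableOn u (closedBall x₀ R))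
    (hdu : IntegrableOn du (closedBall x₀ R))
    (hdup : MemLp du n (volume.restrict (closedBall x₀ R)))
    (hBM : ∀ M, M₀ < M → HasWeakGradPosPart n (closedBall x₀ R) u du M) (hM : M₀ ≤ M) :
    ∫⁻ x in closedBall x₀ R ∩ {x | M < u x}, ‖du x‖ₑ ^ n ≤
      ENNReal.ofReal (Q + 1) *
        ∫⁻ x in closedBall x₀ R ∩ {x | M < u x}, ENNReal.ofReal (G x) := by
  set B := closedBall x₀ R
  have hdense : Dense {t : ℝ | 0 < volume {x | u x = t}}ᶜ :=
    (Measure.countable_meas_level_set_pos (μ := volume) hum).dense_compl ℝ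
  obtain ⟨s, hs_anti, hs, hs_lim⟩ := hdense.exists_seq_strictAnti_tendsto M
  have hunion : B ∩ {x | M < u x} = ⋃ k, B ∩ {x | s k < u x} := by
    rw [← inter_iUnion]
    congr 1
    ext x
    rw [mem_iUnion]
    exact ⟨fun hx => (hs_lim.eventually_lt_const hx).exists,
      fun ⟨k, hk⟩ => lt_trans (hs k).1 hk.out⟩
  have hdir : Directed (· ⊆ ·) fun k => B ∩ {x | s k < u x} :=
    Monotone.directed_le fun i j hij => inter_subset_inter_right _
      fun x (hx : s i < u x) => (hs_anti.antitone hij).trans_lt hx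
  rw [hunion, setLIntegral_iUnion_of_directed _ hdir]
  refine iSup_le fun k => (h.lintegral_superlevel_le_of_null hf hn hQ hum hR hB hu hdu hdup ?_
    (hBM _ (hM.trans_lt (hs k).1))).trans ?_
  · simpa using (hs k).2
  · gcongr
    exact subset_iUnion (fun k => B ∩ {x | s k < u x}) k

end IsQMinimizer

end QMinimizer

/-! ### Sobolev decay of superlevel sets -/

section Sobolev

variable {n : ℕ} {v : EuclideanSpace ℝ (Fin n) → ℝ}
  {dv : EuclideanSpace ℝ (Fin n) → EuclideanSpace ℝ (Fin n)} {p : ℝ}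

namespace IsWeakGradOn

lemma exists_seq_contDiff_tendsto_ae (hw : IsWeakGradOn n univ v dv) (hv : Integrable v)
    (hdv : Integrable dv) (hvc : HasCompactSupport v) :
    ∃ w : ℕ → EuclideanSpace ℝ (Fin n) → ℝ,
      (∀ k, ContDiff ℝ 1 (w k) ∧ HasCompactSupport (w k) ∧
        ∫⁻ x, ‖fderiv ℝ (w k) x‖ₑ ≤ (∫⁻ x, ‖dv x‖ₑ) + (k : ℝ≥0∞)⁻¹) ∧
      ∀ᵐ x, Tendsto (fun k => w k x) atTop (𝓝 (v x)) := by
  have hε (k : ℕ) : (k : ℝ≥0∞)⁻¹ ≠ 0 := ENNReal.inv_ne_zero.2 (ENNReal.natCast_ne_top k)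
  choose w hw hwc hwv hdw using fun k : ℕ => hw.exists_contDiff_approx MeasurableSet.univ
    (subset_refl univ) hv.integrableOn hdv.integrableOn le_rfl ENNReal.one_ne_top
    (by simpa using memLp_one_iff_integrable.2 hdv) MeasurableSet.univ one_pos
    (fun x _ => subset_univ _) (hε k)
  simp only [Measure.restrict_univ] at hwv hdw
  have hgrad (k : ℕ) : ∫⁻ x, ‖fderiv ℝ (w k) x‖ₑ ≤ (∫⁻ x, ‖dv x‖ₑ) + (k : ℝ≥0∞)⁻¹ := by
    calc ∫⁻ x, ‖fderiv ℝ (w k) x‖ₑ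
        ≤ ∫⁻ x, (‖dv x‖ₑ + ‖fderiv ℝ (w k) x - innerSL ℝ (dv x)‖ₑ) := by
          refine lintegral_mono fun x => ?_
          have hnorm : ‖innerSL ℝ (dv x)‖ₑ = ‖dv x‖ₑ := by
            rw [← ofReal_norm, ← ofReal_norm, innerSL_apply_norm]
          rw [← hnorm]
          simpa only [add_sub_cancel] using
            enorm_add_le (innerSL ℝ (dv x)) (fderiv ℝ (w k) x - innerSL ℝ (dv x))
      _ = (∫⁻ x, ‖dv x‖ₑ) + ∫⁻ x, ‖fderiv ℝ (w k) x - innerSL ℝ (dv x)‖ₑ :=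
          lintegral_add_left' hdv.aestronglyMeasurable.enorm _
      _ ≤ (∫⁻ x, ‖dv x‖ₑ) + (k : ℝ≥0∞)⁻¹ := by
          gcongr
          exact eLpNorm_one_eq_lintegral_enorm.symm.trans_le (hdw k)
  obtain ⟨φ, hφ, hae⟩ := (tendstoInMeasure_of_tendsto_eLpNorm one_ne_zero
    (fun k => (hw k).continuous.aestronglyMeasurable) hv.aestronglyMeasurable
    (tendsto_of_tendsto_of_tendsto_of_le_of_le tendsto_const_nhds
      ENNReal.tendsto_inv_nat_nhds_zero (fun _ => zero_le) hwv)).exists_seq_tendsto_ae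
  refine ⟨fun k => w (φ k), fun k => ⟨hw _, hwc _ hvc, (hgrad _).trans ?_⟩, hae⟩
  gcongr
  exact hφ.le_apply

lemma lintegral_enorm_rpow_le (hp : (n : ℝ).HolderConjugate p) (hw : IsWeakGradOn n univ v dv)
    (hv : Integrable v) (hdv : Integrable dv) (hvc : HasCompactSupport v) :
    ∫⁻ x, ‖v x‖ₑ ^ p ≤ lintegralPowLePowLIntegralFDerivConst
      (volume : Measure (EuclideanSpace ℝ (Fin n))) p * (∫⁻ x, ‖dv x‖ₑ) ^ p := by
  obtain ⟨w, hw, hae⟩ := hw.exists_seq_contDiff_tendsto_ae hv hdv hvc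
  set C := lintegralPowLePowLIntegralFDerivConst (volume : Measure (EuclideanSpace ℝ (Fin n))) p
  have hlim : Tendsto (fun k : ℕ => (C : ℝ≥0∞) * ((∫⁻ x, ‖dv x‖ₑ) + (k : ℝ≥0∞)⁻¹) ^ p) atTop
      (𝓝 (C * (∫⁻ x, ‖dv x‖ₑ) ^ p)) := by
    have hadd := ENNReal.tendsto_inv_nat_nhds_zero.const_add (∫⁻ x, ‖dv x‖ₑ)
    rw [add_zero] at hadd
    exact ENNReal.Tendsto.const_mul ((ENNReal.continuous_rpow_const.tendsto _).comp hadd)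
      (Or.inr ENNReal.coe_ne_top)
  calc ∫⁻ x, ‖v x‖ₑ ^ p
      ≤ ∫⁻ x, liminf (fun k => ‖w k x‖ₑ ^ p) atTop :=
        lintegral_mono_ae <| hae.mono fun x hx =>
          ((ENNReal.continuous_rpow_const.tendsto _).comp hx.enorm).liminf_eq.ge
    _ ≤ liminf (fun k => ∫⁻ x, ‖w k x‖ₑ ^ p) atTop :=
        lintegral_liminf_le fun k => (hw k).1.continuous.enorm.measurable.pow_const _
    _ ≤ liminf (fun k : ℕ => (C : ℝ≥0∞) * ((∫⁻ x, ‖dv x‖ₑ) + (k : ℝ≥0∞)⁻¹) ^ p) atTop := by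
        refine liminf_le_liminf (Eventually.of_forall fun k => ?_)
        refine (lintegral_pow_le_pow_lintegral_fderiv volume (hw k).1 (hw k).2.1
          (by rwa [finrank_euclideanSpace_fin])).trans ?_
        gcongr
        exacts [hp.symm.nonneg, (hw k).2.2]
    _ = C * (∫⁻ x, ‖dv x‖ₑ) ^ p := hlim.liminf_eq

lemma mul_measure_rpow_le (hp : (n : ℝ).HolderConjugate p) (hw : IsWeakGradOn n univ v dv)
    (hv : Integrable v) (hdv : Integrable dv) (hvc : HasCompactSupport v) (τ : ℝ≥0∞) :
    τ * volume {x | τ ≤ ‖v x‖ₑ} ^ p⁻¹ ≤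
      (lintegralPowLePowLIntegralFDerivConst (volume : Measure (EuclideanSpace ℝ (Fin n))) p :
        ℝ≥0∞) ^ p⁻¹ * ∫⁻ x, ‖dv x‖ₑ := by
  have hp0 : 0 < p := hp.symm.pos
  have hset : {x | τ ≤ ‖v x‖ₑ} = {x | τ ^ p ≤ ‖v x‖ₑ ^ p} := by
    simp only [ENNReal.rpow_le_rpow_iff hp0]
  have hcheb : τ ^ p * volume {x | τ ≤ ‖v x‖ₑ} ≤ ∫⁻ x, ‖v x‖ₑ ^ p := by
    rw [hset]
    exact mul_meas_ge_le_lintegral₀ (hv.aestronglyMeasurable.enorm.pow_const _) _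
  have hroot := ENNReal.rpow_le_rpow (hcheb.trans (hw.lintegral_enorm_rpow_le hp hv hdv hvc))
    (inv_nonneg.2 hp0.le)
  rwa [ENNReal.mul_rpow_of_nonneg _ _ (inv_nonneg.2 hp0.le),
    ENNReal.mul_rpow_of_nonneg _ _ (inv_nonneg.2 hp0.le), ENNReal.rpow_rpow_inv hp0.ne',
    ENNReal.rpow_rpow_inv hp0.ne'] at hroot

end IsWeakGradOn

lemma setLIntegral_enorm_le_rpow_mul_measure_rpow {α F : Type*} [MeasurableSpace α] {μ : Measure α}
    [NormedAddCommGroup F] (hp : (n : ℝ).HolderConjugate p) {f : α → F} {S : Set α}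
    (hf : AEStronglyMeasurable f (μ.restrict S)) :
    ∫⁻ x in S, ‖f x‖ₑ ∂μ ≤ (∫⁻ x in S, ‖f x‖ₑ ^ n ∂μ) ^ (n : ℝ)⁻¹ * μ S ^ p⁻¹ := by
  simpa using ENNReal.lintegral_mul_le_Lp_mul_Lq (μ.restrict S) hp hf.enorm
    (aemeasurable_const (b := (1 : ℝ≥0∞)))

variable {B : Set (EuclideanSpace ℝ (Fin n))} {u : EuclideanSpace ℝ (Fin n) → ℝ}
  {du : EuclideanSpace ℝ (Fin n) → EuclideanSpace ℝ (Fin n)} {a b : ℝ}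

namespace HasWeakGradPosPart

lemma mul_measure_superlevel_rpow_le_lintegral (hp : (n : ℝ).HolderConjugate p)
    (ha : HasWeakGradPosPart n B u du a) (hb : HasWeakGradPosPart n B u du b) (hab : a ≤ b)
    (hB : MeasurableSet B) (hBb : Bornology.IsBounded B) (hum : Measurable u)
    (hu : IntegrableOn u B) (hdu : IntegrableOn du B) :
    ENNReal.ofReal (b - a) * volume (B ∩ {x | b < u x}) ^ p⁻¹ ≤
      (lintegralPowLePowLIntegralFDerivConst (volume : Measure (EuclideanSpace ℝ (Fin n))) p :
        ℝ≥0∞) ^ p⁻¹ * ∫⁻ x in (B ∩ {x | a < u x}) \ (B ∩ {x | b < u x}), ‖du x‖ₑ := by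
  have hfin : volume B ≠ ⊤ := hBb.measure_lt_top.ne
  have hui := integrable_indicator_posPart hB hfin hu
  have hdui := integrable_indicator_superlevel hB hum hdu
  have hsupp : HasCompactSupport fun x =>
      B.indicator (fun x => max (u x - a) 0) x - B.indicator (fun x => max (u x - b) 0) x :=
    HasCompactSupport.intro hBb.isCompact_closure fun x hx => by
      simp [indicator_of_notMem fun h => hx (subset_closure h)]
  refine le_trans ?_ ((IsWeakGradOn.mul_measure_rpow_le hp (IsWeakGradOn.sub ha hb
    (hui a).integrableOn (hui b).integrableOn (hdui a).integrableOn (hdui b).integrableOn)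
    ((hui a).sub (hui b)) ((hdui a).sub (hdui b)) hsupp (ENNReal.ofReal (b - a))).trans_eq ?_)
  · gcongr
    · exact hp.symm.inv_nonneg
    rintro x ⟨hxB, hx : b < u x⟩
    rw [mem_ofPred_eq, indicator_of_mem hxB, indicator_of_mem hxB, max_eq_left (by linarith),
      max_eq_left (by linarith), sub_sub_sub_cancel_left, Real.enorm_eq_ofReal (by linarith)]
  · have hlev (t : ℝ) : MeasurableSet (B ∩ {x | t < u x}) :=
      hB.inter (measurableSet_lt measurable_const hum)
    rw [← lintegral_indicator ((hlev a).diff (hlev b))]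
    congr 2 with x
    have hsub : B ∩ {x | b < u x} ⊆ B ∩ {x | a < u x} := fun x hx => ⟨hx.1, hab.trans_lt hx.2⟩
    rw [← Pi.sub_apply, ← indicator_sdiff hsub,
      enorm_indicator_eq_indicator_enorm]

lemma mul_measure_superlevel_rpow_le (hp : (n : ℝ).HolderConjugate p)
    (ha : HasWeakGradPosPart n B u du a) (hb : HasWeakGradPosPart n B u du b) (hab : a ≤ b)
    (hB : MeasurableSet B) (hBb : Bornology.IsBounded B) (hum : Measurable u)
    (hu : IntegrableOn u B) (hdu : IntegrableOn du B) :
    ENNReal.ofReal (b - a) * volume (B ∩ {x | b < u x}) ^ p⁻¹ ≤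
      (lintegralPowLePowLIntegralFDerivConst (volume : Measure (EuclideanSpace ℝ (Fin n))) p :
        ℝ≥0∞) ^ p⁻¹ *
        ((∫⁻ x in (B ∩ {x | a < u x}) \ (B ∩ {x | b < u x}), ‖du x‖ₑ ^ n) ^ (n : ℝ)⁻¹ *
          volume (B ∩ {x | a < u x}) ^ p⁻¹) := by
  refine (ha.mul_measure_superlevel_rpow_le_lintegral hp hb hab hB hBb hum hu hdu).trans ?_
  gcongr
  refine (setLIntegral_enorm_le_rpow_mul_measure_rpow hp
    (hdu.mono_set (sdiff_subset.trans inter_subset_left)).aestronglyMeasurable).trans ?_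
  gcongr
  exacts [hp.symm.inv_nonneg, sdiff_subset]

end HasWeakGradPosPart

end Sobolev

/-! ### Vanishing of superlevel sets from energy decay -/

section SliceDecay

lemma prod_le_pow_sum_div_card {ι : Type*} {s : Finset ι} (hs : s.Nonempty) {d : ι → ℝ}
    (hd : ∀ j ∈ s, 0 ≤ d j) : ∏ j ∈ s, d j ≤ ((∑ j ∈ s, d j) / s.card) ^ s.card := by
  have hmean := Real.geom_mean_le_arith_mean s (fun _ => 1) d (fun _ _ => zero_le_one)
    (by simpa using hs) hd
  simp only [Real.rpow_one, Finset.sum_const, nsmul_eq_mul, mul_one, one_mul] at hmean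
  have hprod := Finset.prod_nonneg hd
  calc ∏ j ∈ s, d j = ((∏ j ∈ s, d j) ^ (s.card : ℝ)⁻¹) ^ s.card :=
        (Real.rpow_inv_natCast_pow hprod hs.card_ne_zero).symm
    _ ≤ ((∑ j ∈ s, d j) / s.card) ^ s.card := by gcongr

lemma pow_mul_le_prod_mul {R : Type*} [CommRing R] [LinearOrder R] [IsStrictOrderedRing R]
    {θ c : ℕ → R} {τ : R} (hτ : 0 ≤ τ) (hc : ∀ k, 0 ≤ c k)
    (h : ∀ k, τ * θ (k + 1) ≤ c k * θ k) (k : ℕ) :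
    τ ^ k * θ k ≤ (∏ j ∈ Finset.range k, c j) * θ 0 := by
  induction k with
  | zero => simp
  | succ k ih =>
    calc τ ^ (k + 1) * θ (k + 1) = τ ^ k * (τ * θ (k + 1)) := by ring
      _ ≤ τ ^ k * (c k * θ k) := mul_le_mul_of_nonneg_left (h k) (pow_nonneg hτ k)
      _ = c k * (τ ^ k * θ k) := by ring
      _ ≤ c k * ((∏ j ∈ Finset.range k, c j) * θ 0) := mul_le_mul_of_nonneg_left ih (hc k)
      _ = (∏ j ∈ Finset.range (k + 1), c j) * θ 0 := by rw [Finset.prod_range_succ]; ring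

variable {e m : ℝ → ℝ} {C α γ a E : ℝ} {N : ℕ}

-- Cut `[a, a + Nτ]` into `N` slices: the energies of the slices add up to at most `E`, so by
-- AM–GM their product is at most `(E / N) ^ N`, which is why `τ = 2C(E / N)^α` gains `2⁻ᴺ`.
lemma le_half_pow_mul_of_slice_decay {θ : ℝ → ℝ} (hN : N ≠ 0) (hC : 0 < C) (hα : 0 ≤ α)
    (hE : 0 < E) (hθ : 0 ≤ θ a) (he : ∀ t, 0 ≤ e t) (hanti : Antitone e) (hea : e a ≤ E)
    (h : ∀ s t, a ≤ s → s ≤ t → (t - s) * θ t ≤ C * ((e s - e t) ^ α * θ s)) :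
    θ (a + N * (2 * C * (E / N) ^ α)) ≤ (1 / 2) ^ N * θ a := by
  set ρ := (E / N) ^ α with hρ
  set τ := 2 * C * ρ with hτ
  have hτ0 : 0 < τ :=
    mul_pos (by positivity) (Real.rpow_pos_of_pos (div_pos hE (by positivity)) α)
  let s (j : ℕ) : ℝ := a + j * τ
  have hs0 : s 0 = a := by simp [s]
  have hs_sub (j : ℕ) : s (j + 1) - s j = τ := by simp only [s]; push_cast; ring
  have hs_le (j : ℕ) : s j ≤ s (j + 1) := by linarith [hs_sub j]
  have hd (j : ℕ) : 0 ≤ e (s j) - e (s (j + 1)) := sub_nonneg.2 (hanti (hs_le j))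
  have hslice (j : ℕ) : τ * θ (s (j + 1)) ≤ C * (e (s j) - e (s (j + 1))) ^ α * θ (s j) := by
    rw [← hs_sub j, mul_assoc]
    exact h _ _ (le_add_of_nonneg_right (by positivity)) (hs_le j)
  have hprod : ∏ j ∈ Finset.range N, (e (s j) - e (s (j + 1))) ≤ (E / N) ^ N := by
    refine (prod_le_pow_sum_div_card (Finset.nonempty_range_iff.2 hN) fun j _ => hd j).trans ?_
    have hsum : ∑ j ∈ Finset.range N, (e (s j) - e (s (j + 1))) ≤ E := by
      rw [Finset.sum_range_sub' fun j => e (s j), hs0]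
      linarith [he (s N)]
    rw [Finset.card_range]
    gcongr
    exact div_nonneg (Finset.sum_nonneg fun j _ => hd j) (by positivity)
  have hprod_rpow : ∏ j ∈ Finset.range N, C * (e (s j) - e (s (j + 1))) ^ α ≤ (C * ρ) ^ N := by
    rw [Finset.prod_mul_distrib, Finset.prod_const, Finset.card_range,
      Real.finsetProd_rpow _ _ fun j _ => hd j, mul_pow, hρ, Real.rpow_pow_comm (by positivity)]
    gcongr
    exact Finset.prod_nonneg fun j _ => hd j
  have hfinal : τ ^ N * θ (s N) ≤ τ ^ N * ((1 / 2) ^ N * θ a) :=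
    calc τ ^ N * θ (s N) ≤ (∏ j ∈ Finset.range N, C * (e (s j) - e (s (j + 1))) ^ α) * θ (s 0) :=
          pow_mul_le_prod_mul (θ := fun k => θ (s k)) hτ0.le
            (fun j => mul_nonneg hC.le (Real.rpow_nonneg (hd j) α)) hslice N
      _ ≤ (C * ρ) ^ N * θ a := by
          rw [hs0]
          gcongr
      _ = τ ^ N * ((1 / 2) ^ N * θ a) := by
          rw [← mul_assoc, ← mul_pow, hτ]
          ring_nf
  exact le_of_mul_le_mul_left hfinal (by positivity)

lemma le_half_pow_two_mul_of_slice_decay (hN : N ≠ 0) (hC : 0 < C) (hα : 0 ≤ α)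
    (hγ : 0 < γ) (hγ_le : γ ≤ 1) (hE : 0 < E) (hm : ∀ t, 0 ≤ m t) (he : ∀ t, 0 ≤ e t)
    (hanti : Antitone e) (hea : e a ≤ E)
    (h : ∀ s t, a ≤ s → s ≤ t → (t - s) * m t ^ γ ≤ C * ((e s - e t) ^ α * m s ^ γ))
    (hma : m a ≤ (1 / 2) ^ N) :
    m (a + N * (2 * C * (E / N) ^ α)) ≤ (1 / 2) ^ (2 * N) := by
  set b := a + N * (2 * C * (E / N) ^ α)
  have hrpow : m b ^ γ ≤ ((1 / 2) ^ N * m a) ^ γ := by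
    refine (le_half_pow_mul_of_slice_decay (θ := fun t => m t ^ γ) hN hC hα hE
      (Real.rpow_nonneg (hm a) γ) he hanti hea h).trans ?_
    rw [Real.mul_rpow (by positivity) (hm a)]
    refine mul_le_mul_of_nonneg_right ?_ (Real.rpow_nonneg (hm a) γ)
    exact Real.self_le_rpow_of_le_one (by positivity) (pow_le_one₀ (by norm_num) (by norm_num))
      hγ_le
  calc m b ≤ (1 / 2) ^ N * m a :=
        (Real.rpow_le_rpow_iff (hm b) (mul_nonneg (by positivity) (hm a)) hγ).1 hrpow
    _ ≤ (1 / 2) ^ N * (1 / 2) ^ N := by gcongr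
    _ = (1 / 2) ^ (2 * N) := by ring

lemma exists_eq_zero_of_slice_decay {E : ℕ → ℝ} {M₀ : ℝ} (hC : 0 < C) (hα : 0 ≤ α)
    (hγ : 0 < γ) (hγ_le : γ ≤ 1) (hm : ∀ t, 0 ≤ m t) (hm_anti : Antitone m) (he : ∀ t, 0 ≤ e t)
    (he_anti : Antitone e)
    (hslice : ∀ s t, M₀ < s → s ≤ t → (t - s) * m t ^ γ ≤ C * ((e s - e t) ^ α * m s ^ γ))
    (hE : ∀ N, 0 < E N) (henergy : ∀ t N, M₀ < t → m t ≤ (1 / 2) ^ N → e t ≤ E N)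
    (hsum : Summable fun k : ℕ => (2 : ℝ) ^ k * (E (2 ^ k) / 2 ^ k) ^ α)
    (hstart : ∃ a, M₀ < a ∧ m a ≤ 1 / 2) : ∃ M, m M = 0 := by
  obtain ⟨a₀, ha₀, hma₀⟩ := hstart
  let δ (k : ℕ) : ℝ := 2 * C * (2 ^ k * (E (2 ^ k) / 2 ^ k) ^ α)
  have hδ (k : ℕ) : 0 ≤ δ k := by have := hE (2 ^ k); positivity
  have hδ_sum : Summable δ := hsum.mul_left _
  let a (k : ℕ) : ℝ := a₀ + ∑ j ∈ Finset.range k, δ j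
  have ha (k : ℕ) : M₀ < a k :=
    ha₀.trans_le (le_add_of_nonneg_right (Finset.sum_nonneg fun j _ => hδ j))
  have hma (k : ℕ) : m (a k) ≤ (1 / 2) ^ 2 ^ k := by
    induction k with
    | zero => simpa [a] using hma₀
    | succ k ih =>
      have hstep := le_half_pow_two_mul_of_slice_decay (N := 2 ^ k) (by positivity) hC hα hγ
        hγ_le (hE (2 ^ k)) hm he he_anti (henergy _ _ (ha k) ih)
        (fun s t hs => hslice s t ((ha k).trans_le hs)) ih
      have ha_succ : a (k + 1) =
          a k + (2 ^ k : ℕ) * (2 * C * (E (2 ^ k) / (2 ^ k : ℕ)) ^ α) := by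
        simp only [a, δ, Finset.sum_range_succ]
        push_cast
        ring
      rwa [ha_succ, pow_succ']
  have hlim : Tendsto (fun k : ℕ => ((1 : ℝ) / 2) ^ 2 ^ k) atTop (𝓝 0) :=
    (tendsto_pow_atTop_nhds_zero_of_lt_one (by norm_num) (by norm_num)).comp
      (tendsto_pow_atTop_atTop_of_one_lt one_lt_two)
  refine ⟨a₀ + ∑' k, δ k, le_antisymm (ge_of_tendsto' hlim fun k => ?_) (hm _)⟩
  refine (hm_anti ?_).trans (hma k)
  exact add_le_add_right (hδ_sum.sum_le_tsum _ fun j _ => hδ j) _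

end SliceDecay

/-! ### Dyadic levels -/

lemma subset_union_slabs {X : Type*} (h : X → ℝ) (σ : ℕ → ℝ) (A : Set X) (N : ℕ) :
    A ⊆ ((A ∩ {x | |h x| ≤ σ N}) ∪ ⋃ i, {x | N ≤ i ∧ σ i < |h x| ∧ |h x| ≤ σ (i + 1)}) ∪
      {x | ∀ i, N ≤ i → σ i < |h x|} := by
  intro x hxA
  by_contra hx
  simp only [mem_union, mem_iUnion, not_or, not_exists] at hx
  obtain ⟨⟨hlow, hslab⟩, htop⟩ := hx
  refine htop fun i hi => ?_
  induction i, hi using Nat.le_induction with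
  | base => exact not_le.1 fun hle => hlow ⟨hxA, hle⟩
  | succ i hi ih => exact not_le.1 fun hle => hslab i ⟨hi, ih, hle⟩

section Levels

variable {X : Type*} [MeasurableSpace X] {ν : Measure X} {n : ℕ} {γ : ℝ} {h : X → ℝ} {σ : ℕ → ℝ}

/-- The `i`-th term `2^{-i/n} σᵢ` of the dyadic series that discretizes the `L^{n,1}` norm of a
function whose rearrangement at `2^{-i}` is comparable to `σᵢ`. -/
def levelTerm (n : ℕ) (σ : ℕ → ℝ) (i : ℕ) : ℝ≥0∞ :=
  ENNReal.ofReal (((1 / 2) ^ i) ^ (1 / (n : ℝ)) * σ i)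

/-- The tail `∑_{i ≥ N} 2^{-i/n} σᵢ` of the dyadic series. -/
def levelTail (n : ℕ) (σ : ℕ → ℝ) (N : ℕ) : ℝ≥0∞ :=
  ∑' i, if N ≤ i then levelTerm n σ i else 0

/-- `σ` is a sequence of levels witnessing that `h` belongs to `L^{n,1}(log L)^γ`: the set
`{|h| > σᵢ}` has measure at most `2^{-i}`, and the dyadic series of `σ` converges with the weights
`(1 + i)^γ`, which play the role of `(1 + |log t|)^γ` at `t = 2^{-i}`. -/
structure IsLevelSequence (n : ℕ) (γ : ℝ) (ν : Measure X) (h : X → ℝ) (σ : ℕ → ℝ) : Prop where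
  pos (i : ℕ) : 0 < σ i
  measure_le (i : ℕ) : ν {x | σ i < |h x|} ≤ ENNReal.ofReal ((1 / 2) ^ i)
  tsum_ne_top : ∑' i : ℕ, ENNReal.ofReal ((1 + (i : ℝ)) ^ γ) * levelTerm n σ i ≠ ⊤

lemma levelTerm_pow (hn : n ≠ 0) (i : ℕ) :
    levelTerm n σ i ^ n = ENNReal.ofReal (σ i) ^ n * ENNReal.ofReal ((1 / 2) ^ i) := by
  rw [levelTerm, ENNReal.ofReal_mul (by positivity), mul_pow, mul_comm,
    ← ENNReal.ofReal_pow (p := ((1 / 2) ^ i) ^ (1 / (n : ℝ))) (by positivity), one_div (n : ℝ),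
    Real.rpow_inv_natCast_pow (by positivity) hn]

lemma sum_range_log_rpow_pow_le (hγ : 0 < γ) {i : ℕ} (hi : i ≠ 0) :
    ∑ k ∈ Finset.range (Nat.log 2 i + 1), ((2 : ℝ) ^ γ) ^ k ≤
      (2 : ℝ) ^ γ / ((2 : ℝ) ^ γ - 1) * (1 + (i : ℝ)) ^ γ := by
  set r := (2 : ℝ) ^ γ with hr
  have hr1 : 1 < r := Real.one_lt_rpow one_lt_two hγ
  have hpow : r ^ Nat.log 2 i ≤ (1 + (i : ℝ)) ^ γ := by
    have hlog : (2 : ℝ) ^ Nat.log 2 i ≤ i := by exact_mod_cast Nat.pow_log_le_self 2 hi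
    rw [hr, Real.rpow_pow_comm (by norm_num)]
    gcongr
    linarith
  rw [geom_sum_eq hr1.ne', div_mul_eq_mul_div, pow_succ']
  refine div_le_div_of_nonneg_right ?_ (by linarith)
  linarith [mul_le_mul_of_nonneg_left hpow (by linarith : 0 ≤ r)]

lemma tsum_rpow_pow_mul_levelTail_le (hγ : 0 < γ) :
    ∑' k : ℕ, ENNReal.ofReal (((2 : ℝ) ^ γ) ^ k) * levelTail n σ (2 ^ k) ≤
      ENNReal.ofReal ((2 : ℝ) ^ γ / ((2 : ℝ) ^ γ - 1)) *
        ∑' i : ℕ, ENNReal.ofReal ((1 + (i : ℝ)) ^ γ) * levelTerm n σ i := by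
  have hr1 : 1 < (2 : ℝ) ^ γ := Real.one_lt_rpow one_lt_two hγ
  simp_rw [levelTail, ← ENNReal.tsum_mul_left]
  rw [ENNReal.tsum_comm]
  refine ENNReal.tsum_le_tsum fun i => ?_
  simp_rw [mul_ite, mul_zero, ← ite_zero_mul]
  rw [ENNReal.tsum_mul_right, ← mul_assoc, ← ENNReal.ofReal_mul (by
    exact div_nonneg (by positivity) (by linarith))]
  gcongr
  rcases eq_or_ne i 0 with rfl | hi
  · simp
  have hlog (k : ℕ) (hk : k ∉ Finset.range (Nat.log 2 i + 1)) : ¬2 ^ k ≤ i := fun h =>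
    hk (Finset.mem_range.2 (Nat.lt_succ_of_le (Nat.le_log_of_pow_le one_lt_two h)))
  rw [tsum_eq_sum fun k hk => if_neg (hlog k hk)]
  calc ∑ k ∈ Finset.range (Nat.log 2 i + 1),
        (if 2 ^ k ≤ i then ENNReal.ofReal (((2 : ℝ) ^ γ) ^ k) else 0)
      ≤ ∑ k ∈ Finset.range (Nat.log 2 i + 1), ENNReal.ofReal (((2 : ℝ) ^ γ) ^ k) :=
        Finset.sum_le_sum fun k _ => by split_ifs <;> simp
    _ = ENNReal.ofReal (∑ k ∈ Finset.range (Nat.log 2 i + 1), ((2 : ℝ) ^ γ) ^ k) :=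
        (ENNReal.ofReal_sum_of_nonneg fun k _ => by positivity).symm
    _ ≤ _ := ENNReal.ofReal_le_ofReal (sum_range_log_rpow_pow_le hγ hi)

lemma tsum_pow_le_pow_tsum {ι : Type*} (a : ι → ℝ≥0∞) (hn : n ≠ 0) :
    ∑' i, a i ^ n ≤ (∑' i, a i) ^ n := by
  obtain ⟨m, rfl⟩ := Nat.exists_eq_add_one_of_ne_zero hn
  simp_rw [pow_succ _ m]
  calc ∑' i, a i ^ m * a i ≤ ∑' i, (∑' i, a i) ^ m * a i := by
        gcongr with i
        exact ENNReal.le_tsum i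
    _ = (∑' i, a i) ^ m * ∑' i, a i := ENNReal.tsum_mul_left

lemma setLIntegral_enorm_pow_le_of_forall_abs_le {S : Set X} {c : ℝ} (hS : ∀ x ∈ S, |h x| ≤ c) :
    ∫⁻ x in S, ‖h x‖ₑ ^ n ∂ν ≤ ENNReal.ofReal c ^ n * ν S := by
  rw [← setLIntegral_const]
  refine setLIntegral_mono measurable_const fun x hx => ?_
  rw [Real.enorm_eq_ofReal_abs]
  gcongr
  exact hS x hx

namespace IsLevelSequence

lemma measure_forall_lt_eq_zero (hσ : IsLevelSequence n γ ν h σ) (N : ℕ) :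
    ν {x | ∀ i, N ≤ i → σ i < |h x|} = 0 := by
  have hlim : Tendsto (fun i : ℕ => ENNReal.ofReal ((1 / 2) ^ i)) atTop (𝓝 0) := by
    simpa using ENNReal.tendsto_ofReal
      (tendsto_pow_atTop_nhds_zero_of_lt_one (by norm_num : (0 : ℝ) ≤ 1 / 2) (by norm_num))
  refine le_antisymm (ge_of_tendsto hlim ?_) zero_le
  filter_upwards [eventually_ge_atTop N] with i hi
  exact (measure_mono fun x (hx : ∀ i, N ≤ i → σ i < |h x|) => hx i hi).trans (hσ.measure_le i)

lemma setLIntegral_slab_le (hσ : IsLevelSequence n γ ν h σ) (hn : n ≠ 0) (i : ℕ) :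
    ∫⁻ x in {x | σ i < |h x| ∧ |h x| ≤ σ (i + 1)}, ‖h x‖ₑ ^ n ∂ν ≤
      2 * levelTerm n σ (i + 1) ^ n := by
  have hhalf : (2 : ℝ≥0∞) * ENNReal.ofReal ((1 / 2) ^ (i + 1)) = ENNReal.ofReal ((1 / 2) ^ i) := by
    rw [← ENNReal.ofReal_ofNat 2, ← ENNReal.ofReal_mul (by norm_num), pow_succ']
    ring_nf
  refine (setLIntegral_enorm_pow_le_of_forall_abs_le fun x hx => hx.out.2).trans ?_
  rw [levelTerm_pow hn, mul_left_comm, hhalf]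
  gcongr
  exact (measure_mono fun x hx => hx.out.1).trans (hσ.measure_le i)

lemma lintegral_enorm_pow_le (hσ : IsLevelSequence n γ ν h σ) (hn : n ≠ 0) {A : Set X} {N : ℕ}
    (hA : ν A ≤ ENNReal.ofReal ((1 / 2) ^ N)) :
    ∫⁻ x in A, ‖h x‖ₑ ^ n ∂ν ≤ 3 * levelTail n σ N ^ n := by
  let a (i : ℕ) : ℝ≥0∞ := if N ≤ i then levelTerm n σ i else 0
  let slab (i : ℕ) : Set X := {x | N ≤ i ∧ σ i < |h x| ∧ |h x| ≤ σ (i + 1)}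
  let top : Set X := {x | ∀ i, N ≤ i → σ i < |h x|}
  have hlow : ∫⁻ x in A ∩ {x | |h x| ≤ σ N}, ‖h x‖ₑ ^ n ∂ν ≤ a N ^ n := by
    refine (setLIntegral_enorm_pow_le_of_forall_abs_le fun x hx => hx.2).trans ?_
    rw [show a N = levelTerm n σ N from if_pos le_rfl, levelTerm_pow hn]
    gcongr
    exact (measure_mono inter_subset_left).trans hA
  have hslab (i : ℕ) : ∫⁻ x in slab i, ‖h x‖ₑ ^ n ∂ν ≤ 2 * a (i + 1) ^ n := by
    by_cases hi : N ≤ i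
    · rw [show a (i + 1) = levelTerm n σ (i + 1) from if_pos (hi.trans i.le_succ)]
      exact (lintegral_mono_set fun x hx => hx.out.2).trans (hσ.setLIntegral_slab_le hn i)
    · simp [slab, hi]
  calc ∫⁻ x in A, ‖h x‖ₑ ^ n ∂ν
      ≤ ∫⁻ x in ((A ∩ {x | |h x| ≤ σ N}) ∪ ⋃ i, slab i) ∪ top, ‖h x‖ₑ ^ n ∂ν :=
        lintegral_mono_set (subset_union_slabs h σ A N)
    _ ≤ (∫⁻ x in A ∩ {x | |h x| ≤ σ N}, ‖h x‖ₑ ^ n ∂ν) + (∫⁻ x in ⋃ i, slab i, ‖h x‖ₑ ^ n ∂ν)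
          + ∫⁻ x in top, ‖h x‖ₑ ^ n ∂ν :=
        (lintegral_union_le _ _ _).trans (add_le_add_left (lintegral_union_le _ _ _) _)
    _ ≤ a N ^ n + (∑' i, 2 * a (i + 1) ^ n) + 0 := by
        gcongr
        · exact (lintegral_iUnion_le _ _).trans (ENNReal.tsum_le_tsum hslab)
        · exact (setLIntegral_measure_zero _ _ (hσ.measure_forall_lt_eq_zero N)).le
    _ ≤ (∑' i, a i ^ n) + 2 * ∑' i, a i ^ n := by
        rw [add_zero, ENNReal.tsum_mul_left]
        gcongr ?_ + 2 * ?_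
        · exact ENNReal.le_tsum (f := fun i => a i ^ n) N
        · exact ENNReal.tsum_comp_le_tsum_of_injective (add_left_injective 1) fun i => a i ^ n
    _ = 3 * ∑' i, a i ^ n := by ring
    _ ≤ 3 * levelTail n σ N ^ n := by
        gcongr
        exact tsum_pow_le_pow_tsum a hn

lemma levelTail_ne_top (hσ : IsLevelSequence n γ ν h σ) (hγ : 0 ≤ γ) (N : ℕ) :
    levelTail n σ N ≠ ⊤ := by
  refine ne_top_of_le_ne_top hσ.tsum_ne_top (ENNReal.tsum_le_tsum fun i => ?_)
  split_ifs
  · exact le_mul_of_one_le_left zero_le (ENNReal.one_le_ofReal.2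
      (Real.one_le_rpow (le_add_of_nonneg_right i.cast_nonneg) hγ))
  · exact zero_le

lemma levelTail_pos (hσ : IsLevelSequence n γ ν h σ) (N : ℕ) : 0 < levelTail n σ N :=
  calc 0 < levelTerm n σ N := ENNReal.ofReal_pos.2 (mul_pos (by positivity) (hσ.pos N))
    _ = if N ≤ N then levelTerm n σ N else 0 := (if_pos le_rfl).symm
    _ ≤ levelTail n σ N := ENNReal.le_tsum (f := fun i => if N ≤ i then levelTerm n σ i else 0) N

lemma summable_rpow_pow_mul_levelTail (hσ : IsLevelSequence n γ ν h σ) (hγ : 0 < γ) :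
    Summable fun k : ℕ => ((2 : ℝ) ^ γ) ^ k * (levelTail n σ (2 ^ k)).toReal := by
  refine (ENNReal.summable_toReal (ne_top_of_le_ne_top (ENNReal.mul_ne_top ENNReal.ofReal_ne_top
    hσ.tsum_ne_top) (tsum_rpow_pow_mul_levelTail_le hγ))).congr fun k => ?_
  rw [ENNReal.toReal_mul, ENNReal.toReal_ofReal (by positivity)]

end IsLevelSequence

end Levels

/-! ### Level sequences from the Lorentz–Zygmund norm -/

lemma exists_measure_superlevel_le {X : Type*} [MeasurableSpace X] {ν : Measure X} {n : ℕ}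
    (hn : n ≠ 0) {h : X → ℝ} (hh : MemLp h n ν) {t : ℝ} (ht : 0 < t) :
    ∃ σ : ℝ, 0 < σ ∧ ν {x | σ < |h x|} ≤ ENNReal.ofReal t := by
  set I := ∫⁻ x, ‖h x‖ₑ ^ n ∂ν
  set s := 1 + I.toReal / t with hs
  have hs1 : 1 ≤ s := le_add_of_nonneg_right (by positivity)
  have hs0 : 0 < s := zero_lt_one.trans_le hs1
  refine ⟨s, hs0, (ENNReal.mul_le_mul_iff_right (ENNReal.ofReal_pos.2 hs0).ne'
    ENNReal.ofReal_ne_top).1 ?_⟩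
  calc ENNReal.ofReal s * ν {x | s < |h x|}
      ≤ ENNReal.ofReal s * ν {x | ENNReal.ofReal s ≤ ‖h x‖ₑ ^ n} := by
        gcongr with x
        intro hx
        have hle : ENNReal.ofReal s ≤ ‖h x‖ₑ := by
          rw [Real.enorm_eq_ofReal_abs]
          exact ENNReal.ofReal_le_ofReal hx.le
        exact hle.trans (le_self_pow₀ ((ENNReal.one_le_ofReal.2 hs1).trans hle) hn)
    _ ≤ I := mul_meas_ge_le_lintegral₀ (hh.1.aemeasurable.enorm.pow_const n) _
    _ = ENNReal.ofReal I.toReal :=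
        (ENNReal.ofReal_toReal (lintegral_enorm_pow_ne_top_of_memLp hn hh)).symm
    _ ≤ ENNReal.ofReal s * ENNReal.ofReal t := by
        rw [← ENNReal.ofReal_mul hs0.le, hs, add_mul, div_mul_cancel₀ _ ht.ne']
        exact ENNReal.ofReal_le_ofReal (by linarith)

section Rearrangement

variable {n : ℕ} {γ : ℝ} {h : EuclideanSpace ℝ (Fin n) → ℝ} {s t : ℝ}

lemma rearr_nonneg (n : ℕ) (h : EuclideanSpace ℝ (Fin n) → ℝ) (t : ℝ) : 0 ≤ rearr n h t :=
  Real.sInf_nonneg fun _ hσ => hσ.1.le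

lemma rearr_le_rearr (hs : ∃ σ : ℝ, 0 < σ ∧ volume {x | σ < |h x|} ≤ ENNReal.ofReal s)
    (hst : s ≤ t) : rearr n h t ≤ rearr n h s :=
  csInf_le_csInf ⟨0, fun _ hσ => hσ.1.le⟩ hs fun _ hσ =>
    ⟨hσ.1, hσ.2.trans (ENNReal.ofReal_le_ofReal hst)⟩

lemma measure_superlevel_le_of_rearr_lt
    (ht : ∃ σ : ℝ, 0 < σ ∧ volume {x | σ < |h x|} ≤ ENNReal.ofReal t) (hs : rearr n h t < s) :
    volume {x | s < |h x|} ≤ ENNReal.ofReal t := by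
  obtain ⟨σ, hσ, hσs⟩ := exists_lt_of_csInf_lt ht hs
  exact (measure_mono fun x (hx : s < |h x|) => hσs.trans hx).trans hσ.2

lemma one_add_natCast_le_two_mul_one_add_abs_log {i : ℕ} (ht : 0 < t) (hti : t ≤ (1 / 2) ^ i) :
    1 + (i : ℝ) ≤ 2 * (1 + |Real.log t|) := by
  have hlog : Real.log t ≤ -(i * Real.log 2) :=
    (Real.log_le_log ht hti).trans_eq (by rw [Real.log_pow, one_div, Real.log_inv, mul_neg])
  have hlog_two : (i : ℝ) * (1 / 2) ≤ i * Real.log 2 := by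
    gcongr
    linarith [Real.log_two_gt_d9]
  linarith [neg_abs_le (Real.log t)]

lemma dyadic_lorentzZygmund_div_le (hγ : 0 ≤ γ) {i : ℕ} (hst : (1 / 2) ^ i / 2 < t)
    (hts : t ≤ (1 / 2) ^ i)
    (hh : ∃ σ : ℝ, 0 < σ ∧ volume {x | σ < |h x|} ≤ ENNReal.ofReal t) :
    ((1 / 2) ^ i) ^ (1 / (n : ℝ)) * (1 + (i : ℝ)) ^ γ * rearr n h ((1 / 2) ^ i) / (1 / 2) ^ i ≤
      2 ^ (1 / (n : ℝ)) * 2 ^ γ *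
        (t ^ (1 / (n : ℝ)) * (1 + |Real.log t|) ^ γ * rearr n h t / t) := by
  have hs : (0 : ℝ) < (1 / 2) ^ i := by positivity
  have ht : 0 < t := by linarith
  have hpow : (((1 : ℝ) / 2) ^ i) ^ (1 / (n : ℝ)) ≤ 2 ^ (1 / (n : ℝ)) * t ^ (1 / (n : ℝ)) := by
    rw [← Real.mul_rpow two_pos.le ht.le]
    exact Real.rpow_le_rpow hs.le (by linarith) (by positivity)
  have hlog : (1 + (i : ℝ)) ^ γ ≤ 2 ^ γ * (1 + |Real.log t|) ^ γ := by
    rw [← Real.mul_rpow two_pos.le (by positivity)]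
    exact Real.rpow_le_rpow (by positivity) (one_add_natCast_le_two_mul_one_add_abs_log ht hts) hγ
  have hrearr : rearr n h ((1 / 2) ^ i) ≤ rearr n h t := rearr_le_rearr hh hts
  calc _ ≤ (2 ^ (1 / (n : ℝ)) * t ^ (1 / (n : ℝ))) * (2 ^ γ * (1 + |Real.log t|) ^ γ) *
        rearr n h t / t :=
        div_le_div₀ (mul_nonneg (by positivity) (rearr_nonneg n h t))
          (mul_le_mul (mul_le_mul hpow hlog (by positivity) (by positivity)) hrearr
            (rearr_nonneg n h _) (by positivity)) ht hts
    _ = _ := by ring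

lemma mul_levelTerm_rearr_le_setLIntegral (hγ : 0 ≤ γ)
    (hh : ∀ t : ℝ, 0 < t → ∃ σ : ℝ, 0 < σ ∧ volume {x | σ < |h x|} ≤ ENNReal.ofReal t) (i : ℕ) :
    ENNReal.ofReal ((1 + (i : ℝ)) ^ γ) * levelTerm n (fun j => rearr n h ((1 / 2) ^ j)) i ≤
      2 * ENNReal.ofReal (2 ^ (1 / (n : ℝ)) * 2 ^ γ) *
        ∫⁻ t in Ioo (((1 : ℝ) / 2) ^ (i + 1)) ((1 / 2) ^ i),
          ENNReal.ofReal (t ^ (1 / (n : ℝ)) * (1 + |Real.log t|) ^ γ * rearr n h t / t) := by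
  set s : ℝ := (1 / 2) ^ i with hs
  set c : ℝ := s ^ (1 / (n : ℝ)) * (1 + (i : ℝ)) ^ γ * rearr n h s with hc
  have hs0 : 0 < s := by positivity
  have hs_half : ((1 : ℝ) / 2) ^ (i + 1) = s / 2 := by rw [pow_succ, mul_one_div]
  have hc0 : 0 ≤ c := mul_nonneg (by positivity) (rearr_nonneg n h s)
  rw [mul_assoc, ← lintegral_const_mul' _ _ ENNReal.ofReal_ne_top, hs_half]
  calc ENNReal.ofReal ((1 + (i : ℝ)) ^ γ) * levelTerm n (fun j => rearr n h ((1 / 2) ^ j)) i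
      = 2 * ∫⁻ _ in Ioo (s / 2) s, ENNReal.ofReal (c / s) := by
        rw [levelTerm, ← ENNReal.ofReal_mul (by positivity), setLIntegral_const, Real.volume_Ioo,
          ← ENNReal.ofReal_mul (by positivity), ← ENNReal.ofReal_ofNat 2,
          ← ENNReal.ofReal_mul two_pos.le]
        congr 1
        rw [hc, ← hs]
        field_simp
        ring
    _ ≤ 2 * ∫⁻ t in Ioo (s / 2) s, ENNReal.ofReal (2 ^ (1 / (n : ℝ)) * 2 ^ γ) *
          ENNReal.ofReal (t ^ (1 / (n : ℝ)) * (1 + |Real.log t|) ^ γ * rearr n h t / t) := by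
        gcongr 2 * ?_
        refine setLIntegral_mono' measurableSet_Ioo fun t ht => ?_
        rw [← ENNReal.ofReal_mul (by positivity)]
        exact ENNReal.ofReal_le_ofReal (dyadic_lorentzZygmund_div_le hγ ht.1 ht.2.le
          (hh t ((half_pos hs0).trans ht.1)))

lemma tsum_mul_levelTerm_rearr_ne_top (hγ : 0 ≤ γ) {T : ℝ} (hT : 0 < T)
    (hh : ∀ t : ℝ, 0 < t → ∃ σ : ℝ, 0 < σ ∧ volume {x | σ < |h x|} ≤ ENNReal.ofReal t)
    (hlz : ∫⁻ t in Ioo 0 T,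
      ENNReal.ofReal (t ^ (1 / (n : ℝ)) * (1 + |Real.log t|) ^ γ * rearr n h t / t) ≠ ⊤) :
    ∑' i : ℕ, ENNReal.ofReal ((1 + (i : ℝ)) ^ γ) *
      levelTerm n (fun j => rearr n h ((1 / 2) ^ j)) i ≠ ⊤ := by
  obtain ⟨k, hk⟩ := exists_pow_lt_of_lt_one hT (by norm_num : (1 : ℝ) / 2 < 1)
  have hanti : Antitone fun i : ℕ => ((1 : ℝ) / 2) ^ (i + k) := fun i j hij =>
    pow_le_pow_of_le_one (by norm_num) (by norm_num) (by lia)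
  have hdisj : Pairwise (Function.onFun Disjoint
      fun i : ℕ => Ioo (((1 : ℝ) / 2) ^ (i + k + 1)) ((1 / 2) ^ (i + k))) := by
    simpa [add_right_comm] using hanti.pairwise_disjoint_on_Ioo_succ
  rw [← ENNReal.summable.sum_add_tsum_nat_add' (k := k)]
  refine ENNReal.add_ne_top.2 ⟨ENNReal.sum_ne_top.2 fun i _ =>
    ENNReal.mul_ne_top ENNReal.ofReal_ne_top ENNReal.ofReal_ne_top, ne_top_of_le_ne_top ?_
      (ENNReal.tsum_le_tsum fun i => mul_levelTerm_rearr_le_setLIntegral hγ hh (i + k))⟩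
  rw [ENNReal.tsum_mul_left, ← lintegral_iUnion (fun _ => measurableSet_Ioo) hdisj]
  refine ENNReal.mul_ne_top (by finiteness) (ne_top_of_le_ne_top hlz
    (lintegral_mono_set (iUnion_subset fun i => Ioo_subset_Ioo (by positivity) ?_)))
  exact (pow_le_pow_of_le_one (by norm_num) (by norm_num) le_add_self).trans hk.le

end Rearrangement

lemma tsum_mul_levelTerm_one_ne_top {n : ℕ} (hn : n ≠ 0) (γ : ℝ) :
    ∑' i : ℕ, ENNReal.ofReal ((1 + (i : ℝ)) ^ γ) * levelTerm n (fun _ => 1) i ≠ ⊤ := by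
  set r := ((1 : ℝ) / 2) ^ (1 / (n : ℝ)) with hr
  have hr0 : 0 < r := by positivity
  have hr1 : r < 1 := Real.rpow_lt_one (by norm_num) (by norm_num) (by positivity)
  have hsum : Summable fun i : ℕ => (1 + (i : ℝ)) ^ γ * r ^ i := by
    have hgeom : Summable fun i : ℕ => ((i + 1 : ℕ) : ℝ) ^ ⌈γ⌉₊ * r ^ (i + 1) :=
      (summable_nat_add_iff 1).2 (summable_pow_mul_geometric_of_norm_lt_one ⌈γ⌉₊ (r := r)
        (by rwa [Real.norm_of_nonneg hr0.le]))
    refine (hgeom.mul_left r⁻¹).of_nonneg_of_le (fun i => by positivity) fun i => ?_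
    rw [pow_succ' r, mul_left_comm, inv_mul_cancel_left₀ hr0.ne', Nat.cast_succ, add_comm (i : ℝ),
      ← Real.rpow_natCast (1 + (i : ℝ))]
    gcongr
    · linarith [Nat.cast_nonneg (α := ℝ) i]
    · exact Nat.le_ceil γ
  refine ne_of_eq_of_ne (tsum_congr fun i => ?_) hsum.tsum_ofReal_ne_top
  rw [levelTerm, mul_one, ← ENNReal.ofReal_mul (by positivity), hr,
    Real.rpow_pow_comm (by norm_num)]

lemma levelTerm_add_one {n i : ℕ} {σ : ℕ → ℝ} (hσ : 0 ≤ σ i) :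
    levelTerm n (fun j => σ j + 1) i = levelTerm n σ i + levelTerm n (fun _ => 1) i := by
  rw [levelTerm, levelTerm, levelTerm, ← ENNReal.ofReal_add (by positivity) (by positivity),
    mul_add]

lemma exists_isLevelSequence_of_lorentzZygmund_lt_top {n : ℕ} (hn : n ≠ 0) {γ : ℝ} (hγ : 0 ≤ γ)
    {Ω : Set (EuclideanSpace ℝ (Fin n))} (hΩm : MeasurableSet Ω) (hΩ : 0 < (volume Ω).toReal)
    {h : EuclideanSpace ℝ (Fin n) → ℝ} (hh : MemLp h n (volume.restrict Ω))
    (hlz : lorentzZygmund n γ Ω h < ⊤) :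
    ∃ σ, IsLevelSequence n γ (volume.restrict Ω) h σ := by
  set H := Ω.indicator h with hH
  have hlevel (t : ℝ) (ht : 0 < t) : ∃ σ : ℝ, 0 < σ ∧ volume {x | σ < |H x|} ≤ ENNReal.ofReal t :=
    exists_measure_superlevel_le hn ((memLp_indicator_iff_restrict hΩm).2 hh) ht
  refine ⟨fun i => rearr n H ((1 / 2) ^ i) + 1,
    fun i => add_pos_of_nonneg_of_pos (rearr_nonneg _ _ _) one_pos, fun i => ?_, ?_⟩
  · refine le_trans ?_ (measure_superlevel_le_of_rearr_lt (hlevel ((1 / 2) ^ i) (by positivity))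
      (lt_add_one _))
    rw [Measure.restrict_apply' hΩm]
    refine measure_mono fun x ⟨hxh, hxΩ⟩ => ?_
    rw [mem_ofPred_eq, hH, indicator_of_mem hxΩ]
    exact hxh
  · simp_rw [levelTerm_add_one (σ := fun i => rearr n H ((1 / 2) ^ i)) (rearr_nonneg n H _),
      mul_add]
    rw [ENNReal.tsum_add]
    exact ENNReal.add_ne_top.2 ⟨tsum_mul_levelTerm_rearr_ne_top hγ hΩ hlevel hlz.ne,
      tsum_mul_levelTerm_one_ne_top hn γ⟩

/-! ### Local boundedness -/

lemma exists_gt_measure_superlevel_lt {X : Type*} [MeasurableSpace X] {μ : Measure X}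
    [IsFiniteMeasure μ] {u : X → ℝ} (hu : Measurable u) {ε : ℝ≥0∞} (hε : ε ≠ 0) (M₀ : ℝ) :
    ∃ a, M₀ < a ∧ μ {x | a < u x} < ε := by
  have hanti : Antitone fun t : ℝ => {x | t < u x} := fun s t hst x hx => lt_of_le_of_lt hst hx
  have hempty : ⋂ t : ℝ, {x | t < u x} = ∅ :=
    eq_empty_of_forall_notMem fun x hx => lt_irrefl (u x) (mem_iInter.1 hx (u x))
  have hlim : Tendsto (fun t : ℝ => μ {x | t < u x}) atTop (𝓝 0) := by
    have := tendsto_measure_iInter_atTop (μ := μ)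
      (fun t => (measurableSet_lt measurable_const hu).nullMeasurableSet) hanti
      ⟨0, measure_ne_top μ _⟩
    rwa [hempty, measure_empty] at this
  obtain ⟨a, ha, hau⟩ := ((eventually_gt_atTop M₀).and
    (hlim.eventually_lt_const hε.bot_lt)).exists
  exact ⟨a, ha, hau⟩

namespace IsLevelSequence

variable {X : Type*} [MeasurableSpace X] {ν : Measure X} {n : ℕ} {p : ℝ} {h : X → ℝ} {σ : ℕ → ℝ}

lemma summable_two_pow_mul_div_rpow (hσ : IsLevelSequence n p⁻¹ ν h σ)
    (hp : (n : ℝ).HolderConjugate p) {K : ℝ} (hK : 0 ≤ K) :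
    Summable fun k : ℕ =>
      (2 : ℝ) ^ k * (K * (levelTail n σ (2 ^ k)).toReal ^ n / 2 ^ k) ^ (n : ℝ)⁻¹ := by
  have hn : n ≠ 0 := by exact_mod_cast hp.ne_zero
  refine ((hσ.summable_rpow_pow_mul_levelTail hp.symm.inv_pos).mul_left (K ^ (n : ℝ)⁻¹)).congr
    fun k => ?_
  have hexp : ((2 : ℝ) ^ p⁻¹) ^ k = 2 ^ k / (2 ^ k) ^ (n : ℝ)⁻¹ := by
    rw [Real.rpow_pow_comm two_pos.le, ← hp.one_sub_inv, Real.rpow_sub (by positivity),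
      Real.rpow_one]
  rw [Real.div_rpow (by positivity) (by positivity), Real.mul_rpow hK (by positivity),
    Real.pow_rpow_inv_natCast ENNReal.toReal_nonneg hn, hexp]
  ring

end IsLevelSequence

section LocalBoundedness

variable {n : ℕ} {p : ℝ} {Ω K : Set (EuclideanSpace ℝ (Fin n))}
  {f : EuclideanSpace ℝ (Fin n) → EuclideanSpace ℝ (Fin n) → ℝ} {Q a b R M₀ : ℝ}
  {h u : EuclideanSpace ℝ (Fin n) → ℝ} {σ : ℕ → ℝ}
  {du : EuclideanSpace ℝ (Fin n) → EuclideanSpace ℝ (Fin n)} {x₀ : EuclideanSpace ℝ (Fin n)}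
  {B : Set (EuclideanSpace ℝ (Fin n))}

lemma HasWeakGradPosPart.mul_measureReal_superlevel_rpow_le (hp : (n : ℝ).HolderConjugate p)
    (ha : HasWeakGradPosPart n B u du a) (hb : HasWeakGradPosPart n B u du b) (hab : a ≤ b)
    (hB : MeasurableSet B) (hBb : Bornology.IsBounded B) (hum : Measurable u)
    (hu : IntegrableOn u B) (hdu : IntegrableOn du B)
    (hdup : MemLp du n (volume.restrict B)) :
    (b - a) * volume.real (B ∩ {x | b < u x}) ^ p⁻¹ ≤
      ((lintegralPowLePowLIntegralFDerivConst (volume : Measure (EuclideanSpace ℝ (Fin n))) p :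
        ℝ) ^ p⁻¹) *
        (((∫⁻ x in B ∩ {x | a < u x}, ‖du x‖ₑ ^ n).toReal -
          (∫⁻ x in B ∩ {x | b < u x}, ‖du x‖ₑ ^ n).toReal) ^ (n : ℝ)⁻¹ *
          volume.real (B ∩ {x | a < u x}) ^ p⁻¹) := by
  have hn : n ≠ 0 := by exact_mod_cast hp.ne_zero
  have hp0 : 0 ≤ p⁻¹ := hp.symm.inv_nonneg
  set A : Set (EuclideanSpace ℝ (Fin n)) := B ∩ {x | a < u x}
  set A' : Set (EuclideanSpace ℝ (Fin n)) := B ∩ {x | b < u x}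
  have hA'm : MeasurableSet A' := hB.inter (measurableSet_lt measurable_const hum)
  have hA'A : A' ⊆ A := inter_subset_inter_right B fun x hx => hab.trans_lt hx
  have hA : volume A ≠ ⊤ := (hBb.subset inter_subset_left).measure_lt_top.ne
  have henergy {S : Set (EuclideanSpace ℝ (Fin n))} (hS : S ⊆ A) :
      ∫⁻ x in S, ‖du x‖ₑ ^ n ≠ ⊤ :=
    ne_top_of_le_ne_top (lintegral_enorm_pow_ne_top_of_memLp hn hdup)
      (lintegral_mono_set (hS.trans inter_subset_left))
  have hdiff : (∫⁻ x in A \ A', ‖du x‖ₑ ^ n).toReal =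
      (∫⁻ x in A, ‖du x‖ₑ ^ n).toReal - (∫⁻ x in A', ‖du x‖ₑ ^ n).toReal := by
    rw [← lintegral_inter_add_sdiff _ A hA'm, inter_eq_self_of_subset_right hA'A,
      ENNReal.toReal_add (henergy hA'A) (henergy sdiff_subset), add_sub_cancel_left]
  have hslice := ENNReal.toReal_mono (by
    have := henergy (sdiff_subset (s := A) (t := A'))
    finiteness) (ha.mul_measure_superlevel_rpow_le hp hb hab hB hBb hum hu hdu)
  rwa [ENNReal.toReal_mul, ENNReal.toReal_mul, ENNReal.toReal_mul,
    ENNReal.toReal_ofReal (sub_nonneg.2 hab), ← ENNReal.toReal_rpow, ← ENNReal.toReal_rpow,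
    ← ENNReal.toReal_rpow, ← ENNReal.toReal_rpow, hdiff] at hslice

lemma IsLevelSequence.setLIntegral_ofReal_abs_pow_le {X : Type*} [MeasurableSpace X]
    {ν : Measure X} {h : X → ℝ} {S A : Set X} {γ : ℝ}
    (hσ : IsLevelSequence n γ (ν.restrict S) h σ) (hn : n ≠ 0) (hA : MeasurableSet A)
    (hAS : A ⊆ S) {N : ℕ} (hAN : ν A ≤ ENNReal.ofReal ((1 / 2) ^ N)) :
    ∫⁻ x in A, ENNReal.ofReal (|h x| ^ n) ∂ν ≤ 3 * levelTail n σ N ^ n := by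
  simp_rw [ENNReal.ofReal_pow (abs_nonneg _), ← Real.enorm_eq_ofReal_abs]
  rw [← inter_eq_left.2 hAS, ← Measure.restrict_restrict hA]
  exact hσ.lintegral_enorm_pow_le hn ((Measure.restrict_apply_le _ _).trans hAN)

namespace IsQMinimizer

lemma toReal_lintegral_superlevel_le (hmin : IsQMinimizer n Ω f Q u du)
    (hf : HasPowerGrowth n (volume.restrict Ω) f fun x => |h x| ^ n) (hn : n ≠ 0) {γ : ℝ}
    (hγ : 0 ≤ γ) (hσ : IsLevelSequence n γ (volume.restrict Ω) h σ) (hQ : 0 ≤ Q)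
    (hum : Measurable u) (hR : R ≠ 0) (hB : closedBall x₀ R ⊆ Ω)
    (hu : IntegrableOn u (closedBall x₀ R)) (hdu : IntegrableOn du (closedBall x₀ R))
    (hdup : MemLp du n (volume.restrict (closedBall x₀ R)))
    (hBM : ∀ M, M₀ < M → HasWeakGradPosPart n (closedBall x₀ R) u du M) {t : ℝ} (ht : M₀ ≤ t)
    {N : ℕ} (hN : volume.real (closedBall x₀ R ∩ {x | t < u x}) ≤ (1 / 2) ^ N) :
    (∫⁻ x in closedBall x₀ R ∩ {x | t < u x}, ‖du x‖ₑ ^ n).toReal ≤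
      3 * (Q + 1) * (levelTail n σ N).toReal ^ n := by
  set A : Set (EuclideanSpace ℝ (Fin n)) := closedBall x₀ R ∩ {x | t < u x}
  have hAm : MeasurableSet A :=
    measurableSet_closedBall.inter (measurableSet_lt measurable_const hum)
  have hA : volume A ≠ ⊤ := (isBounded_closedBall.subset inter_subset_left).measure_lt_top.ne
  have hAN : volume A ≤ ENNReal.ofReal ((1 / 2) ^ N) :=
    (ENNReal.le_ofReal_iff_toReal_le hA (by positivity)).2 hN
  have hlevel : levelTail n σ N ≠ ⊤ := hσ.levelTail_ne_top hγ N
  calc (∫⁻ x in A, ‖du x‖ₑ ^ n).toReal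
      ≤ (ENNReal.ofReal (Q + 1) * (3 * levelTail n σ N ^ n)).toReal := by
        refine ENNReal.toReal_mono (by finiteness)
          ((hmin.lintegral_superlevel_le hf hn hQ hum hR hB hu hdu hdup hBM ht).trans ?_)
        gcongr
        exact hσ.setLIntegral_ofReal_abs_pow_le hn hAm (inter_subset_left.trans hB) hAN
    _ = 3 * (Q + 1) * (levelTail n σ N).toReal ^ n := by
        rw [ENNReal.toReal_mul, ENNReal.toReal_mul, ENNReal.toReal_pow,
          ENNReal.toReal_ofReal (by positivity), ENNReal.toReal_ofNat]
        ring

lemma exists_ae_le_of_forall_hasWeakGradPosPart (hmin : IsQMinimizer n Ω f Q u du)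
    (hf : HasPowerGrowth n (volume.restrict Ω) f fun x => |h x| ^ n)
    (hp : (n : ℝ).HolderConjugate p) (hσ : IsLevelSequence n p⁻¹ (volume.restrict Ω) h σ)
    (hQ : 0 ≤ Q) (hum : Measurable u) (hR : R ≠ 0) (hB : closedBall x₀ R ⊆ Ω)
    (hu : IntegrableOn u (closedBall x₀ R)) (hdu : IntegrableOn du (closedBall x₀ R))
    (hdup : MemLp du n (volume.restrict (closedBall x₀ R)))
    (hBM : ∀ M, M₀ < M → HasWeakGradPosPart n (closedBall x₀ R) u du M) :
    ∃ M, ∀ᵐ x ∂volume.restrict (closedBall x₀ R), u x ≤ M := by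
  have hn : n ≠ 0 := by exact_mod_cast hp.ne_zero
  set B := closedBall x₀ R
  have hBfin : volume B ≠ ⊤ := measure_closedBall_lt_top.ne
  have hanti {s t : ℝ} (hst : s ≤ t) : B ∩ {x | t < u x} ⊆ B ∩ {x | s < u x} :=
    inter_subset_inter_right B fun x hx => hst.trans_lt hx
  have hfin (t : ℝ) : volume (B ∩ {x | t < u x}) ≠ ⊤ :=
    measure_ne_top_of_subset inter_subset_left hBfin
  have henergy (t : ℝ) : ∫⁻ x in B ∩ {x | t < u x}, ‖du x‖ₑ ^ n ≠ ⊤ :=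
    ne_top_of_le_ne_top (lintegral_enorm_pow_ne_top_of_memLp hn hdup)
      (lintegral_mono_set inter_subset_left)
  suffices hzero : ∃ M, volume.real (B ∩ {x | M < u x}) = 0 by
    obtain ⟨M, hM⟩ := hzero
    refine ⟨M, (ae_restrict_iff' measurableSet_closedBall).2
      (measure_mono_null (fun x hx => ?_) ((measureReal_eq_zero_iff (hfin M)).1 hM))⟩
    rwa [mem_compl_iff, mem_ofPred_eq, Classical.not_imp, not_le] at hx
  have hlevel (N : ℕ) : 0 < (levelTail n σ N).toReal :=
    ENNReal.toReal_pos (hσ.levelTail_pos N).ne' (hσ.levelTail_ne_top hp.symm.inv_nonneg N)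
  -- The Sobolev constant may vanish a priori, hence the added `1`.
  set C : ℝ := (lintegralPowLePowLIntegralFDerivConst
    (volume : Measure (EuclideanSpace ℝ (Fin n))) p : ℝ) ^ p⁻¹
  refine exists_eq_zero_of_slice_decay (C := C + 1) (α := (n : ℝ)⁻¹) (γ := p⁻¹) (M₀ := M₀)
    (e := fun t => (∫⁻ x in B ∩ {x | t < u x}, ‖du x‖ₑ ^ n).toReal)
    (E := fun N => 3 * (Q + 1) * (levelTail n σ N).toReal ^ n) (by positivity) (by positivity)
    hp.symm.inv_pos (inv_le_one_of_one_le₀ hp.symm.lt.le) (fun t => measureReal_nonneg)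
    (fun s t hst => measureReal_mono (hanti hst) (hfin s)) (fun t => ENNReal.toReal_nonneg)
    (fun s t hst => ENNReal.toReal_mono (henergy s) (lintegral_mono_set (hanti hst)))
    (fun s t hs hst => ?_) (fun N => mul_pos (by positivity) (pow_pos (hlevel N) n))
    (fun t N ht => hmin.toReal_lintegral_superlevel_le hf hn hp.symm.inv_nonneg hσ hQ hum hR hB hu
      hdu hdup hBM ht.le)
    (hσ.summable_two_pow_mul_div_rpow hp (by positivity)) ?_
  · refine ((hBM s hs).mul_measureReal_superlevel_rpow_le hp (hBM t (hs.trans_le hst)) hst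
      measurableSet_closedBall isBounded_closedBall hum hu hdu hdup).trans ?_
    refine mul_le_mul_of_nonneg_right (le_add_of_nonneg_right zero_le_one) ?_
    exact mul_nonneg (Real.rpow_nonneg (sub_nonneg.2 (ENNReal.toReal_mono (henergy s)
      (lintegral_mono_set (hanti hst)))) _) (Real.rpow_nonneg measureReal_nonneg _)
  · have hfinB : IsFiniteMeasure (volume.restrict B) := isFiniteMeasure_restrict.2 hBfin
    obtain ⟨s, hs, hsu⟩ := exists_gt_measure_superlevel_lt (μ := volume.restrict B) hum
      (ε := ENNReal.ofReal (1 / 2)) (by simp) M₀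
    rw [Measure.restrict_apply' measurableSet_closedBall, inter_comm] at hsu
    exact ⟨s, hs, ENNReal.toReal_le_of_le_ofReal (by norm_num) hsu.le⟩

lemma exists_ae_le_closedBall (hmin : IsQMinimizer n Ω f Q u du)
    (hf : HasPowerGrowth n (volume.restrict Ω) f fun x => |h x| ^ n)
    (hp : (n : ℝ).HolderConjugate p) (hσ : IsLevelSequence n p⁻¹ (volume.restrict Ω) h σ)
    (hQ : 0 ≤ Q) (hum : Measurable u) (hΩo : IsOpen Ω) (ha : 0 < a)
    (hΩ : closedBall x₀ (4 * a) ⊆ Ω) :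
    ∃ M, ∀ᵐ x ∂volume.restrict (closedBall x₀ a), u x ≤ M := by
  have hn : n ≠ 0 := by exact_mod_cast hp.ne_zero
  have hK : IsCompact (closedBall x₀ (4 * a)) := isCompact_closedBall x₀ _
  have hu := hmin.locallyIntegrableOn.integrableOn_compact_subset hΩ hK
  have hdu := hmin.locallyIntegrableOn_grad.integrableOn_compact_subset hΩ hK
  have hdup := hmin.memLp_of_isCompact hf hn hΩo hK hΩ
  obtain ⟨r, hr, M₀, hBM⟩ := hmin.isWeakGradOn.exists_closedBall_forall_hasWeakGradPosPart
    (Nat.one_le_iff_ne_zero.2 hn) ha hΩ hu hdu hdup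
  have hsub : closedBall x₀ r ⊆ closedBall x₀ (4 * a) :=
    closedBall_subset_closedBall (by linarith [hr.2])
  obtain ⟨M, hM⟩ := hmin.exists_ae_le_of_forall_hasWeakGradPosPart hf hp hσ hQ hum
    (ha.trans hr.1).ne' (hsub.trans hΩ) (hu.mono_set hsub) (hdu.mono_set hsub)
    (hdup.mono_measure (Measure.restrict_mono hsub le_rfl)) hBM
  exact ⟨M, ae_mono (Measure.restrict_mono (closedBall_subset_closedBall hr.1.le) le_rfl) hM⟩

lemma exists_ae_le_of_isCompact (hmin : IsQMinimizer n Ω f Q u du)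
    (hf : HasPowerGrowth n (volume.restrict Ω) f fun x => |h x| ^ n)
    (hp : (n : ℝ).HolderConjugate p) (hσ : IsLevelSequence n p⁻¹ (volume.restrict Ω) h σ)
    (hQ : 0 ≤ Q) (hΩ : IsOpen Ω) (hK : IsCompact K) (hKΩ : K ⊆ Ω) :
    ∃ M, ∀ᵐ x ∂volume.restrict K, u x ≤ M := by
  obtain ⟨v, hv, huv⟩ : AEMeasurable u (volume.restrict Ω) :=
    hmin.locallyIntegrableOn.aestronglyMeasurable.aemeasurable
  suffices hvK : ∃ M, ∀ᵐ x ∂volume.restrict K, v x ≤ M by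
    obtain ⟨M, hM⟩ := hvK
    refine ⟨M, ?_⟩
    filter_upwards [hM, ae_mono (Measure.restrict_mono hKΩ le_rfl) huv] with x hx hxv
    exact hxv.trans_le hx
  refine hK.induction_on (p := fun S => ∃ M, ∀ᵐ x ∂volume.restrict S, v x ≤ M)
    ⟨0, by simp⟩ (fun S T hST ⟨M, hM⟩ => ⟨M, ae_mono (Measure.restrict_mono hST le_rfl) hM⟩)
    (fun S T ⟨M, hM⟩ ⟨M', hM'⟩ => ⟨max M M', (ae_restrict_union_iff _ _ _).2
      ⟨hM.mono fun x hx => le_max_of_le_left hx, hM'.mono fun x hx => le_max_of_le_right hx⟩⟩)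
    fun x hx => ?_
  obtain ⟨ε, hε, hεΩ⟩ := nhds_basis_closedBall.mem_iff.1 (hΩ.mem_nhds (hKΩ hx))
  exact ⟨closedBall x (ε / 4), mem_nhdsWithin_of_mem_nhds (closedBall_mem_nhds x (by positivity)),
    (hmin.congr_ae huv).exists_ae_le_closedBall hf hp hσ hQ hv hΩ (by positivity)
      (by rwa [mul_div_cancel₀ _ (by norm_num)])⟩

lemma exists_ae_abs_le_of_isCompact (hmin : IsQMinimizer n Ω f Q u du)
    (hf : HasPowerGrowth n (volume.restrict Ω) f fun x => |h x| ^ n)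
    (hp : (n : ℝ).HolderConjugate p) (hσ : IsLevelSequence n p⁻¹ (volume.restrict Ω) h σ)
    (hQ : 0 ≤ Q) (hΩ : IsOpen Ω) (hK : IsCompact K) (hKΩ : K ⊆ Ω) :
    ∃ M, ∀ᵐ x ∂volume.restrict K, |u x| ≤ M := by
  obtain ⟨M, hM⟩ := hmin.exists_ae_le_of_isCompact hf hp hσ hQ hΩ hK hKΩ
  obtain ⟨M', hM'⟩ := hmin.neg.exists_ae_le_of_isCompact hf.neg hp hσ hQ hΩ hK hKΩ
  refine ⟨max M M', ?_⟩
  filter_upwards [hM, hM'] with x hx hx'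
  exact abs_le'.2 ⟨hx.trans (le_max_left _ _), hx'.trans (le_max_right _ _)⟩

end IsQMinimizer

lemma hasPowerGrowth_of_rpow_growth {α F : Type*} [MeasurableSpace α] [NormedAddCommGroup F]
    {μ : Measure α} {f : α → F → ℝ} {g : α → ℝ} {L q : ℝ} (hq : q ≠ 0)
    (hg : ∀ᵐ x ∂μ, 0 ≤ g x) (hg_int : Integrable (fun x => g x ^ ((n : ℝ) / ((n : ℝ) - 1))) μ)
    (hf : AEMeasurable (fun x => f x 0) μ)
    (hgrowth : ∀ᵐ x ∂μ, ∀ z : F, ‖z‖ ^ (n : ℝ) - g x ^ ((n : ℝ) / ((n : ℝ) - 1)) ≤ f x z ∧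
      f x z ≤ L * ‖z‖ ^ q + g x ^ ((n : ℝ) / ((n : ℝ) - 1))) :
    HasPowerGrowth n μ f fun x => |g x ^ (1 / ((n : ℝ) - 1))| ^ n := by
  have hpow : (fun x => g x ^ ((n : ℝ) / ((n : ℝ) - 1))) =ᵐ[μ]
      fun x => |g x ^ (1 / ((n : ℝ) - 1))| ^ n := by
    filter_upwards [hg] with x hx
    rw [abs_of_nonneg (Real.rpow_nonneg hx _), ← Real.rpow_mul_natCast hx, one_div_mul_eq_div]
  refine ⟨hg_int.congr hpow, hf.aestronglyMeasurable, ?_, ?_⟩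
  · filter_upwards [hgrowth, hpow] with x hx hxg
    simpa [Real.zero_rpow hq, hxg] using (hx 0).2
  · filter_upwards [hgrowth, hpow] with x hx hxg z
    simpa only [Real.rpow_natCast, hxg] using (hx z).1

theorem local_boundedness_with_rhs_p_eq_n_general (hn : 2 ≤ n) (hΩ : IsOpen Ω)
    (hΩ_top : volume Ω ≠ ⊤) (hh : AEMeasurable h (volume.restrict Ω))
    (hh_lz : lorentzZygmund n (((n : ℝ) - 1) / n) Ω h < ⊤)
    (hf : HasPowerGrowth n (volume.restrict Ω) f fun x => |h x| ^ n) (hQ : 0 ≤ Q)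
    (hmin : IsQMinimizer n Ω f Q u du) (hKΩ : K ⊆ Ω) (hK : IsCompact K) :
    ∃ C : ℝ, ∀ᵐ x ∂volume.restrict K, |u x| ≤ C := by
  rcases K.eq_empty_or_nonempty with rfl | hKne
  · simp
  have hΩ_pos : 0 < (volume Ω).toReal :=
    ENNReal.toReal_pos (hΩ.measure_pos volume (hKne.mono hKΩ)).ne' hΩ_top
  have hhn : MemLp h n (volume.restrict Ω) :=
    (integrable_norm_rpow_iff hh.aestronglyMeasurable (by simp; lia) (by simp)).1
      (by simpa using hf.integrable)
  have hp : (n : ℝ).HolderConjugate (Real.conjExponent n) :=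
    Real.HolderConjugate.conjExponent (by exact_mod_cast hn)
  rw [← inv_div, ← Real.conjExponent] at hh_lz
  obtain ⟨σ, hσ⟩ := exists_isLevelSequence_of_lorentzZygmund_lt_top (by lia) hp.symm.inv_nonneg
    hΩ.measurableSet hΩ_pos hhn hh_lz
  exact hmin.exists_ae_abs_le_of_isCompact hf hp hσ hQ hΩ hK hKΩ

end LocalBoundedness

/-- **Local boundedness with right-hand side, borderline case `p = n`.**
Under `(n,q)`-growth with inhomogeneity `g` (`|z|^n − g^{n/(n−1)} ≤ f(x,z) ≤ L|z|^q + g^{n/(n−1)}`,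
doubling in `z`), with `n < q < ∞`, `min{1/q + 1/(n−1), 1} − 1/n ≥ 0` and
`g^{1/(n−1)} ∈ L^{n,1}(log L)^{(n−1)/n}(Ω)`, every quasi-minimizer `u ∈ W^{1,1}_loc(Ω)` of
`F[u,A] = ∫_A f(x,∇u) dx` belongs to `L^∞_loc(Ω)`. -/
theorem local_boundedness_with_rhs_p_eq_n
    (n : ℕ) (hn : 2 ≤ n)
    (Ω : Set (EuclideanSpace ℝ (Fin n)))
    (hΩopen : IsOpen Ω) (hΩconn : IsConnected Ω) (hΩbdd : Bornology.IsBounded Ω)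
    (q : ℝ) (hpq : (n : ℝ) < q)
    (hε : 0 ≤ min (1 / q + 1 / ((n : ℝ) - 1)) 1 - 1 / (n : ℝ))
    (g : EuclideanSpace ℝ (Fin n) → ℝ)
    (hg_nonneg : ∀ᵐ x ∂volume.restrict Ω, 0 ≤ g x)
    (hg_meas : AEMeasurable g (volume.restrict Ω))
    (hg_int : IntegrableOn (fun x => g x ^ ((n : ℝ) / ((n : ℝ) - 1))) Ω)
    (hg_lz : lorentzZygmund n (((n : ℝ) - 1) / (n : ℝ)) Ω
      (fun x => g x ^ (1 / ((n : ℝ) - 1))) < ⊤)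
    (f : EuclideanSpace ℝ (Fin n) → EuclideanSpace ℝ (Fin n) → ℝ)
    (hf_meas : ∀ z : EuclideanSpace ℝ (Fin n),
      AEMeasurable (fun x => f x z) (volume.restrict Ω))
    (hf_cont : ∀ᵐ x ∂volume.restrict Ω, Continuous fun z => f x z)
    (hf_conv : ∀ᵐ x ∂volume.restrict Ω, ConvexOn ℝ univ fun z => f x z)
    (L μ : ℝ) (hL : 1 ≤ L) (hμ : 0 ≤ μ)
    (hgrowth : ∀ᵐ x ∂volume.restrict Ω, ∀ z : EuclideanSpace ℝ (Fin n),
      ‖z‖ ^ (n : ℝ) - g x ^ ((n : ℝ) / ((n : ℝ) - 1)) ≤ f x z ∧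
        f x z ≤ L * ‖z‖ ^ q + g x ^ ((n : ℝ) / ((n : ℝ) - 1)))
    (hdouble : ∀ᵐ x ∂volume.restrict Ω, ∀ z : EuclideanSpace ℝ (Fin n),
      f x (2 • z) ≤ μ + L * f x z)
    (u : EuclideanSpace ℝ (Fin n) → ℝ)
    (du : EuclideanSpace ℝ (Fin n) → EuclideanSpace ℝ (Fin n))
    (hquasi : ∃ Q : ℝ, 1 ≤ Q ∧ IsQMinimizer n Ω f Q u du) :
    ∀ K : Set (EuclideanSpace ℝ (Fin n)), K ⊆ Ω → IsCompact K →
      ∃ C : ℝ, ∀ᵐ x ∂volume.restrict K, |u x| ≤ C := by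
  obtain ⟨Q, hQ, hmin⟩ := hquasi
  have hq : q ≠ 0 := ((Nat.cast_nonneg n).trans_lt hpq).ne'
  intro K hKΩ hK
  exact local_boundedness_with_rhs_p_eq_n_general hn hΩopen hΩbdd.measure_lt_top.ne
    (hg_meas.pow_const _) hg_lz (hasPowerGrowth_of_rpow_growth hq hg_nonneg hg_int (hf_meas 0)
      hgrowth) (zero_le_one.trans hQ) hmin hKΩ hK
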